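/- Let μ be a T-invariant and shift-ergodic probability measure on X_λ for some 0 < λ < 1/2. Then there exists a deterministic sequence (v_k)_{k≥1} of finite real numbers such that μ-a.s., for every k ≥ 1 and every k-soliton γ ∈ Γ_k η, lim_{t→∞} x(γ^t)/t = v_k, where x(γ) denotes the leftmost site of γ. Moreover the speeds satisfy, for every k ≥ 1, v_k = k + Σ_{m<k} 2m·ρ̄_m·(v_k − v_m) − Σ_{m>k} 2k·ρ̄_m·(v_m − v_k). -/

import Mathlib

open MeasureTheory Filter Finset

/-- A ball configuration: a box at each integer, occupied (`true`) or empty (`false`). -/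
abbrev Cfg := ℤ → Bool

/-- Numerical (integer) value of a box. -/
def valZ (b : Bool) : ℤ := if b then 1 else 0

/-- Numerical (real) value of a box. -/
def valR (b : Bool) : ℝ := if b then 1 else 0

/-- `x` is a record of the configuration `η`:
for every `z ≤ x`, the number of balls in `[z,x]` is strictly smaller than the
number of empty boxes in `[z,x]`. -/
def isRecord (η : Cfg) (x : ℤ) : Prop :=
  ∀ z ≤ x, (∑ y ∈ Finset.Icc z x, valZ (η y)) < ∑ y ∈ Finset.Icc z x, (1 - valZ (η y))

open Classical in
/-- The box-ball (Takahashi–Satsuma) operator `T`. -/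
noncomputable def bbsT (η : Cfg) : Cfg := fun x => if isRecord η x then false else !(η x)

/-- `η` has asymptotic density `lam` of balls on both half lines. -/
def inXlam (lam : ℝ) (η : Cfg) : Prop :=
  Tendsto (fun y : ℕ => (∑ x ∈ Finset.Icc (-(y : ℤ)) 0, valR (η x)) / (y : ℝ))
    atTop (nhds lam) ∧
  Tendsto (fun y : ℕ => (∑ x ∈ Finset.Icc (0 : ℤ) (y : ℤ), valR (η x)) / (y : ℝ))
    atTop (nhds lam)

/-- `η ∈ 𝒳`: it has a well-defined density `0 < lam < 1/2`. -/
def inX (η : Cfg) : Prop := ∃ lam : ℝ, 0 < lam ∧ lam < 1 / 2 ∧ inXlam lam η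

/-- `ξ` is a walk lift of the configuration `η`. -/
def IsLift (η : Cfg) (ξ : ℤ → ℤ) : Prop :=
  ∀ x : ℤ, ξ x - ξ (x - 1) = 2 * valZ (η x) - 1

/-- Running minimum `min_{y ≤ x} ξ(y)` of a walk. -/
noncomputable def runMin (ξ : ℤ → ℤ) (x : ℤ) : ℤ := sInf (ξ '' Set.Iic x)

/-- The box-ball operator on walks: reflection at the running minimum. -/
noncomputable def liftT (ξ : ℤ → ℤ) : ℤ → ℤ := fun x => 2 * runMin ξ x - ξ x

/-- The canonical walk lift of `η` with value `0` at the origin. -/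
noncomputable def xi0 (η : Cfg) : ℤ → ℤ := fun x =>
  if 0 ≤ x then ∑ y ∈ Finset.Icc 1 x, (2 * valZ (η y) - 1)
  else -∑ y ∈ Finset.Icc (x + 1) 0, (2 * valZ (η y) - 1)
/-- Maximal runs of a word of (position, letter) pairs. -/
def runsOf : List (ℤ × Bool) → List (List (ℤ × Bool))
  | [] => []
  | a :: l =>
    match runsOf l with
    | [] => [[a]]
    | r :: rs =>
      if (r.head?.map Prod.snd) = some a.2 then (a :: r) :: rs else [a] :: r :: rs

/-- Takahashi–Satsuma step: find the leftmost run whose length is at least the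
length of the run preceding it; the soliton consists of the preceding run
together with the first (that many) letters of the selected run. -/
def findSoliton : List (List (ℤ × Bool)) → Option (List (ℤ × Bool))
  | r1 :: r2 :: rest =>
    if r1.length ≤ r2.length then some (r1 ++ r2.take r1.length)
    else findSoliton (r2 :: rest)
  | _ => none

/-- Iterated Takahashi–Satsuma algorithm (with fuel): repeatedly identify the
soliton given by `findSoliton` and remove its letters from the word. -/
def tsAux : ℕ → List (ℤ × Bool) → List (List (ℤ × Bool))
  | 0, _ => []
  | fuel + 1, w =>
    match findSoliton (runsOf w) with
    | none => []
    | some s => s :: tsAux fuel (w.filter (fun a => !((s.map Prod.fst).contains a.1)))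

/-- The solitons identified by the Takahashi–Satsuma algorithm in a finite word. -/
def tsSolitons (w : List (ℤ × Bool)) : List (List (ℤ × Bool)) := tsAux w.length w

/-- The word (with positions) strictly between sites `y1` and `y2`. -/
def excursionWord (η : Cfg) (y1 y2 : ℤ) : List (ℤ × Bool) :=
  (List.range (y2 - y1 - 1).toNat).map fun n => (y1 + 1 + n, η (y1 + 1 + n))

/-- `Γ_k η`: the set of `k`-solitons of `η`, each identified with the set of `2k`
sites it occupies.  A `k`-soliton is obtained by applying the Takahashi–Satsuma
algorithm to an excursion of `η` (the word between two consecutive records). -/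
def Gamma (η : Cfg) (k : ℕ) : Set (Finset ℤ) :=
  {γ | ∃ y1 y2 : ℤ, y1 < y2 ∧ isRecord η y1 ∧ isRecord η y2 ∧
    (∀ z : ℤ, y1 < z → z < y2 → ¬ isRecord η z) ∧
    ∃ s ∈ tsSolitons (excursionWord η y1 y2), s.length = 2 * k ∧
      γ = (s.map Prod.fst).toFinset}

/-- The head of a soliton `γ` of `η`: the positions of its ones. -/
def headF (η : Cfg) (γ : Finset ℤ) : Finset ℤ := γ.filter fun x => η x = true

/-- The tail of a soliton `γ` of `η`: the positions of its zeros. -/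
def tailF (η : Cfg) (γ : Finset ℤ) : Finset ℤ := γ.filter fun x => η x = false
/-- `x` is a `k`-slot of `η`: either a record, or the `j`-th smallest site of the
tail or of the head of some soliton, with `j > k` (slot level `j - 1 ≥ k`). -/
def IsKSlot (η : Cfg) (k : ℕ) (x : ℤ) : Prop :=
  isRecord η x ∨ ∃ m : ℕ, ∃ γ ∈ Gamma η m,
    (x ∈ tailF η γ ∧ k < ((tailF η γ).filter fun y => y ≤ x).card) ∨
    (x ∈ headF η γ ∧ k < ((headF η γ).filter fun y => y ≤ x).card)

open Classical in
/-- Increasing enumeration of a (doubly unbounded, locally finite) set `S ⊆ ℤ`,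
normalized so that the `0`-th element is the base point `b`.  (Junk value if no
such enumeration exists.) -/
noncomputable def enumZ (S : Set ℤ) (b : ℤ) : ℤ → ℤ :=
  if h : ∃ f : ℤ → ℤ, StrictMono f ∧ f 0 = b ∧ Set.range f = S then h.choose
  else fun _ => 0

/-- Position `r(ξ,j)` of Record `j` of a walk `ξ`: leftmost site where `ξ` takes
the value `-j`. -/
noncomputable def recPos (ξ : ℤ → ℤ) (j : ℤ) : ℤ := sInf {x : ℤ | ξ x = -j}

/-- `s_k(ξ,i)`: the `i`-th `k`-slot of the configuration `η` lifted by the walk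
`ξ`, enumerated increasingly and normalized by `s_k(ξ,0) = r(ξ,0)`. -/
noncomputable def skEnum (η : Cfg) (ξ : ℤ → ℤ) (k : ℕ) : ℤ → ℤ :=
  enumZ {x : ℤ | IsKSlot η k x} (recPos ξ 0)

/-- `M_k ξ (i)`: the number of `k`-solitons appended to the `i`-th `k`-slot,
i.e. contained in `[s_k(ξ,i)+1, s_k(ξ,i+1)-1]`. -/
noncomputable def Mk (η : Cfg) (ξ : ℤ → ℤ) (k : ℕ) (i : ℤ) : ℕ :=
  Set.ncard {γ | γ ∈ Gamma η k ∧
    ∀ x ∈ γ, skEnum η ξ k i < x ∧ x < skEnum η ξ k (i + 1)}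

open Classical in
/-- The trajectory `γ^t` of a tagged `k`-soliton `γ` of `η`: `γ^0 = γ` and
`γ^{t+1}` is the `k`-soliton of `T^{t+1} η` whose head is the tail of `γ^t`. -/
noncomputable def solTraj (η : Cfg) (k : ℕ) (γ : Finset ℤ) : ℕ → Finset ℤ
  | 0 => γ
  | t + 1 =>
    if h : ∃ γ' ∈ Gamma (bbsT^[t + 1] η) k,
        headF (bbsT^[t + 1] η) γ' = tailF (bbsT^[t] η) (solTraj η k γ t)
    then h.choose else ∅

/-- `J_m^t ξ`: the flow of `m`-solitons through Record `0` by time `t`. -/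
noncomputable def Jflow (η : Cfg) (ξ : ℤ → ℤ) (m : ℕ) (t : ℕ) : ℕ :=
  Set.ncard {γ | γ ∈ Gamma η m ∧ (∀ x ∈ γ, x < recPos ξ 0) ∧
    ∀ x ∈ solTraj η m γ t, recPos (liftT^[t] ξ) 0 ≤ x}

/-- `o_k^t(ξ) = Σ_{m>k} 2(m-k)·J_m^t ξ`: the flow of `k`-slots through Record
`0` by time `t`, counted as the number of pairs (an `m`-soliton `γ` with `m > k`
crossing Record `0` by time `t`, a site of `γ` of slot level `≥ k`); each such
`γ` carries exactly `2(m-k)` such sites. -/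
noncomputable def oOff (η : Cfg) (ξ : ℤ → ℤ) (k : ℕ) (t : ℕ) : ℕ :=
  Set.ncard {p : Finset ℤ × ℤ | ∃ m : ℕ, k < m ∧ p.1 ∈ Gamma η m ∧
    (∀ x ∈ p.1, x < recPos ξ 0) ∧
    (∀ x ∈ solTraj η m p.1 t, recPos (liftT^[t] ξ) 0 ≤ x) ∧
    ((p.2 ∈ tailF η p.1 ∧ k < ((tailF η p.1).filter fun y => y ≤ p.2).card) ∨
     (p.2 ∈ headF η p.1 ∧ k < ((headF η p.1).filter fun y => y ≤ p.2).card))}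

/-- The relabeled `i`-th `k`-slot at time `t`:
`s_k^t(ξ,i) = s_k(T^t ξ, o_k^t(ξ) + i)`. -/
noncomputable def skEnumT (η : Cfg) (ξ : ℤ → ℤ) (k : ℕ) (t : ℕ) (i : ℤ) : ℤ :=
  skEnum (bbsT^[t] η) (liftT^[t] ξ) k ((oOff η ξ k t : ℤ) + i)
/-- The shift `θ` on configurations: `θη(y) = η(y+1)`. -/
def shiftC (η : Cfg) : Cfg := fun y => η (y + 1)

/-- The shift by `n`: `θ^n η (y) = η (y + n)`. -/
def shiftBy (n : ℤ) (η : Cfg) : Cfg := fun y => η (y + n)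

/-- The shift on `ℕ^ℤ` (soliton components). -/
def shiftN (z : ℤ → ℕ) : ℤ → ℕ := fun i => z (i + 1)

/-- `r(η)`: the position of the first record of `η` in `[1,∞)`. -/
noncomputable def rFirst (η : Cfg) : ℤ := sInf {x : ℤ | 1 ≤ x ∧ isRecord η x}

/-- The record-shift `θ̂ η = θ^{r(η)} η`. -/
noncomputable def thetaHat (η : Cfg) : Cfg := shiftBy (rFirst η) η

/-- The dynamics seen from a record, `T̂ η = θ^{ψ_η(0)} (Tη)` where `ψ_η(0)` is
the position of Record `0` of `Tξ` for the canonical lift `ξ = ξ°[η]`. -/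
noncomputable def That (η : Cfg) : Cfg := shiftBy (recPos (liftT (xi0 η)) 0) (bbsT η)

/-- The set `𝒳` of configurations with density in `(0,1/2)`. -/
def Xset : Set Cfg := {η | inX η}

/-- The set `𝒳̂` of configurations in `𝒳` having a record at the origin. -/
def XhatSet : Set Cfg := {η | inX η ∧ isRecord η 0}

/-- The `k`-component of a configuration (seen from its canonical lift `ξ°[η]`,
which for `η ∈ 𝒳̂` has Record `0` at the origin). -/
noncomputable def MkHat (η : Cfg) (k : ℕ) (i : ℤ) : ℕ := Mk η (xi0 η) k i

/-- `μ` is the inverse-Palm measure of `μ̂`: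
`μ(A) = μ̂(r)⁻¹ · ∫ Σ_{i=1}^{r(η)} 1_A(θ^i η) dμ̂`. -/
def PalmIdentity (muhat mu : MeasureTheory.Measure Cfg) : Prop :=
  ∀ A : Set Cfg, MeasurableSet A →
    mu A = (∫⁻ η, ((rFirst η).toNat : ENNReal) ∂muhat)⁻¹ *
      ∫⁻ η, ∑ i ∈ Finset.Icc (1 : ℤ) (rFirst η),
        A.indicator (fun _ => (1 : ENNReal)) (shiftBy i η) ∂muhat

/-- The number of `k`-solitons in the excursion of `η` between Records 0 and 1
(i.e. contained in `(0, r(η))`), for `η` with a record at the origin. -/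
noncomputable def excCount (η : Cfg) (k : ℕ) : ℕ :=
  Set.ncard {γ | γ ∈ Gamma η k ∧ ∀ x ∈ γ, 0 < x ∧ x < rFirst η}

/-- `ρ_k`: the mean number of `k`-solitons per excursion, under
`μ̂ = μ( · | 0 ∈ Rη)`. -/
noncomputable def rhoK (mu : MeasureTheory.Measure Cfg) (k : ℕ) : ℝ :=
  ∫ η, (excCount η k : ℝ) ∂(ProbabilityTheory.cond mu XhatSet)

/-- `w_0 = 1 + Σ_k 2k ρ_k`: the mean excursion length. -/
noncomputable def w0of (mu : MeasureTheory.Measure Cfg) : ℝ :=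
  1 + ∑' k : ℕ, 2 * (k : ℝ) * rhoK mu k

/-- `ρ̄_k = ρ_k / w_0`: the mean number of `k`-solitons per site. -/
noncomputable def rhoBar (mu : MeasureTheory.Measure Cfg) (k : ℕ) : ℝ :=
  rhoK mu k / w0of mu

/-- The leftmost site of a soliton. -/
noncomputable def leftmost (γ : Finset ℤ) : ℤ := sInf (γ : Set ℤ)


section Part1

/-! ### The online (stack) version of the Takahashi–Satsuma algorithm -/

abbrev Stk := List (List (ℤ × Bool))

def topBit (st : Stk) : Bool := decide (st.length % 2 = 1)

def pushS (st : Stk) (a : ℤ × Bool) : List (ℤ × Bool) × Stk :=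
  if a.2 = topBit st then
    match st with
    | [] => ([], [])
    | r :: s => (a :: r, s)
  else ([a], st)

def popS : List (ℤ × Bool) × Stk → Stk
  | (c, []) => if c = [] then [] else [c]
  | (c, r :: s) => if r.length = c.length then s else c :: r :: s

def emitS : List (ℤ × Bool) × Stk → Option (List (ℤ × Bool))
  | (_, []) => none
  | (c, r :: s) => if r.length = c.length then some (r.reverse ++ c.reverse) else none

def stepS (st : Stk) (a : ℤ × Bool) : Stk := popS (pushS st a)

def ValidS : Stk → Prop
  | [] => True
  | r :: s => r ≠ [] ∧ (∀ a ∈ r, a.2 = topBit (r :: s)) ∧ (∀ r' ∈ s, r.length < r'.length) ∧ ValidS s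

def pwS : Stk → List (ℤ × Bool)
  | [] => []
  | r :: s => pwS s ++ r.reverse

def emis (st : Stk) : List (ℤ × Bool) → List (List (ℤ × Bool))
  | [] => []
  | a :: q => (emitS (pushS st a)).toList ++ emis (stepS st a) q

def noRecS (st : Stk) : List (ℤ × Bool) → Prop
  | [] => True
  | a :: q => (st = [] → a.2 = true) ∧ noRecS (stepS st a) q

lemma topBit_nil : topBit [] = false := by simp [topBit]

lemma topBit_cons (r : List (ℤ × Bool)) (s : Stk) : topBit (r :: s) = !topBit s := by
  simp only [topBit, List.length_cons]
  rcases Nat.mod_two_eq_zero_or_one s.length with h | h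
  · have : (s.length + 1) % 2 = 1 := by omega
    simp [h, this]
  · have : (s.length + 1) % 2 = 0 := by omega
    simp [h, this]

/-- Structure of a push: `(c, rest)` where `c` is the new top run. -/
lemma pushS_spec (st : Stk) (a : ℤ × Bool) (h : ValidS st) (hr : st = [] → a.2 = true) :
    (pushS st a).1 ≠ [] ∧ (∀ b ∈ (pushS st a).1, b.2 = !topBit (pushS st a).2) ∧
    (∀ r' ∈ (pushS st a).2, (pushS st a).1.length ≤ r'.length) ∧ ValidS (pushS st a).2 ∧
    pwS st ++ [a] = pwS (pushS st a).2 ++ (pushS st a).1.reverse := by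
  cases st with
  | nil =>
    have := hr rfl
    simp [pushS, this, topBit_nil, ValidS, pwS]
  | cons r s =>
    obtain ⟨h1, h2, h3, h4⟩ := h
    by_cases hb : a.2 = topBit (r :: s)
    · simp only [pushS, hb, if_true]
      refine ⟨by simp, ?_, ?_, h4, by simp [pwS]⟩
      · intro b hb'
        rw [List.mem_cons] at hb'
        rw [← topBit_cons r s]
        rcases hb' with rfl | hb'
        · exact hb
        · exact h2 b hb'
      · intro r' hr'
        have := h3 r' hr'
        simp; omega
    · simp only [pushS, hb, if_false]
      refine ⟨by simp, ?_, ?_, ⟨h1, h2, h3, h4⟩, by simp⟩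
      · intro b hb'
        simp at hb'
        subst hb'
        cases h : b.2 <;> cases h' : topBit (r :: s) <;> simp_all
      · intro r' hr'
        have hlen : 0 < r.length := List.length_pos_iff.mpr h1
        rw [List.mem_cons] at hr'
        rcases hr' with rfl | hr'
        · simp; omega
        · have := h3 r' hr'
          simp; omega

lemma ValidS_step (st : Stk) (a : ℤ × Bool) (h : ValidS st) : ValidS (stepS st a) := by
  by_cases hr : st = [] → a.2 = true
  · obtain ⟨h1, h2, h3, h4, h5⟩ := pushS_spec st a h hr
    unfold stepS
    rcases hp : pushS st a with ⟨c, rest⟩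
    rw [hp] at h1 h2 h3 h4
    simp only at h1 h2 h3 h4
    cases rest with
    | nil =>
      simp only [popS, h1, if_false]
      refine ⟨h1, ?_, by simp, trivial⟩
      intro b hb; rw [topBit_cons]; exact h2 b hb
    | cons r s =>
      simp only [popS]
      split_ifs with hl
      · exact h4.2.2.2
      · refine ⟨h1, ?_, ?_, h4⟩
        · intro b hb; rw [topBit_cons]; exact h2 b hb
        · intro r' hr'
          have a1 := h3 r List.mem_cons_self
          rw [List.mem_cons] at hr'
          rcases hr' with rfl | hr'
          · omega
          · have := h4.2.2.1 r' hr'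
            omega
  · push Not at hr
    obtain ⟨rfl, hb⟩ := hr
    have : a.2 = false := by simpa using hb
    simp [stepS, pushS, this, topBit_nil, popS, ValidS]

lemma runsOf_ne (l : List (ℤ × Bool)) : ∀ r ∈ runsOf l, r ≠ [] := by
  induction l with
  | nil => simp [runsOf]
  | cons a l ih =>
    rw [runsOf]
    split
    · simp
    · rename_i r rs heq
      rw [heq] at ih
      split_ifs
      · intro r' hr'
        rw [List.mem_cons] at hr'
        rcases hr' with rfl | hr'
        · simp
        · exact ih r' (List.mem_cons_of_mem _ hr')
      · intro r' hr'
        rw [List.mem_cons] at hr'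
        rcases hr' with rfl | hr'
        · simp
        · exact ih r' hr'

lemma runsOf_head (l : List (ℤ × Bool)) (a : ℤ × Bool) :
    ∃ r rs, runsOf (a :: l) = (a :: r) :: rs := by
  rw [runsOf]
  split
  · exact ⟨[], [], rfl⟩
  · split_ifs
    · exact ⟨_, _, rfl⟩
    · exact ⟨[], _, rfl⟩

/-- A block of constant bit goes into the first run. -/
lemma runsOf_const (b : Bool) (r : List (ℤ × Bool)) (hr : r ≠ []) (hb : ∀ a ∈ r, a.2 = b)
    (l : List (ℤ × Bool)) : ∃ l1 rs, runsOf (r ++ l) = (r ++ l1) :: rs := by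
  induction r with
  | nil => exact absurd rfl hr
  | cons a r ih =>
    cases r with
    | nil => exact runsOf_head l a
    | cons a' r' =>
      obtain ⟨l1, rs, h⟩ := ih (by simp) (fun x hx => hb x (List.mem_cons_of_mem _ hx))
      have e : a :: a' :: r' ++ l = a :: (a' :: r' ++ l) := rfl
      rw [e, runsOf, h]
      have h1 := hb a List.mem_cons_self
      have h2 := hb a' (by simp)
      simp [h1, h2]

lemma runsOf_sep (b : Bool) (r : List (ℤ × Bool)) (hr : r ≠ []) (hb : ∀ a ∈ r, a.2 = b)
    (l : List (ℤ × Bool)) (hl : ∀ a ∈ l.head?, a.2 ≠ b) : runsOf (r ++ l) = r :: runsOf l := by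
  induction r with
  | nil => exact absurd rfl hr
  | cons a r ih =>
    have h1 := hb a List.mem_cons_self
    cases r with
    | nil =>
      simp only [List.cons_append, List.nil_append]
      rw [runsOf]
      cases l with
      | nil => simp [runsOf]
      | cons x l =>
        obtain ⟨r, rs, h⟩ := runsOf_head l x
        rw [h]
        have : x.2 ≠ b := hl x (by simp)
        simp [h1, this]
    | cons a' r' =>
      have h := ih (by simp) (fun x hx => hb x (List.mem_cons_of_mem _ hx))
      have e : a :: a' :: r' ++ l = a :: (a' :: r' ++ l) := rfl
      have h2 := hb a' (by simp)
      rw [e, runsOf, h]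
      simp [h1, h2]

/-- runs of a stack word followed by something starting with the opposite bit. -/
lemma runsOf_pw (st : Stk) (h : ValidS st) (l : List (ℤ × Bool))
    (hl : ∀ a ∈ l.head?, a.2 ≠ topBit st) :
    runsOf (pwS st ++ l) = (st.map List.reverse).reverse ++ runsOf l := by
  induction st generalizing l with
  | nil => simp [pwS]
  | cons r s ih =>
    obtain ⟨h1, h2, h3, h4⟩ := h
    rw [pwS, List.append_assoc, ih h4]
    · rw [runsOf_sep (topBit (r :: s)) r.reverse (by simpa using h1) (by simpa using h2) l hl]
      simp
    · intro a ha
      have : a ∈ r := by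
        cases hh : r.reverse with
        | nil => simp at hh; exact absurd hh h1
        | cons x y =>
          rw [hh] at ha
          simp at ha
          subst ha
          have : x ∈ r.reverse := by rw [hh]; simp
          simpa using this
      rw [h2 a this, topBit_cons]
      cases topBit s <;> simp

lemma findSoliton_skip (st : Stk) (h : ValidS st) (x : List (ℤ × Bool))
    (rest : List (List (ℤ × Bool))) (hx : ∀ r ∈ st, x.length < r.length) :
    findSoliton ((st.map List.reverse).reverse ++ x :: rest) = findSoliton (x :: rest) := by
  induction st generalizing x rest with
  | nil => simp
  | cons r s ih =>
    obtain ⟨h1, h2, h3, h4⟩ := h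
    have : ((List.map List.reverse (r :: s)).reverse ++ x :: rest) =
      ((s.map List.reverse).reverse ++ r.reverse :: (x :: rest)) := by simp
    rw [this, ih h4 _ _ (by simpa using h3), findSoliton]
    have := hx r List.mem_cons_self
    rw [if_neg (by simp; omega)]

lemma findSoliton_none (st : Stk) (h : ValidS st) : findSoliton (runsOf (pwS st)) = none := by
  have := runsOf_pw st h [] (by simp)
  simp only [List.append_nil] at this
  rw [this]
  cases st with
  | nil => simp [runsOf, findSoliton]
  | cons r s =>
    have h' := h
    obtain ⟨h1, h2, h3, h4⟩ := h
    have e : ((List.map List.reverse (r :: s)).reverse ++ runsOf []) =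
      ((s.map List.reverse).reverse ++ r.reverse :: []) := by simp [runsOf]
    rw [e, findSoliton_skip s h4 _ _ (by simpa using h3)]
    simp [findSoliton]

theorem tsAux_eq (q : List (ℤ × Bool)) : ∀ (st : Stk) (fuel : ℕ), ValidS st → noRecS st q →
    ((pwS st ++ q).map Prod.fst).Nodup → (pwS st ++ q).length ≤ fuel →
    tsAux fuel (pwS st ++ q) = emis st q := by
  induction q with
  | nil =>
    intro st fuel h _ _ _
    cases fuel with
    | zero => simp [tsAux, emis]
    | succ n =>
      rw [List.append_nil, tsAux, findSoliton_none st h]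
      simp [emis]
  | cons a q ih =>
    intro st fuel h hn hd hf
    obtain ⟨hr, hn'⟩ := hn
    obtain ⟨h1, h2, h3, h4, h5⟩ := pushS_spec st a h hr
    have hv := ValidS_step st a h
    rcases hp : pushS st a with ⟨c, rest⟩
    have e : pwS st ++ a :: q = pwS rest ++ (c.reverse ++ q) := by
      rw [hp] at h5
      simp only at h5
      rw [← List.append_assoc, ← h5]; simp
    have hstep : stepS st a = popS (c, rest) := by rw [stepS, hp]
    rw [emis, hp]
    rw [hp] at h1 h2 h3 h4
    simp only at h1 h2 h3 h4
    have key : emitS (c, rest) = none → pwS (stepS st a) = pwS rest ++ c.reverse := by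
      rw [hstep]
      cases rest with
      | nil => simp [popS, h1, pwS]
      | cons r s =>
        simp only [emitS, popS]
        split_ifs with hl
        · simp
        · simp [pwS]
    cases hem : emitS (c, rest) with
    | none =>
      have e2 : pwS st ++ a :: q = pwS (stepS st a) ++ q := by
        rw [e, key hem]; simp
      rw [e2] at hd hf ⊢
      simpa using ih (stepS st a) fuel hv hn' hd hf
    | some s' =>
      cases rest with
      | nil => simp [emitS] at hem
      | cons r s =>
        simp only [emitS] at hem
        split_ifs at hem with hl
        have hs' : s' = r.reverse ++ c.reverse := by simpa using hem.symm
        have hst : stepS st a = s := by rw [hstep]; simp [popS, hl]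
        obtain ⟨v1, v2, v3, v4⟩ := h4
        have e3 : pwS st ++ a :: q = pwS s ++ (r.reverse ++ (c.reverse ++ q)) := by
          rw [e, pwS]; simp
        have hfs : findSoliton (runsOf (pwS st ++ a :: q)) = some s' := by
          have e4 : pwS st ++ a :: q = pwS (r :: s) ++ (c.reverse ++ q) := by rw [e]
          rw [e4, runsOf_pw (r :: s) ⟨v1, v2, v3, v4⟩]
          · obtain ⟨l1, rs, hh⟩ := runsOf_const (!topBit (r :: s)) c.reverse (by simpa using h1)
              (by simpa using h2) q
            rw [hh]
            have e5 : (List.map List.reverse (r :: s)).reverse ++ (c.reverse ++ l1) :: rs =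
              (List.map List.reverse s).reverse ++ r.reverse :: ((c.reverse ++ l1) :: rs) := by simp
            rw [e5, findSoliton_skip s v4 _ _ (by simpa using v3), findSoliton]
            rw [if_pos (by simp; omega), hs']
            congr 2
            rw [List.length_reverse, hl, ← List.length_reverse]
            simp
          · intro x hx
            have : x ∈ c := by
              cases hh : c.reverse with
              | nil => simp at hh; exact absurd hh h1
              | cons y z =>
                rw [hh] at hx
                simp at hx
                subst hx
                have : y ∈ c.reverse := by rw [hh]; simp
                simpa using this
            rw [h2 x this]
            cases topBit (r :: s) <;> simp
        have hfilt : (pwS st ++ a :: q).filter (fun a => !((s'.map Prod.fst).contains a.1))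
            = pwS s ++ q := by
          rw [e3] at hd ⊢
          rw [hs']
          simp only [List.map_append, List.nodup_append, List.mem_append] at hd
          obtain ⟨d1, ⟨d2, ⟨d3, d4, d5⟩, d6⟩, d7⟩ := hd
          simp only [List.filter_append]
          have f1 : (pwS s).filter (fun a => !(((r.reverse ++ c.reverse).map Prod.fst).contains a.1)) = pwS s := by
            rw [List.filter_eq_self]
            intro x hx
            simp only [List.map_append, List.contains_eq_mem, List.mem_append, Bool.not_eq_true',
              decide_eq_false_iff_not]
            rintro (h | h)
            · exact d7 x.1 (List.mem_map_of_mem hx) x.1 (Or.inl h) rfl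
            · exact d7 x.1 (List.mem_map_of_mem hx) x.1 (Or.inr (Or.inl h)) rfl
          have f2 : q.filter (fun a => !(((r.reverse ++ c.reverse).map Prod.fst).contains a.1)) = q := by
            rw [List.filter_eq_self]
            intro x hx
            simp only [List.map_append, List.contains_eq_mem, List.mem_append, Bool.not_eq_true',
              decide_eq_false_iff_not]
            rintro (h | h)
            · exact d6 x.1 h x.1 (Or.inr (List.mem_map_of_mem hx)) rfl
            · exact d5 x.1 h x.1 (List.mem_map_of_mem hx) rfl
          have f3 : r.reverse.filter (fun a => !(((r.reverse ++ c.reverse).map Prod.fst).contains a.1)) = [] := by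
            rw [List.filter_eq_nil_iff]
            intro x hx
            simp only [List.map_append, List.contains_eq_mem, List.mem_append, Bool.not_eq_true',
              decide_eq_false_iff_not, not_not]
            exact Or.inl (List.mem_map_of_mem hx)
          have f4 : c.reverse.filter (fun a => !(((r.reverse ++ c.reverse).map Prod.fst).contains a.1)) = [] := by
            rw [List.filter_eq_nil_iff]
            intro x hx
            simp only [List.map_append, List.contains_eq_mem, List.mem_append, Bool.not_eq_true',
              decide_eq_false_iff_not, not_not]
            exact Or.inr (List.mem_map_of_mem hx)
          rw [f1, f2, f3, f4]; simp
        cases fuel with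
        | zero => simp at hf
        | succ n =>
          rw [tsAux, hfs]
          simp only
          rw [hfilt]
          rw [hst] at hn' hv ⊢
          rw [ih s n hv hn']
          · simp
          · rw [e3] at hd
            refine hd.sublist ?_
            apply List.Sublist.map
            exact List.Sublist.append (List.Sublist.refl _)
              ((List.sublist_append_right _ _).trans (List.sublist_append_right _ _))
          · rw [e3] at hf
            have : 0 < r.length := List.length_pos_iff.mpr v1
            simp only [List.length_append, List.length_reverse] at hf ⊢
            omega

end Part1

section Part2

/-! ### Walk, records, the stack at each site -/

lemma xi0_lift (η : Cfg) (x : ℤ) : xi0 η x - xi0 η (x - 1) = 2 * valZ (η x) - 1 := by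
  unfold xi0
  rcases lt_trichotomy x 0 with h | h | h
  · rw [if_neg (by omega), if_neg (by omega)]
    have : Finset.Icc (x - 1 + 1) 0 = insert x (Finset.Icc (x + 1) 0) := by
      ext y; simp only [Finset.mem_Icc, Finset.mem_insert]; omega
    rw [this, Finset.sum_insert (by simp)]
    ring
  · subst h
    simp
  · rw [if_pos (by omega), if_pos (by omega)]
    have : Finset.Icc 1 x = insert x (Finset.Icc 1 (x - 1)) := by
      ext y; simp only [Finset.mem_Icc, Finset.mem_insert]; omega
    rw [this, Finset.sum_insert (by simp)]
    ring

lemma xi0_sum (η : Cfg) (z : ℤ) : ∀ x, z - 1 ≤ x →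
    ∑ y ∈ Finset.Icc z x, (2 * valZ (η y) - 1) = xi0 η x - xi0 η (z - 1) := by
  intro x hx
  induction x, hx using Int.leInduction with
  | base => simp
  | succ x hx ih =>
    have : Finset.Icc z (x + 1) = insert (x + 1) (Finset.Icc z x) := by
      ext y; simp only [Finset.mem_Icc, Finset.mem_insert]; omega
    rw [this, Finset.sum_insert (by simp), ih]
    have := xi0_lift η (x + 1)
    rw [add_sub_cancel_right] at this
    linarith

lemma isRecord_iff (η : Cfg) (x : ℤ) : isRecord η x ↔ ∀ z < x, xi0 η x < xi0 η z := by
  have key : ∀ z ≤ x, ((∑ y ∈ Finset.Icc z x, valZ (η y)) < ∑ y ∈ Finset.Icc z x, (1 - valZ (η y)))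
      ↔ xi0 η x < xi0 η (z - 1) := by
    intro z hz
    have h := xi0_sum η z x (by omega)
    have : ∑ y ∈ Finset.Icc z x, (2 * valZ (η y) - 1) =
      (∑ y ∈ Finset.Icc z x, valZ (η y)) - ∑ y ∈ Finset.Icc z x, (1 - valZ (η y)) := by
      rw [← Finset.sum_sub_distrib]; apply Finset.sum_congr rfl; intros; ring
    constructor <;> intro <;> linarith
  unfold isRecord
  constructor
  · intro h z hz
    have := (key (z + 1) (by omega)).1 (h (z + 1) (by omega))
    simpa using this
  · intro h z hz
    exact (key z hz).2 (h (z - 1) (by omega))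

def stkFrom (η : Cfg) (y : ℤ) : ℕ → Stk
  | 0 => []
  | n + 1 => stepS (stkFrom η y n) (y + n + 1, η (y + n + 1))

open Classical in
noncomputable def stk (η : Cfg) (x : ℤ) : Stk :=
  if h : ∃ n : ℕ, isRecord η (x - n) then stkFrom η (x - Nat.find h) (Nat.find h) else []

def Good (η : Cfg) : Prop := ∀ x : ℤ, (∃ y ≤ x, isRecord η y) ∧ (∃ y ≥ x, isRecord η y)

def hS : Stk → ℤ
  | [] => 0
  | r :: s => (if topBit (r :: s) then (r.length : ℤ) else -(r.length : ℤ)) + hS s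

lemma hS_bound (st : Stk) (h : ValidS st) : 0 ≤ hS st ∧
    (∀ r ∈ st.head?, topBit st = true → (r.length : ℤ) ≤ hS st) ∧ (st ≠ [] → 1 ≤ hS st) := by
  induction st with
  | nil => simp [hS]
  | cons r s ih =>
    obtain ⟨h1, h2, h3, h4⟩ := h
    obtain ⟨i1, i2, i3⟩ := ih h4
    have hl : 0 < r.length := List.length_pos_iff.mpr h1
    cases hb : topBit (r :: s) with
    | true =>
      simp only [hS, hb, if_true]
      refine ⟨by omega, ?_, by omega⟩
      intro r' hr'
      simp at hr'
      subst hr'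
      omega
    | false =>
      simp only [hS, hb]
      rw [topBit_cons] at hb
      have hb' : topBit s = true := by simpa using hb
      cases s with
      | nil => simp [topBit_nil] at hb'
      | cons r' s' =>
        have a1 := i2 r' (by simp) hb'
        have a2 := h3 r' List.mem_cons_self
        refine ⟨?_, ?_, ?_⟩
        · simp; omega
        · intro _ _ h; simp at h
        · intro _; simp; omega

lemma hS_step (st : Stk) (a : ℤ × Bool) (h : ValidS st) (hr : st = [] → a.2 = true) :
    hS (stepS st a) = hS st + (2 * valZ a.2 - 1) := by
  have key : hS (stepS st a) = hS (pushS st a).2 +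
      (if topBit (pushS st a).2 then -((pushS st a).1.length : ℤ) else (pushS st a).1.length) := by
    obtain ⟨h1, h2, h3, h4, h5⟩ := pushS_spec st a h hr
    unfold stepS
    rcases hp : pushS st a with ⟨c, rest⟩
    rw [hp] at h1
    simp only at h1
    cases rest with
    | nil => simp [popS, h1, hS, topBit_nil, topBit_cons]
    | cons r s =>
      simp only [popS]
      split_ifs with hl hb hb
      · simp [hS, hb, hl]
      · simp [hS, hb, hl]
      · rw [hS, topBit_cons, hb]; simp [add_comm]
      · rw [hS, topBit_cons]; simp [hb, add_comm]
  rw [key]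
  cases st with
  | nil =>
    have := hr rfl
    simp [pushS, this, topBit_nil, hS, valZ]
  | cons r s =>
    by_cases hb : a.2 = topBit (r :: s)
    · simp only [pushS, hb, if_true]
      have e := topBit_cons r s
      cases ht : topBit s
      · rw [ht] at e; simp [e, hS, valZ]; ring
      · rw [ht] at e; simp [e, hS, valZ]; ring
    · simp only [pushS, hb, if_false]
      cases ht : topBit (r :: s)
      · have : a.2 = true := by rw [ht] at hb; simpa using hb
        simp [this, valZ]
      · have : a.2 = false := by rw [ht] at hb; simpa using hb
        simp [this, valZ]
        
lemma valid_stkFrom (η : Cfg) (y : ℤ) (n : ℕ) : ValidS (stkFrom η y n) := by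
  induction n with
  | zero => simp [stkFrom, ValidS]
  | succ n ih => exact ValidS_step _ _ ih

/-- automaton record implies record, given the height identity before. -/
lemma rec_of_empty (η : Cfg) (y : ℤ) (hy : isRecord η y) (n : ℕ)
    (hh : ∀ m ≤ n, hS (stkFrom η y m) = xi0 η (y + m) - xi0 η y)
    (he : stkFrom η y n = []) (hη : η (y + n + 1) = false) : isRecord η (y + n + 1) := by
  rw [isRecord_iff] at hy ⊢
  have hl := xi0_lift η (y + n + 1)
  rw [hη] at hl
  simp [valZ] at hl
  have h0 := hh n le_rfl
  rw [he] at h0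
  simp [hS] at h0
  intro z hz
  rcases lt_trichotomy z y with h | h | h
  · have := hy z h; linarith
  · subst h; linarith
  · obtain ⟨m, rfl⟩ : ∃ m : ℕ, z = y + m := ⟨(z - y).toNat, by omega⟩
    have a1 := hh m (by omega)
    have a2 := (hS_bound _ (valid_stkFrom η y m)).1
    linarith

lemma stkFrom_height (η : Cfg) (y : ℤ) (hy : isRecord η y) (n : ℕ)
    (hn : ∀ z, y < z → z ≤ y + n → ¬ isRecord η z) :
    ∀ m ≤ n, hS (stkFrom η y m) = xi0 η (y + m) - xi0 η y := by
  induction n with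
  | zero =>
    intro m hm
    have : m = 0 := by omega
    subst this
    simp [stkFrom, hS]
  | succ n ih =>
    have ih' := ih (fun z h1 h2 => hn z h1 (by push_cast; omega))
    intro m hm
    rcases Nat.lt_or_ge m (n + 1) with h | h
    · exact ih' m (by omega)
    · have : m = n + 1 := by omega
      subst this
      rw [stkFrom, hS_step _ _ (valid_stkFrom η y n), ih' n le_rfl]
      · have := xi0_lift η (y + n + 1)
        rw [add_sub_cancel_right] at this
        push_cast
        rw [← add_assoc]
        linarith
      · intro he
        by_contra hb
        have hb' : η (y + n + 1) = false := by simpa using hb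
        exact hn _ (by omega) (by push_cast; omega) (rec_of_empty η y hy n ih' he hb')

lemma stk_eq_from (η : Cfg) (y : ℤ) (hy : isRecord η y) (n : ℕ)
    (hn : ∀ z, y < z → z ≤ y + n → ¬ isRecord η z) : stk η (y + n) = stkFrom η y n := by
  classical
  have h : ∃ m : ℕ, isRecord η (y + n - m) := ⟨n, by simpa using hy⟩
  have hf : Nat.find h = n := by
    rw [Nat.find_eq_iff]
    refine ⟨by simpa using hy, fun m hm hr => hn _ ?_ ?_ hr⟩ <;> omega
  unfold stk
  rw [dif_pos (by convert h)]
  have : ∀ m : ℕ, m = n → stkFrom η (y + n - m) m = stkFrom η y n := by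
    rintro m rfl; simp
  apply this
  convert hf

lemma exists_lastRec (η : Cfg) (hg : Good η) (x : ℤ) : ∃ (y : ℤ) (n : ℕ), x = y + n ∧
    isRecord η y ∧ (∀ z, y < z → z ≤ y + n → ¬ isRecord η z) := by
  classical
  obtain ⟨y, hy, hr⟩ := (hg x).1
  have h : ∃ m : ℕ, isRecord η (x - m) := ⟨(x - y).toNat, by
    have : x - ((x - y).toNat : ℤ) = y := by omega
    rwa [this]⟩
  refine ⟨x - Nat.find h, Nat.find h, by ring, Nat.find_spec h, ?_⟩
  intro z h1 h2 hz
  have := Nat.find_min h (m := (x - z).toNat) (by omega)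
  apply this
  have : x - ((x - z).toNat : ℤ) = z := by omega
  rwa [this]

lemma stk_rec (η : Cfg) (x : ℤ) (h : isRecord η x) : stk η x = [] := by
  have := stk_eq_from η x h 0 (by intros; simp at *; omega)
  simpa [stkFrom] using this

lemma rec_iff_stk (η : Cfg) (hg : Good η) (x : ℤ) :
    isRecord η x ↔ stk η (x - 1) = [] ∧ η x = false := by
  obtain ⟨y, n, hx, hy, hn⟩ := exists_lastRec η hg (x - 1)
  have hx' : x = y + n + 1 := by omega
  rw [hx, stk_eq_from η y hy n hn]
  have hh := stkFrom_height η y hy n hn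
  constructor
  · intro hr
    rw [isRecord_iff] at hr
    have h1 := hr y (by omega)
    have h2 := hh n le_rfl
    have hl := xi0_lift η x
    rw [hx] at hl
    have hb := hS_bound _ (valid_stkFrom η y n)
    have hη : η x = false := by
      by_contra hc
      have : η x = true := by simpa using hc
      rw [this] at hl
      simp [valZ] at hl
      linarith [hb.1]
    refine ⟨?_, hη⟩
    by_contra hc
    have := hb.2.2 hc
    rw [hη] at hl
    simp [valZ] at hl
    linarith
  · rintro ⟨h1, h2⟩
    rw [hx'] at h2 ⊢
    exact rec_of_empty η y hy n hh h1 h2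

lemma stk_step (η : Cfg) (hg : Good η) (x : ℤ) :
    stk η x = stepS (stk η (x - 1)) (x, η x) := by
  by_cases hr : isRecord η x
  · rw [stk_rec η x hr]
    obtain ⟨h1, h2⟩ := (rec_iff_stk η hg x).1 hr
    rw [h1, h2]
    simp [stepS, pushS, topBit_nil, popS]
  · obtain ⟨y, n, hx, hy, hn⟩ := exists_lastRec η hg (x - 1)
    have hx' : x = y + n + 1 := by omega
    rw [hx, stk_eq_from η y hy n hn, hx']
    have := stk_eq_from η y hy (n + 1) (by
      intro z h1 h2
      rcases eq_or_ne z x with rfl | h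
      · exact hr
      · exact hn z h1 (by push_cast at h2; omega))
    push_cast at this
    rw [← add_assoc] at this
    rw [this, stkFrom]

lemma good_induct (η : Cfg) (hg : Good η) (P : ℤ → Prop) (h0 : ∀ x, isRecord η x → P x)
    (h1 : ∀ x, P (x - 1) → P x) (x : ℤ) : P x := by
  obtain ⟨y, hy, hr⟩ := (hg x).1
  induction x, hy using Int.leInduction with
  | base => exact h0 y hr
  | succ x hx ih => exact h1 _ (by simpa using ih)

lemma valid_stk (η : Cfg) (x : ℤ) : ValidS (stk η x) := by
  unfold stk
  split_ifs
  · exact valid_stkFrom _ _ _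
  · trivial

end Part2

section Part3

/-! ### Labels and carrier states -/

noncomputable def lab (η : Cfg) (x : ℤ) : ℕ := (pushS (stk η (x - 1)) (x, η x)).1.length

def Wst : Stk → ℕ → Bool
  | [], _ => false
  | r :: s, j => xor (decide (j ≤ r.length)) (Wst s j)

noncomputable def W (η : Cfg) (x : ℤ) (j : ℕ) : Bool := Wst (stk η x) j

noncomputable def emitAt (η : Cfg) (x : ℤ) : Option (List (ℤ × Bool)) :=
  emitS (pushS (stk η (x - 1)) (x, η x))

lemma Wst_all (st : Stk) (j : ℕ) (h : ∀ r ∈ st, j ≤ r.length) : Wst st j = topBit st := by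
  induction st with
  | nil => simp [Wst, topBit_nil]
  | cons r s ih =>
    rw [Wst, ih (fun r' hr' => h r' (List.mem_cons_of_mem _ hr')), topBit_cons]
    have := h r List.mem_cons_self
    simp [this]

lemma Wst_pop (c : List (ℤ × Bool)) (rest : Stk) (hc : c ≠ []) (i : ℕ) :
    Wst (popS (c, rest)) i = xor (decide (i ≤ c.length)) (Wst rest i) := by
  cases rest with
  | nil => simp [popS, hc, Wst]
  | cons r s =>
    simp only [popS]
    split_ifs with hl
    · simp only [Wst, hl]
      cases Wst s i <;> cases (decide (i ≤ c.length)) <;> rfl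
    · simp [Wst]

lemma Wst_step (st : Stk) (a : ℤ × Bool) (h : ValidS st) (hr : st = [] → a.2 = true) :
    1 ≤ (pushS st a).1.length ∧
    (∀ i, i ≤ (pushS st a).1.length → Wst (stepS st a) i = a.2) ∧
    Wst st (pushS st a).1.length = !a.2 ∧
    (∀ i, 1 ≤ i → i ≠ (pushS st a).1.length → Wst (stepS st a) i = Wst st i) ∧
    ((emitS (pushS st a)).isSome ↔ Wst (stepS st a) (pushS st a).1.length =
      Wst (stepS st a) ((pushS st a).1.length + 1)) := by
  obtain ⟨h1, h2, h3, h4, h5⟩ := pushS_spec st a h hr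
  have hpos : 1 ≤ (pushS st a).1.length := List.length_pos_iff.mpr h1
  have hmem : a ∈ (pushS st a).1 := by
    cases st with
    | nil => simp [pushS, hr rfl, topBit_nil]
    | cons r s => simp only [pushS]; split_ifs <;> simp
  have hbit := h2 a hmem
  have hrest : ∀ i, i ≤ (pushS st a).1.length → Wst (pushS st a).2 i = !a.2 := by
    intro i hi
    rw [Wst_all _ i (fun r hr => hi.trans (h3 r hr)), hbit]; simp
  have hnew : ∀ i, Wst (stepS st a) i =
      xor (decide (i ≤ (pushS st a).1.length)) (Wst (pushS st a).2 i) := by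
    intro i
    exact Wst_pop _ _ h1 i
  refine ⟨hpos, ?_, ?_, ?_, ?_⟩
  · intro i hi
    rw [hnew, hrest i hi]; simp [hi]
  · cases st with
    | nil => simp [hr rfl, Wst]
    | cons r s =>
      by_cases hb : a.2 = topBit (r :: s)
      · have e : pushS (r :: s) a = (a :: r, s) := by simp [pushS, hb]
        have := hrest _ le_rfl
        rw [e] at this ⊢
        simp only [List.length_cons] at this ⊢
        rw [Wst, this]; simp
      · have e : pushS (r :: s) a = ([a], r :: s) := by simp [pushS, hb]
        have := hrest _ le_rfl
        rw [e] at this ⊢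
        exact this
  · intro i hi hij
    rw [hnew]
    cases st with
    | nil =>
      have e : pushS [] a = ([a], []) := by simp [pushS, hr rfl, topBit_nil]
      rw [e] at hij ⊢
      simp at hij
      have : ¬ i ≤ 1 := by omega
      simp [this]
    | cons r s =>
      by_cases hb : a.2 = topBit (r :: s)
      · have e : pushS (r :: s) a = (a :: r, s) := by simp [pushS, hb]
        rw [e] at hij ⊢
        simp only [List.length_cons] at hij ⊢
        rw [Wst]
        have : i ≤ r.length + 1 ↔ i ≤ r.length := by omega
        simp [this]
      · have e : pushS (r :: s) a = ([a], r :: s) := by simp [pushS, hb]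
        rw [e] at hij ⊢
        simp at hij
        have : ¬ i ≤ 1 := by omega
        simp [this]
  · rw [hnew, hnew, hrest _ le_rfl]
    rcases hp : pushS st a with ⟨c, rest⟩
    rw [hp] at h1 h2 h3 h4 hbit
    simp only at h1 h2 h3 h4 hbit ⊢
    cases rest with
    | nil =>
      simp [topBit_nil] at hbit
      simp [emitS, Wst, hbit]
    | cons r s =>
      have hl3 := h3 r List.mem_cons_self
      simp only [emitS]
      split_ifs with hl
      · rw [Wst, Wst_all s _ (fun r' hr' => by have := h4.2.2.1 r' hr'; omega)]
        rw [topBit_cons] at hbit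
        have : ¬ (c.length + 1 ≤ r.length) := by omega
        simp [this, hbit]
      · rw [Wst_all (r :: s) _ (by
          intro r' hr'
          rw [List.mem_cons] at hr'
          rcases hr' with rfl | hr'
          · omega
          · have := h4.2.2.1 r' hr'; omega)]
        simp [hbit]

lemma lab_zero_iff (η : Cfg) (hg : Good η) (x : ℤ) : lab η x = 0 ↔ isRecord η x := by
  rw [rec_iff_stk η hg]
  unfold lab
  constructor
  · intro h
    by_contra hc
    have := (Wst_step (stk η (x - 1)) (x, η x) (valid_stk η _) (by
      intro h1
      by_contra h2
      exact hc ⟨h1, by simpa using h2⟩)).1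
    omega
  · rintro ⟨h1, h2⟩
    simp [h1, h2, pushS, topBit_nil]

/-- The local rules satisfied by a labelled configuration. -/
structure Rules (η : Cfg) (l : ℤ → ℕ) (w : ℤ → ℕ → Bool) : Prop where
  rec_eta : ∀ x, l x = 0 → η x = false
  rec_pre : ∀ x, l x = 0 → ∀ i, w (x - 1) i = false
  rec_post : ∀ x, l x = 0 → ∀ i, w x i = false
  pre_self : ∀ x, 1 ≤ l x → w (x - 1) (l x) = !η x
  post_le : ∀ x, 1 ≤ l x → ∀ i, i ≤ l x → w x i = η x
  post_ne : ∀ x i, 1 ≤ i → i ≠ l x → w x i = w (x - 1) i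

lemma rules (η : Cfg) (hg : Good η) : Rules η (lab η) (W η) := by
  have hr : ∀ x, 1 ≤ lab η x → (stk η (x - 1) = [] → (x, η x).2 = true) := by
    intro x hx h1
    by_contra h2
    have : isRecord η x := (rec_iff_stk η hg x).2 ⟨h1, by simpa using h2⟩
    rw [← lab_zero_iff η hg] at this
    omega
  refine ⟨?_, ?_, ?_, ?_, ?_, ?_⟩
  · intro x hx
    exact ((rec_iff_stk η hg x).1 ((lab_zero_iff η hg x).1 hx)).2
  · intro x hx i
    have := ((rec_iff_stk η hg x).1 ((lab_zero_iff η hg x).1 hx)).1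
    simp [W, this, Wst]
  · intro x hx i
    have := stk_rec η x ((lab_zero_iff η hg x).1 hx)
    simp [W, this, Wst]
  · intro x hx
    exact (Wst_step _ _ (valid_stk η _) (hr x hx)).2.2.1
  · intro x hx i hi
    unfold W
    rw [stk_step η hg]
    exact (Wst_step _ _ (valid_stk η _) (hr x hx)).2.1 i hi
  · intro x i hi hne
    rcases Nat.eq_zero_or_pos (lab η x) with h | h
    · have h1 := ((rec_iff_stk η hg x).1 ((lab_zero_iff η hg x).1 h)).1
      have h2 := stk_rec η x ((lab_zero_iff η hg x).1 h)
      simp [W, h1, h2]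
    · unfold W
      rw [stk_step η hg]
      exact (Wst_step _ _ (valid_stk η _) (hr x h)).2.2.2.1 i hi hne

lemma emitAt_iff (η : Cfg) (hg : Good η) (x : ℤ) :
    (emitAt η x).isSome ↔ 1 ≤ lab η x ∧ W η x (lab η x) = W η x (lab η x + 1) := by
  rcases Nat.eq_zero_or_pos (lab η x) with h | h
  · have h1 := ((rec_iff_stk η hg x).1 ((lab_zero_iff η hg x).1 h))
    simp [h, emitAt, h1.1, h1.2, pushS, topBit_nil, emitS]
  · have hr : stk η (x - 1) = [] → (x, η x).2 = true := by
      intro h1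
      by_contra h2
      have : isRecord η x := (rec_iff_stk η hg x).2 ⟨h1, by simpa using h2⟩
      rw [← lab_zero_iff η hg] at this
      omega
    have := (Wst_step _ _ (valid_stk η _) hr).2.2.2.2
    rw [← stk_step η hg] at this
    unfold emitAt
    rw [this]
    exact ⟨fun hh => ⟨h, hh⟩, fun hh => hh.2⟩

end Part3

section Part4

/-! ### Chains and the description of solitons -/

/-- A (reversed) run of sites with bit `b` and labels `length, ..., 1`. -/
def Chain (η : Cfg) (l : ℤ → ℕ) (b : Bool) : List ℤ → Prop
  | [] => True
  | a :: r => η a = b ∧ l a = r.length + 1 ∧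
      (∀ a' ∈ r.head?, a' < a ∧ ∀ z, a' < z → z < a → 1 ≤ l z ∧ l z < r.length) ∧ Chain η l b r

/-- validity of a run at time `x`. -/
def RunOK (η : Cfg) (x : ℤ) (r : List (ℤ × Bool)) : Prop :=
  ∃ b, (∀ p ∈ r, p.2 = b) ∧ Chain η (lab η) b (r.map Prod.fst) ∧
    ∀ p ∈ r.head?, p.1 ≤ x ∧ ∀ z, p.1 < z → z ≤ x → 1 ≤ lab η z ∧ lab η z < r.length

lemma runOK_push (η : Cfg) (x : ℤ) (hx : 1 ≤ lab η x)
    (ih : ∀ r ∈ stk η (x - 1), RunOK η (x - 1) r) :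
    RunOK η x (pushS (stk η (x - 1)) (x, η x)).1 ∧
    ∀ r ∈ (pushS (stk η (x - 1)) (x, η x)).2, RunOK η (x - 1) r := by
  have hv := valid_stk η (x - 1)
  have hlab : lab η x = (pushS (stk η (x - 1)) (x, η x)).1.length := rfl
  rcases hst : stk η (x - 1) with _ | ⟨r, s⟩
  · rw [hst] at hlab
    by_cases hb : η x = topBit []
    · have e : pushS [] (x, η x) = ([], []) := by simp [pushS, hb]
      rw [e] at hlab; simp at hlab; omega
    · have e : pushS [] (x, η x) = ([(x, η x)], []) := by simp [pushS, hb]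
      rw [e] at hlab ⊢
      refine ⟨⟨η x, by simp, ?_, ?_⟩, by simp⟩
      · simp [Chain, hlab]
      · simp
        intros; omega
  · rw [hst] at hlab hv ih
    by_cases hb : η x = topBit (r :: s)
    · have e : pushS (r :: s) (x, η x) = ((x, η x) :: r, s) := by simp [pushS, hb]
      rw [e] at hlab ⊢
      refine ⟨?_, fun r' hr' => ih r' (List.mem_cons_of_mem _ hr')⟩
      obtain ⟨b, h1, h2, h3⟩ := ih r List.mem_cons_self
      have hbb : b = η x := by
        obtain ⟨p, hp⟩ := List.exists_mem_of_ne_nil r hv.1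
        rw [← h1 p hp, hv.2.1 p hp, hb]
      subst hbb
      refine ⟨η x, ?_, ?_, ?_⟩
      · intro p hp
        rw [List.mem_cons] at hp
        rcases hp with rfl | hp
        · rfl
        · exact h1 p hp
      · simp only [List.map_cons, Chain]
        refine ⟨trivial, by rw [hlab]; simp, ?_, h2⟩
        intro a' ha'
        rw [List.head?_map] at ha'
        simp only [Option.mem_def, Option.map_eq_some_iff] at ha'
        obtain ⟨p, hp, rfl⟩ := ha'
        have := h3 p hp
        refine ⟨by omega, fun z h1 h2 => ?_⟩
        have := this.2 z h1 (by omega)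
        simpa using this
      · simp
        intros; omega
    · have e : pushS (r :: s) (x, η x) = ([(x, η x)], r :: s) := by simp [pushS, hb]
      rw [e] at hlab ⊢
      refine ⟨⟨η x, by simp, ?_, ?_⟩, ih⟩
      · simp [Chain, hlab]
      · simp
        intros; omega

lemma runOK_extend (η : Cfg) (x : ℤ) (hx : 1 ≤ lab η x) (r : List (ℤ × Bool))
    (h : RunOK η (x - 1) r) (hl : lab η x < r.length) : RunOK η x r := by
  obtain ⟨b, h1, h2, h3⟩ := h
  refine ⟨b, h1, h2, fun p hp => ?_⟩
  have := h3 p hp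
  refine ⟨by omega, fun z hz1 hz2 => ?_⟩
  rcases eq_or_ne z x with rfl | hne
  · exact ⟨hx, hl⟩
  · exact this.2 z hz1 (by omega)

lemma runOK_stk (η : Cfg) (hg : Good η) (x : ℤ) : ∀ r ∈ stk η x, RunOK η x r := by
  refine good_induct η hg (fun x => ∀ r ∈ stk η x, RunOK η x r) ?_ ?_ x
  · intro x hx
    rw [stk_rec η x hx]; simp
  · intro x ih
    rcases Nat.eq_zero_or_pos (lab η x) with h0 | hx
    · rw [stk_rec η x ((lab_zero_iff η hg x).1 h0)]; simp
    · obtain ⟨p1, p2⟩ := runOK_push η x hx ih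
      rw [stk_step η hg]
      have hr : stk η (x - 1) = [] → (x, η x).2 = true := by
        intro h1
        by_contra h2
        have : isRecord η x := (rec_iff_stk η hg x).2 ⟨h1, by simpa using h2⟩
        rw [← lab_zero_iff η hg] at this
        omega
      obtain ⟨h1, h2, h3, h4, h5⟩ := pushS_spec _ (x, η x) (valid_stk η (x - 1)) hr
      have hlab : lab η x = (pushS (stk η (x - 1)) (x, η x)).1.length := rfl
      unfold stepS
      rcases hp : pushS (stk η (x - 1)) (x, η x) with ⟨c, rest⟩
      rw [hp] at h1 h2 h3 h4 p1 p2 hlab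
      simp only at h1 h2 h3 h4 p1 p2 hlab
      cases rest with
      | nil => 
        simp only [popS, h1, if_false]
        simpa using p1
      | cons r s =>
        simp only [popS]
        have a0 := h3 r List.mem_cons_self
        split_ifs with hl
        · intro r' hr'
          have := h4.2.2.1 r' hr'
          exact runOK_extend η x hx r' (p2 r' (List.mem_cons_of_mem _ hr')) (by omega)
        · intro r' hr'
          rw [List.mem_cons] at hr'
          rcases hr' with rfl | hr'
          · exact p1
          · refine runOK_extend η x hx r' (p2 r' hr') ?_
            rw [List.mem_cons] at hr'
            rcases hr' with rfl | hr'
            · omega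
            · have := h4.2.2.1 r' hr'; omega

/-- Combinatorial description of a soliton, with last head site `u` and last tail site `d`. -/
def Sol (η : Cfg) (l : ℤ → ℕ) (w : ℤ → ℕ → Bool) (k : ℕ) (γ : Finset ℤ) (u d : ℤ) : Prop :=
  ∃ hl tl : List ℤ, Chain η l true hl ∧ Chain η l false tl ∧ hl.length = k ∧ tl.length = k ∧
    hl.head? = some u ∧ tl.head? = some d ∧ γ = hl.toFinset ∪ tl.toFinset ∧
    (∀ z, min u d < z → z < max u d → 1 ≤ l z ∧ l z < k) ∧
    w (max u d) k = w (max u d) (k + 1)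

lemma emitAt_sol (η : Cfg) (hg : Good η) (x : ℤ) (s : List (ℤ × Bool)) (h : emitAt η x = some s) :
    s.length = 2 * lab η x ∧ 1 ≤ lab η x ∧ ∃ u d, max u d = x ∧
      Sol η (lab η) (W η) (lab η x) (s.map Prod.fst).toFinset u d := by
  have he := (emitAt_iff η hg x).1 (by rw [h]; rfl)
  obtain ⟨p1, p2⟩ := runOK_push η x he.1 (runOK_stk η hg (x - 1))
  have hlab : lab η x = (pushS (stk η (x - 1)) (x, η x)).1.length := rfl
  have hr : stk η (x - 1) = [] → (x, η x).2 = true := by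
    intro h1
    by_contra h2
    have : isRecord η x := (rec_iff_stk η hg x).2 ⟨h1, by simpa using h2⟩
    rw [← lab_zero_iff η hg] at this
    omega
  obtain ⟨h1, h2, h3, h4, h5⟩ := pushS_spec _ (x, η x) (valid_stk η (x - 1)) hr
  have hhead : (pushS (stk η (x - 1)) (x, η x)).1.head? = some (x, η x) := by
    rcases hst : stk η (x - 1) with _ | ⟨r, s⟩
    · have := hr hst
      simp only at this
      simp [pushS, this, topBit_nil]
    · simp only [pushS]; split_ifs <;> simp
  unfold emitAt at h
  rcases hp : pushS (stk η (x - 1)) (x, η x) with ⟨c, rest⟩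
  rw [hp] at h1 h2 h3 h4 p1 p2 hlab h hhead
  simp only at h1 h2 h3 h4 p1 p2 hlab hhead
  cases rest with
  | nil => simp [emitS] at h
  | cons r t =>
    simp only [emitS] at h
    split_ifs at h with hl
    have hs : s = r.reverse ++ c.reverse := by simpa using h.symm
    refine ⟨by rw [hs]; simp; omega, he.1, ?_⟩
    obtain ⟨b, b1, b2, b3⟩ := p1
    obtain ⟨b', c1, c2, c3⟩ := p2 r List.mem_cons_self
    have hxc : (x, η x) ∈ c := List.mem_of_mem_head? hhead
    have hb : b = η x := (b1 _ hxc).symm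
    have hb' : b' = !η x := by
      obtain ⟨p, hp⟩ := List.exists_mem_of_ne_nil r h4.1
      have e1 := c1 p hp
      have e2 := h4.2.1 p hp
      have e3 := h2 _ hxc
      simp only at e3
      rw [← e1, e2, e3]; simp
    obtain ⟨⟨a, ba⟩, r', hr'⟩ := List.exists_cons_of_ne_nil h4.1
    have hrh : (a, ba) ∈ r.head? := by rw [hr']; simp
    have c3' := c3 _ hrh
    simp only at c3'
    have hax : a < x := by omega
    have hch : (c.map Prod.fst).head? = some x := by rw [List.head?_map, hhead]; rfl
    have hrh' : (r.map Prod.fst).head? = some a := by rw [hr']; simp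
    have hmid : ∀ z, a < z → z < x → 1 ≤ lab η z ∧ lab η z < lab η x := by
      intro z z1 z2
      have := c3'.2 z z1 (by omega)
      omega
    cases hη : η x
    · refine ⟨a, x, by omega, r.map Prod.fst, c.map Prod.fst, ?_, ?_, ?_, ?_, hrh', hch, ?_, ?_, ?_⟩
      · rw [hη] at hb'; rw [hb'] at c2; exact c2
      · rw [hη] at hb; rw [hb] at b2; exact b2
      · simp; omega
      · simp; omega
      · rw [hs]; ext z; simp
      · rw [min_eq_left hax.le, max_eq_right hax.le]; exact hmid
      · rw [max_eq_right hax.le]; exact he.2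
    · refine ⟨x, a, by omega, c.map Prod.fst, r.map Prod.fst, ?_, ?_, ?_, ?_, hch, hrh', ?_, ?_, ?_⟩
      · rw [hη] at hb; rw [hb] at b2; exact b2
      · rw [hη] at hb'; rw [hb'] at c2; exact c2
      · simp; omega
      · simp; omega
      · rw [hs]; ext z; simp; tauto
      · rw [min_eq_right hax.le, max_eq_left hax.le]; exact hmid
      · rw [max_eq_left hax.le]; exact he.2

lemma emis_iff (η : Cfg) (y : ℤ) (N : ℕ) (s : List (ℤ × Bool)) : ∀ n : ℕ,
    s ∈ emis (stkFrom η y n) ((List.range N).map fun i : ℕ => (y + n + 1 + i, η (y + n + 1 + i))) ↔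
    ∃ i < N, emitS (pushS (stkFrom η y (n + i)) (y + n + i + 1, η (y + n + i + 1))) = some s := by
  induction N with
  | zero => intro n; simp [emis]
  | succ N ih =>
    intro n
    rw [List.range_succ_eq_map]
    simp only [List.map_cons, List.map_map, emis, List.mem_append, Option.mem_toList]
    have e1 : ((fun i : ℕ => ((y + n + 1 + i : ℤ), η (y + n + 1 + i))) ∘ Nat.succ) =
        (fun i : ℕ => (y + (n + 1 : ℕ) + 1 + i, η (y + (n + 1 : ℕ) + 1 + i))) := by
      funext i
      simp only [Function.comp]
      have : (y + n + 1 + (i.succ : ℕ) : ℤ) = y + (n + 1 : ℕ) + 1 + i := by push_cast; ring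
      rw [this]
    have e2 : stepS (stkFrom η y n) (y + n + 1 + (0 : ℕ), η (y + n + 1 + (0 : ℕ))) = stkFrom η y (n + 1) := by
      simp [stkFrom]
    rw [e1, e2, ih (n + 1)]
    constructor
    · rintro (h | ⟨i, hi, h⟩)
      · exact ⟨0, by omega, by simpa using h⟩
      · refine ⟨i + 1, by omega, ?_⟩
        have : (y + n + (i + 1 : ℕ) + 1 : ℤ) = y + (n + 1 : ℕ) + i + 1 := by push_cast; ring
        rw [this, ← h]
        congr 3
        omega
    · rintro ⟨i, hi, h⟩
      cases i with
      | zero => left; simpa using h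
      | succ i =>
        right
        refine ⟨i, by omega, ?_⟩
        have : (y + n + (i + 1 : ℕ) + 1 : ℤ) = y + (n + 1 : ℕ) + i + 1 := by push_cast; ring
        rw [this] at h
        rw [← h]
        congr 3
        omega

lemma noRec_iff (η : Cfg) (y : ℤ) (N : ℕ) : ∀ n : ℕ,
    (∀ i < N, stkFrom η y (n + i) = [] → η (y + n + i + 1) = true) →
    noRecS (stkFrom η y n) ((List.range N).map fun i : ℕ => (y + n + 1 + i, η (y + n + 1 + i))) := by
  induction N with
  | zero => intro n; simp [noRecS]
  | succ N ih =>
    intro n hh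
    rw [List.range_succ_eq_map]
    simp only [List.map_cons, List.map_map, noRecS]
    have e1 : ((fun i : ℕ => ((y + n + 1 + i : ℤ), η (y + n + 1 + i))) ∘ Nat.succ) =
        (fun i : ℕ => (y + (n + 1 : ℕ) + 1 + i, η (y + (n + 1 : ℕ) + 1 + i))) := by
      funext i
      simp only [Function.comp]
      have : (y + n + 1 + (i.succ : ℕ) : ℤ) = y + (n + 1 : ℕ) + 1 + i := by push_cast; ring
      rw [this]
    have e2 : stepS (stkFrom η y n) (y + n + 1 + (0 : ℕ), η (y + n + 1 + (0 : ℕ))) = stkFrom η y (n + 1) := by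
      simp [stkFrom]
    rw [e1, e2]
    refine ⟨?_, ih (n + 1) ?_⟩
    · simpa using hh 0 (by omega)
    · intro i hi h
      have := hh (i + 1) (by omega) (by rw [← h]; congr 1; omega)
      rw [← this]
      congr 1; push_cast; ring

lemma excursion_iff (η : Cfg) (hg : Good η) (y1 y2 : ℤ) (h12 : y1 < y2) (r1 : isRecord η y1)
    (hn : ∀ z : ℤ, y1 < z → z < y2 → ¬ isRecord η z) (s : List (ℤ × Bool)) :
    s ∈ tsSolitons (excursionWord η y1 y2) ↔ ∃ x, y1 < x ∧ x < y2 ∧ emitAt η x = some s := by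
  have e0 : excursionWord η y1 y2 = (List.range (y2 - y1 - 1).toNat).map
      fun i : ℕ => (y1 + (0 : ℕ) + 1 + i, η (y1 + (0 : ℕ) + 1 + i)) := by
    have e : (do let a ← List.range (y2 - y1 - 1).toNat; pure (a : ℤ)) =
      (List.range (y2 - y1 - 1).toNat).map (fun n : ℕ => (n : ℤ)) := by
      rw [List.map_eq_flatMap]; rfl
    unfold excursionWord
    rw [e, List.map_map]
    simp [Function.comp_def]
  have hst : ∀ i < (y2 - y1 - 1).toNat, stk η (y1 + i) = stkFrom η y1 i := by
    intro i hi
    exact stk_eq_from η y1 r1 i (fun z a b => hn z a (by omega))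
  have hno : noRecS [] (excursionWord η y1 y2) := by
    rw [e0]
    refine noRec_iff η y1 _ 0 ?_
    intro i hi he
    by_contra hb
    refine hn (y1 + (0 : ℕ) + i + 1) (by push_cast; omega) (by push_cast; omega) ?_
    rw [rec_iff_stk η hg]
    refine ⟨?_, by simpa using hb⟩
    have : (y1 + (0 : ℕ) + i + 1 - 1 : ℤ) = y1 + i := by push_cast; ring
    rw [this, hst i hi]
    simpa using he
  have hnd : ((excursionWord η y1 y2).map Prod.fst).Nodup := by
    rw [e0, List.map_map]
    refine List.Nodup.map ?_ List.nodup_range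
    intro a b hab
    simpa using hab
  have key := tsAux_eq (excursionWord η y1 y2) [] (excursionWord η y1 y2).length trivial hno
    (by simpa [pwS] using hnd) (by simp [pwS])
  have : tsSolitons (excursionWord η y1 y2) = emis [] (excursionWord η y1 y2) := by
    simpa [pwS, tsSolitons] using key
  rw [this, e0]
  have := emis_iff η y1 (y2 - y1 - 1).toNat s 0
  rw [show stkFrom η y1 0 = [] from rfl] at this
  rw [this]
  constructor
  · rintro ⟨i, hi, h⟩
    refine ⟨y1 + i + 1, by omega, by omega, ?_⟩
    unfold emitAt
    rw [add_sub_cancel_right, hst i hi]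
    simpa using h
  · rintro ⟨x, hx1, hx2, h⟩
    refine ⟨(x - y1 - 1).toNat, by omega, ?_⟩
    have e : x = y1 + ((x - y1 - 1).toNat : ℕ) + 1 := by omega
    unfold emitAt at h
    rw [e, add_sub_cancel_right, hst _ (by omega)] at h
    simpa using h

lemma gamma_iff (η : Cfg) (hg : Good η) (k : ℕ) (γ : Finset ℤ) : γ ∈ Gamma η k ↔
    ∃ x s, emitAt η x = some s ∧ s.length = 2 * k ∧ γ = (s.map Prod.fst).toFinset := by
  constructor
  · rintro ⟨y1, y2, h12, r1, r2, hn, s, hs, hl, hγ⟩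
    obtain ⟨x, _, _, hx⟩ := (excursion_iff η hg y1 y2 h12 r1 hn s).1 hs
    exact ⟨x, s, hx, hl, hγ⟩
  · rintro ⟨x, s, hx, hl, hγ⟩
    obtain ⟨y1, n, hy, r1, h1⟩ := exists_lastRec η hg x
    have hnr : ¬ isRecord η x := by
      rw [← lab_zero_iff η hg]
      have := (emitAt_iff η hg x).1 (by rw [hx]; rfl)
      omega
    have hlt : y1 < x := by
      rcases eq_or_ne y1 x with h | h
      · rw [h] at r1; exact absurd r1 hnr
      · omega
    classical
    have hex : ∃ m : ℕ, isRecord η (x + m) := by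
      obtain ⟨y, hy, hr⟩ := (hg x).2
      refine ⟨(y - x).toNat, ?_⟩
      have : x + ((y - x).toNat : ℤ) = y := by omega
      rwa [this]
    have h0 : Nat.find hex ≠ 0 := by
      intro h
      have := Nat.find_spec hex
      rw [h] at this
      exact hnr (by simpa using this)
    have hn : ∀ z : ℤ, y1 < z → z < x + Nat.find hex → ¬ isRecord η z := by
      intro z z1 z2 hz
      rcases le_or_gt z x with h | h
      · exact h1 z z1 (by omega) hz
      · apply Nat.find_min hex (m := (z - x).toNat) (by omega)
        have : x + ((z - x).toNat : ℤ) = z := by omega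
        rwa [this]
    refine ⟨y1, x + Nat.find hex, by omega, r1, Nat.find_spec hex, hn, s, ?_, hl, hγ⟩
    rw [excursion_iff η hg _ _ (by omega) r1 hn]
    exact ⟨x, hlt, by omega, hx⟩

end Part4

section Part5

/-! ### Consequences of the local rules -/

section rules
variable {η : Cfg} {l : ℤ → ℕ} {w : ℤ → ℕ → Bool}

lemma Rules.pre_lt (h : Rules η l w) (x : ℤ) (i : ℕ) (hi : 1 ≤ i) (hl : i < l x) :
    w (x - 1) i = η x := by
  rw [← h.post_ne x i hi (by omega), h.post_le x (by omega) i hl.le]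

lemma Rules.const (h : Rules η l w) (j : ℕ) (hj : 1 ≤ j) (a b : ℤ) (hab : a ≤ b)
    (hn : ∀ z, a < z → z ≤ b → l z ≠ j) : w b j = w a j := by
  induction b, hab using Int.leInduction with
  | base => rfl
  | succ b hb ih =>
    have := h.post_ne (b + 1) j hj (hn _ (by omega) le_rfl).symm
    rw [add_sub_cancel_right] at this
    rw [this, ih (fun z z1 z2 => hn z z1 (by omega))]

lemma Rules.event (h : Rules η l w) (j : ℕ) (hj : 1 ≤ j) (c : Bool) (a b : ℤ) (hab : a ≤ b)
    (ha : w a j = !c) (hb : w b j = c) : ∃ z, a < z ∧ z ≤ b ∧ l z = j ∧ η z = c := by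
  induction b, hab using Int.leInduction with
  | base => rw [ha] at hb; cases c <;> simp at hb
  | succ b hb' ih =>
    cases hc : (w b j == c) with
    | true =>
      obtain ⟨z, z1, z2, z3⟩ := ih (by simpa using hc)
      exact ⟨z, z1, by omega, z3⟩
    | false =>
      have hne : w b j ≠ c := by simpa using hc
      by_cases hl : l (b + 1) = j
      · refine ⟨b + 1, by omega, le_rfl, hl, ?_⟩
        rw [← hb, h.post_le (b + 1) (by omega) j (by omega)]
      · have := h.post_ne (b + 1) j hj (fun h => hl h.symm)
        rw [add_sub_cancel_right, hb] at this
        exact absurd this.symm hne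

end rules

/-- Weak chains are determined by their last site. -/
def WChain (Q : ℕ → ℤ → Prop) : List ℤ → Prop
  | [] => True
  | a :: r => Q (r.length + 1) a ∧
      (∀ a' ∈ r.head?, a' < a ∧ ∀ z, a' < z → z < a → ¬ Q r.length z) ∧ WChain Q r

lemma WChain_unique (Q : ℕ → ℤ → Prop) (r1 : List ℤ) : ∀ r2 : List ℤ, WChain Q r1 → WChain Q r2 →
    r1.length = r2.length → r1.head? = r2.head? → r1 = r2 := by
  induction r1 with
  | nil =>
    intro r2 _ _ hl _
    exact (List.length_eq_zero_iff.1 hl.symm).symm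
  | cons a r ih =>
    intro r2 h1 h2 hl hh
    cases r2 with
    | nil => simp at hl
    | cons b s =>
      have hab : a = b := by simpa using hh
      subst hab
      have hl' : r.length = s.length := by simpa using hl
      rw [ih s h1.2.2 h2.2.2 hl']
      cases r with
      | nil =>
        have : s = [] := List.length_eq_zero_iff.1 hl'.symm
        rw [this]
      | cons c r' =>
        cases s with
        | nil => simp at hl'
        | cons d s' =>
          have q1 := h1.2.2.1
          have q2 := h2.2.2.1
          obtain ⟨e1, f1⟩ := h1.2.1 c (by simp)
          obtain ⟨e2, f2⟩ := h2.2.1 d (by simp)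
          have e3 : r'.length = s'.length := by simpa using hl'
          simp only [List.length_cons] at f1 f2
          rcases lt_trichotomy c d with h | h | h
          · exact absurd (by rw [e3]; exact q2) (f1 d h e2)
          · simp [h]
          · exact absurd (by rw [← e3]; exact q1) (f2 c h e1)

lemma Chain.weak {η : Cfg} {l : ℤ → ℕ} {b : Bool} {r : List ℤ} (h : Chain η l b r)
    (Q : ℕ → ℤ → Prop) (hQ : ∀ j z, 1 ≤ j → (Q j z ↔ (l z = j ∧ η z = b))) : WChain Q r := by
  induction r with
  | nil => trivial
  | cons a r ih =>
    obtain ⟨h1, h2, h3, h4⟩ := h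
    refine ⟨(hQ _ _ (by omega)).2 ⟨h2, h1⟩, ?_, ih h4⟩
    intro a' ha'
    obtain ⟨p1, p2⟩ := h3 a' ha'
    refine ⟨p1, fun z z1 z2 hq => ?_⟩
    have := p2 z z1 z2
    rw [hQ _ _ (by omega)] at hq
    omega

lemma Chain.bit {η : Cfg} {l : ℤ → ℕ} {b : Bool} {r : List ℤ} (h : Chain η l b r) :
    ∀ a ∈ r, η a = b := by
  induction r with
  | nil => simp
  | cons a r ih =>
    intro z hz
    rw [List.mem_cons] at hz
    rcases hz with rfl | hz
    · exact h.1
    · exact ih h.2.2.2 z hz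

lemma Chain.span {η : Cfg} {l : ℤ → ℕ} {b : Bool} {r : List ℤ} (h : Chain η l b r) :
    ∀ a ∈ r.head?, ∀ z ∈ r, z ≤ a ∧ ∀ y, z ≤ y → y ≤ a → 1 ≤ l y ∧ l y ≤ r.length := by
  induction r with
  | nil => simp
  | cons a r ih =>
    obtain ⟨h1, h2, h3, h4⟩ := h
    intro a' ha' z hz
    have : a' = a := by simpa using ha'.symm
    subst this
    rw [List.mem_cons] at hz
    rcases hz with rfl | hz
    · refine ⟨le_rfl, fun y y1 y2 => ?_⟩
      have : y = z := by omega
      subst this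
      simp [h2]
    · cases r with
      | nil => simp at hz
      | cons c r' =>
        obtain ⟨p1, p2⟩ := h3 c (by simp)
        obtain ⟨q1, q2⟩ := ih h4 c (by simp) z hz
        refine ⟨by omega, fun y y1 y2 => ?_⟩
        simp only [List.length_cons] at *
        rcases le_or_gt y c with h | h
        · have := q2 y y1 h; omega
        · rcases eq_or_ne y a' with rfl | hne
          · omega
          · have := p2 y h (by omega); omega

lemma Chain.lab_head {η : Cfg} {l : ℤ → ℕ} {b : Bool} {r : List ℤ} (h : Chain η l b r) :
    ∀ a ∈ r.head?, l a = r.length := by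
  cases r with
  | nil => simp
  | cons c r => intro a ha; simp at ha; subst ha; exact h.2.1

section sol
variable {η : Cfg} {l : ℤ → ℕ} {w : ℤ → ℕ → Bool} {k : ℕ} {γ : Finset ℤ} {u d : ℤ}

lemma Sol.facts (hs : Sol η l w k γ u d) : l u = k ∧ l d = k ∧ η u = true ∧ η d = false ∧ u ≠ d ∧
    u ∈ γ ∧ d ∈ γ ∧ (∀ z ∈ γ, z ≤ max u d ∧ ∀ y, z ≤ y → y ≤ max u d → 1 ≤ l y ∧ l y ≤ k) ∧
    (∀ z ∈ headF η γ, z ≤ u) ∧ (∀ z ∈ tailF η γ, z ≤ d) ∧ u ∈ headF η γ ∧ d ∈ tailF η γ := by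
  obtain ⟨hl, tl, c1, c2, l1, l2, h1, h2, hγ, hm, hw⟩ := hs
  have hu : u ∈ hl := List.mem_of_mem_head? h1
  have hd : d ∈ tl := List.mem_of_mem_head? h2
  have eu := c1.bit u hu
  have ed := c2.bit d hd
  have lu := c1.lab_head u h1
  have ld := c2.lab_head d h2
  have hmu : u ∈ γ := by rw [hγ]; simp [hu]
  have hmd : d ∈ γ := by rw [hγ]; simp [hd]
  have hne : u ≠ d := by rintro rfl; rw [eu] at ed; simp at ed
  have k1 : 1 ≤ k := by
    rw [← l1]; exact List.length_pos_of_mem hu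
  refine ⟨by omega, by omega, eu, ed, hne, hmu, hmd, ?_, ?_, ?_, ?_, ?_⟩
  · intro z hz
    have hz' : z ∈ hl ∨ z ∈ tl := by rw [hγ] at hz; simpa using hz
    have : (z ≤ u ∧ ∀ y, z ≤ y → y ≤ u → 1 ≤ l y ∧ l y ≤ k) ∨ (z ≤ d ∧ ∀ y, z ≤ y → y ≤ d → 1 ≤ l y ∧ l y ≤ k) := by
      rcases hz' with h | h
      · left; rw [← l1]; exact c1.span u h1 z h
      · right; rw [← l2]; exact c2.span d h2 z h
    refine ⟨by omega, fun y y1 y2 => ?_⟩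
    by_cases hy : min u d < y ∧ y < max u d
    · have := hm y hy.1 hy.2; omega
    · by_cases hyu : y = u
      · subst hyu; omega
      by_cases hyd : y = d
      · subst hyd; omega
      rcases this with ⟨_, h⟩ | ⟨_, h⟩ <;> exact h y y1 (by omega)
  · intro z hz
    simp only [headF, Finset.mem_filter] at hz
    have hz' : z ∈ hl ∨ z ∈ tl := by rw [hγ] at hz; simpa using hz.1
    rcases hz' with h | h
    · exact (c1.span u h1 z h).1
    · have := c2.bit z h; rw [this] at hz; simp at hz
  · intro z hz
    simp only [tailF, Finset.mem_filter] at hz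
    have hz' : z ∈ hl ∨ z ∈ tl := by rw [hγ] at hz; simpa using hz.1
    rcases hz' with h | h
    · have := c1.bit z h; rw [this] at hz; simp at hz
    · exact (c2.span d h2 z h).1
  · simp [headF, hmu, eu]
  · simp [tailF, hmd, ed]

lemma Sol.between (hr : Rules η l w) (hs : Sol η l w k γ u d) :
    (∀ z, min u d < z → z < max u d → 1 ≤ l z ∧ l z < k) ∧
    (u < d → ∀ z, u ≤ z → z ≤ d → w z (k + 1) = false) ∧
    (d < u → ∀ z, d ≤ z → z ≤ u → w z (k + 1) = true) := by
  obtain ⟨lu, ld, eu, ed, hne, hmu, hmd, hspan, -⟩ := hs.facts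
  obtain ⟨hl, tl, c1, c2, l1, l2, h1, h2, hγ, hm, hw⟩ := hs
  have k1 : 1 ≤ k := by
    rw [← l1]; exact List.length_pos_of_mem (List.mem_of_mem_head? h1)
  refine ⟨hm, ?_, ?_⟩
  · intro hud z z1 z2
    have e1 := hr.const (k + 1) (by omega) z d z2 (by
      intro y y1 y2
      have := hspan u hmu
      have := this.2 y (by omega) (by omega)
      omega)
    rw [max_eq_right hud.le] at hw
    rw [← e1, ← hw, hr.post_le d (by omega) k (by omega), ed]
  · intro hud z z1 z2
    have e1 := hr.const (k + 1) (by omega) z u z2 (by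
      intro y y1 y2
      have := hspan d hmd
      have := this.2 y (by omega) (by omega)
      omega)
    rw [max_eq_left hud.le] at hw
    rw [← e1, ← hw, hr.post_le u (by omega) k (by omega), eu]

end sol

/-! ### Duality -/

section dual
variable {η η' : Cfg} {l l' : ℤ → ℕ} {w w' : ℤ → ℕ → Bool}

lemma dual_inv (hr : Rules η l w) (hr' : Rules η' l' w')
    (hη : ∀ x, η' x = if l x = 0 then false else !η x)
    (x : ℤ) (P : ∀ i, 1 ≤ i → w (x - 1) i = true → ∀ j, 1 ≤ j → j ≤ i → w' (x - 1) j = !w (x - 1) j) :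
    (∀ i, 1 ≤ i → w x i = true → ∀ j, 1 ≤ j → j ≤ i → w' x j = !w x j) ∧
    (1 ≤ l x → η x = false → l' x = l x) := by
  rcases Nat.eq_zero_or_pos (l x) with h0 | hpos
  · refine ⟨fun i hi hw => ?_, by omega⟩
    rw [hr.rec_post x h0] at hw; simp at hw
  have he' : η' x = !η x := by rw [hη, if_neg (by omega)]
  have hself := hr.pre_self x hpos
  cases hx : η x with
  | true =>
    rw [hx] at he' hself
    simp only [Bool.not_true] at he' hself
    refine ⟨?_, by simp⟩
    have hpre : ∀ j, 1 ≤ j → j < l x → w' (x - 1) j = false := by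
      intro j h1 h2
      have e1 := hr.pre_lt x j h1 h2
      rw [P j h1 (by rw [e1, hx]) j h1 le_rfl, e1, hx]; rfl
    intro i hi hw j hj hji
    rcases le_or_gt i (l x) with hil | hil
    · rw [hr.post_le x hpos j (by omega), hx]
      simp only [Bool.not_true]
      rcases Nat.eq_zero_or_pos (l' x) with h0' | hpos'
      · exact hr'.rec_post x h0' j
      · rcases le_or_gt j (l' x) with h | h
        · rw [hr'.post_le x hpos' j h, he']
        · have := hpre (l' x) hpos' (by omega)
          rw [hr'.pre_self x hpos', he'] at this
          simp at this
    · have hwi : w (x - 1) i = true := by rw [← hr.post_ne x i hi (by omega)]; exact hw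
      have hj' : w' (x - 1) (l x) = true := by
        rw [P i hi hwi (l x) hpos hil.le, hself]; rfl
      have hl' : l' x = l x := by
        rcases Nat.eq_zero_or_pos (l' x) with h0' | hpos'
        · rw [hr'.rec_pre x h0'] at hj'; simp at hj'
        · rcases lt_trichotomy (l' x) (l x) with h | h | h
          · have := hpre (l' x) hpos' h
            rw [hr'.pre_self x hpos', he'] at this
            simp at this
          · exact h
          · have := hr'.pre_lt x (l x) hpos h
            rw [this, he'] at hj'; simp at hj'
      by_cases hjl : j = l x
      · subst hjl
        rw [hr'.post_le x (by omega) _ (by omega), hr.post_le x hpos _ le_rfl, he', hx]; rfl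
      · rw [hr'.post_ne x j hj (by omega), hr.post_ne x j hj (by omega), P i hi hwi j hj hji]
  | false =>
    rw [hx] at he' hself
    simp only [Bool.not_false] at he' hself
    have hpos' : 1 ≤ l' x := by
      rcases Nat.eq_zero_or_pos (l' x) with h0' | h
      · rw [hr'.rec_eta x h0'] at he'; simp at he'
      · exact h
    have hl' : l' x = l x := by
      have a1 := P (l x) hpos hself
      rcases lt_trichotomy (l' x) (l x) with h | h | h
      · have := a1 (l' x) hpos' h.le
        rw [hr'.pre_self x hpos', he', hr.pre_lt x _ hpos' h, hx] at this
        simp at this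
      · exact h
      · have := a1 (l x) hpos le_rfl
        rw [hr'.pre_lt x _ hpos h, he', hself] at this
        simp at this
    refine ⟨?_, fun _ _ => hl'⟩
    intro i hi hw j hj hji
    have hil : l x < i := by
      by_contra h
      rw [hr.post_le x hpos i (by omega), hx] at hw; simp at hw
    have hwi : w (x - 1) i = true := by rw [← hr.post_ne x i hi (by omega)]; exact hw
    by_cases hjl : j = l x
    · subst hjl
      rw [hr'.post_le x (by omega) _ (by omega), hr.post_le x hpos _ le_rfl, he', hx]; rfl
    · rw [hr'.post_ne x j hj (by omega), hr.post_ne x j hj (by omega), P i hi hwi j hj hji]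

/-- pair of consecutive configurations. -/
structure Pair (η η' : Cfg) (l l' : ℤ → ℕ) (w w' : ℤ → ℕ → Bool) : Prop where
  r : Rules η l w
  r' : Rules η' l' w'
  eta : ∀ x, η' x = if l x = 0 then false else !η x
  dual : ∀ x i, 1 ≤ i → w x i = true → ∀ j, 1 ≤ j → j ≤ i → w' x j = !w x j
  lab : ∀ x, 1 ≤ l x → η x = false → l' x = l x

lemma Pair.back (h : Pair η η' l l' w w') (x : ℤ) (hx : η' x = true) :
    1 ≤ l x ∧ η x = false ∧ l' x = l x := by
  have e := h.eta x
  rw [hx] at e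
  split_ifs at e with h0
  have h1 : η x = false := by simpa using e.symm
  exact ⟨by omega, h1, h.lab x (by omega) h1⟩

lemma Pair.iff (h : Pair η η' l l' w w') (j : ℕ) (hj : 1 ≤ j) (x : ℤ) :
    (l' x = j ∧ η' x = true) ↔ (l x = j ∧ η x = false) := by
  constructor
  · rintro ⟨h1, h2⟩
    have := h.back x h2
    exact ⟨by omega, this.2.1⟩
  · rintro ⟨h1, h2⟩
    refine ⟨by rw [h.lab x (by omega) h2, h1], ?_⟩
    rw [h.eta, if_neg (by omega), h2]; rfl

end dual

lemma pair (η : Cfg) (hg : Good η) (hg' : Good (bbsT η)) :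
    Pair η (bbsT η) (lab η) (lab (bbsT η)) (W η) (W (bbsT η)) := by
  have r := rules η hg
  have r' := rules (bbsT η) hg'
  have eta : ∀ x, bbsT η x = if lab η x = 0 then false else !η x := by
    intro x
    by_cases h : isRecord η x
    · simp [bbsT, h, (lab_zero_iff η hg x).2 h]
    · simp [bbsT, h, mt (lab_zero_iff η hg x).1 h]
  have key : ∀ x, ∀ i, 1 ≤ i → W η x i = true → ∀ j, 1 ≤ j → j ≤ i → W (bbsT η) x j = !W η x j := by
    intro x
    refine good_induct η hg (fun x => ∀ i, 1 ≤ i → W η x i = true → ∀ j, 1 ≤ j → j ≤ i →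
      W (bbsT η) x j = !W η x j) ?_ ?_ x
    · intro x hx i hi hw
      rw [r.rec_post x ((lab_zero_iff η hg x).2 hx)] at hw; simp at hw
    · intro x P
      exact (dual_inv r r' eta x P).1
  exact ⟨r, r', eta, key, fun x => (dual_inv r r' eta x (key (x - 1))).2⟩

end Part5

section Part6

/-! ### Tracking of solitons -/

abbrev SolE (η : Cfg) (k : ℕ) (γ : Finset ℤ) (u d : ℤ) : Prop := Sol η (lab η) (W η) k γ u d

lemma gamma_sol (η : Cfg) (hg : Good η) (k : ℕ) (γ : Finset ℤ) (h : γ ∈ Gamma η k) :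
    ∃ u d s, SolE η k γ u d ∧ emitAt η (max u d) = some s ∧ γ = (s.map Prod.fst).toFinset ∧ 1 ≤ k := by
  obtain ⟨x, s, hs, hl, hγ⟩ := (gamma_iff η hg k γ).1 h
  obtain ⟨h1, h2, u, d, hm, hS⟩ := emitAt_sol η hg x s hs
  have hk : lab η x = k := by omega
  rw [hk, ← hγ] at hS
  exact ⟨u, d, s, hS, by rw [hm]; exact hs, hγ, by omega⟩

lemma close_sol (η : Cfg) (hg : Good η) (x : ℤ) (k : ℕ) (h1 : 1 ≤ k) (hk : lab η x = k)
    (hc : W η x k = W η x (k + 1)) :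
    ∃ γ ∈ Gamma η k, ∃ u d, max u d = x ∧ SolE η k γ u d := by
  have := (emitAt_iff η hg x).2 ⟨by omega, by rw [hk]; exact hc⟩
  obtain ⟨s, hs⟩ := Option.isSome_iff_exists.1 this
  obtain ⟨h1, h2, u, d, hm, hS⟩ := emitAt_sol η hg x s hs
  rw [hk] at hS h1
  exact ⟨_, (gamma_iff η hg k _).2 ⟨x, s, hs, h1, rfl⟩, u, d, hm, hS⟩

lemma exists_next (P : ℤ → Prop) (a : ℤ) (h : ∃ z, a < z ∧ P z) :
    ∃ z, a < z ∧ P z ∧ ∀ y, a < y → y < z → ¬ P y := by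
  classical
  obtain ⟨z0, h0, hz0⟩ := h
  have hex : ∃ n : ℕ, P (a + 1 + n) := ⟨(z0 - a - 1).toNat, by
    have : a + 1 + ((z0 - a - 1).toNat : ℤ) = z0 := by omega
    rwa [this]⟩
  refine ⟨a + 1 + Nat.find hex, by omega, Nat.find_spec hex, ?_⟩
  intro y y1 y2 hy
  apply Nat.find_min hex (m := (y - a - 1).toNat) (by omega)
  have : a + 1 + ((y - a - 1).toNat : ℤ) = y := by omega
  rwa [this]

/-- there is a later event of the same label when the state is `true` -/
lemma exists_later (η : Cfg) (hg : Good η) (x : ℤ) (k : ℕ) (hk : 1 ≤ k) (hw : W η x k = true) :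
    ∃ z, x < z ∧ lab η z = k := by
  have r := rules η hg
  obtain ⟨y, hy, hyr⟩ := (hg (x + 1)).2
  rw [← lab_zero_iff η hg] at hyr
  obtain ⟨z, z1, z2, z3, z4⟩ := r.event k hk false x y (by omega) (by simpa using hw) (r.rec_post y hyr k)
  exact ⟨z, z1, z3⟩

lemma track_close (η : Cfg) (hg : Good η) (hg' : Good (bbsT η)) (k : ℕ) (hk : 1 ≤ k)
    (γ : Finset ℤ) (u d : ℤ) (hs : SolE η k γ u d) :
    ∃ γ' ∈ Gamma (bbsT η) k, ∃ d', SolE (bbsT η) k γ' d d' := by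
  have P := pair η hg hg'
  obtain ⟨lu, ld, eu, ed, hne, hmu, hmd, hspan, -⟩ := hs.facts
  obtain ⟨bt, b1, b2⟩ := hs.between P.r
  obtain ⟨ld', ed'⟩ := (P.iff k hk d).2 ⟨ld, ed⟩
  have wd' : W (bbsT η) d k = true := by rw [P.r'.post_le d (by omega) k (by omega), ed']
  cases hw : W (bbsT η) d (k + 1) with
  | true =>
    obtain ⟨γ', hγ', u'', d'', hm, hS⟩ := close_sol (bbsT η) hg' d k hk ld' (by rw [wd', hw])
    refine ⟨γ', hγ', d'', ?_⟩
    have f := hS.facts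
    have : u'' = d := by
      rcases max_choice u'' d'' with h | h
      · omega
      · have e : d'' = d := by omega
        rw [e] at f
        rw [f.2.2.2.1] at ed'; simp at ed'
    rwa [this] at hS
  | false =>
    obtain ⟨z0, hz0, hz0'⟩ := exists_later (bbsT η) hg' d k hk wd'
    obtain ⟨e, e1, e2, e3⟩ := exists_next (fun z => lab (bbsT η) z = k ∨ lab (bbsT η) z = k + 1) d
      ⟨z0, hz0, Or.inl hz0'⟩
    have hwe : W (bbsT η) (e - 1) k = true := by
      rw [P.r'.const k hk d (e - 1) (by omega) (fun z z1 z2 h => e3 z z1 (by omega) (Or.inl h)), wd']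
    have noDn : ∀ g, d < g → g < e → ¬ (lab η g = k ∧ η g = false) := by
      intro g g1 g2 h
      exact e3 g g1 g2 (Or.inl ((P.iff k hk g).2 h).1)
    rcases e2 with e2 | e2
    · have ee : bbsT η e = false := by
        have := P.r'.pre_self e (by omega)
        rw [e2, hwe] at this
        simpa using this.symm
      have c1 : W (bbsT η) e k = false := by rw [P.r'.post_le e (by omega) k (by omega), ee]
      have c2 : W (bbsT η) e (k + 1) = false := by
        rw [P.r'.const (k + 1) (by omega) d e (by omega), hw]
        intro z z1 z2 h
        rcases eq_or_ne z e with rfl | hne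
        · omega
        · exact e3 z z1 (by omega) (Or.inr h)
      obtain ⟨γ', hγ', u'', d'', hm, hS⟩ := close_sol (bbsT η) hg' e k hk e2 (by rw [c1, c2])
      refine ⟨γ', hγ', d'', ?_⟩
      have f := hS.facts
      have g := (hS.between P.r').1
      have hd'' : d'' = e := by
        rcases max_choice u'' d'' with h | h
        · have h' : u'' = e := by omega
          rw [h'] at f
          rw [f.2.2.1] at ee; simp at ee
        · omega
      have hlt : u'' < e := by have := f.2.2.2.2.1; omega
      have : u'' = d := by
        rcases lt_trichotomy u'' d with h | h | h
        · have := g d (by omega) (by omega); omega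
        · exact h
        · exact absurd (Or.inl f.1) (e3 u'' h hlt)
      rwa [this] at hS
    · exfalso
      have ee : bbsT η e = true := by rw [← P.r'.pre_lt e k hk (by omega), hwe]
      obtain ⟨le, ηe⟩ := (P.iff (k + 1) (by omega) e).1 ⟨e2, ee⟩
      have p1 : W η (e - 1) (k + 1) = true := by
        have := P.r.pre_self e (by omega)
        rw [le, ηe] at this
        exact this
      have p2 : W η (e - 1) k = false := by rw [P.r.pre_lt e k hk (by omega), ηe]
      rcases lt_or_gt_of_ne hne with h | h
      · have q := b1 h d h.le le_rfl
        obtain ⟨f, f1, f2, f3, f4⟩ := P.r.event (k + 1) (by omega) true d (e - 1) (by omega)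
          (by simpa using q) p1
        have q2 : W η f k = true := by rw [P.r.post_le f (by omega) k (by omega), f4]
        obtain ⟨g, g1, g2, g3, g4⟩ := P.r.event k hk false f (e - 1) (by omega) (by simpa using q2) p2
        exact noDn g (by omega) (by omega) ⟨g3, g4⟩
      · have hue : u < e := by
          by_contra hc
          rcases eq_or_ne e u with h' | h'
          · rw [h'] at le; omega
          · have := bt e (by omega) (by omega); omega
        have q2 : W η u k = true := by rw [P.r.post_le u (by omega) k (by omega), eu]
        obtain ⟨g, g1, g2, g3, g4⟩ := P.r.event k hk false u (e - 1) (by omega) (by simpa using q2) p2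
        exact noDn g (by omega) (by omega) ⟨g3, g4⟩

lemma track (η : Cfg) (hg : Good η) (hg' : Good (bbsT η)) (k : ℕ)
    (γ : Finset ℤ) (h : γ ∈ Gamma η k) :
    ∃ γ' ∈ Gamma (bbsT η) k, headF (bbsT η) γ' = tailF η γ := by
  obtain ⟨u, d, s, hs, -, -, hk⟩ := gamma_sol η hg k γ h
  obtain ⟨γ', hγ', d', hs'⟩ := track_close η hg hg' k hk γ u d hs
  refine ⟨γ', hγ', ?_⟩
  have P := pair η hg hg'
  obtain ⟨hl, tl, c1, c2, l1, l2, h1, h2, hγ, -⟩ := hs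
  obtain ⟨hl', tl', c1', c2', l1', l2', h1', h2', hγ', -⟩ := hs'
  have : hl' = tl := by
    refine WChain_unique (fun j z => lab η z = j ∧ η z = false) _ _ (c1'.weak _ ?_) (c2.weak _ ?_)
      (by omega) (by rw [h1', h2])
    · intro j z hj
      exact (P.iff j hj z).symm
    · intro j z hj; rfl
  ext z
  simp only [headF, tailF, Finset.mem_filter, hγ, hγ', Finset.mem_union, List.mem_toFinset]
  constructor
  · rintro ⟨h | h, h'⟩
    · rw [this] at h
      exact ⟨Or.inr h, c2.bit z h⟩
    · rw [c2'.bit z h] at h'; simp at h'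
  · rintro ⟨h | h, h'⟩
    · rw [c1.bit z h] at h'; simp at h'
    · rw [← this] at h
      exact ⟨Or.inl h, c1'.bit z h⟩

theorem traj (η : Cfg) (hg : ∀ t : ℕ, Good (bbsT^[t] η)) (k : ℕ) (γ : Finset ℤ) (h : γ ∈ Gamma η k) :
    ∃ u : ℕ → ℤ, ∀ t, SolE (bbsT^[t] η) k (solTraj η k γ t) (u t) (u (t + 1)) := by
  have key : ∀ t, solTraj η k γ t ∈ Gamma (bbsT^[t] η) k ∧
      headF (bbsT^[t + 1] η) (solTraj η k γ (t + 1)) = tailF (bbsT^[t] η) (solTraj η k γ t) ∧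
      solTraj η k γ (t + 1) ∈ Gamma (bbsT^[t + 1] η) k := by
    have step : ∀ t, solTraj η k γ t ∈ Gamma (bbsT^[t] η) k →
      headF (bbsT^[t + 1] η) (solTraj η k γ (t + 1)) = tailF (bbsT^[t] η) (solTraj η k γ t) ∧
      solTraj η k γ (t + 1) ∈ Gamma (bbsT^[t + 1] η) k := by
      intro t ht
      have hit : bbsT^[t + 1] η = bbsT (bbsT^[t] η) := Function.iterate_succ_apply' _ _ _
      have hg' := hg (t + 1)
      have ex : ∃ γ' ∈ Gamma (bbsT^[t + 1] η) k,
        headF (bbsT^[t + 1] η) γ' = tailF (bbsT^[t] η) (solTraj η k γ t) := by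
        rw [hit] at hg' ⊢
        exact track _ (hg t) hg' k _ ht
      have e : solTraj η k γ (t + 1) = ex.choose := by
        rw [solTraj, dif_pos ex]
      rw [e]
      exact ⟨ex.choose_spec.2, ex.choose_spec.1⟩
    intro t
    induction t with
    | zero => exact ⟨h, step 0 h⟩
    | succ t ih => exact ⟨ih.2.2, step _ ih.2.2⟩
  have hsol : ∀ t, ∃ u d, SolE (bbsT^[t] η) k (solTraj η k γ t) u d := by
    intro t
    obtain ⟨u, d, s, hs, -⟩ := gamma_sol _ (hg t) k _ (key t).1
    exact ⟨u, d, hs⟩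
  choose u d hud using hsol
  refine ⟨u, fun t => ?_⟩
  have : u (t + 1) = d t := by
    obtain ⟨-, -, -, -, -, -, -, -, m1, -, m2, -⟩ := (hud (t + 1)).facts
    obtain ⟨-, -, -, -, -, -, -, -, -, n1, -, n2⟩ := (hud t).facts
    rw [(key t).2.1] at m1 m2
    exact le_antisymm (n1 _ m2) (m1 _ n2)
  rw [this]
  exact hud t

end Part6

section Part7

/-! ### Shift covariance -/

lemma isRecord_shift (n : ℤ) (η : Cfg) (x : ℤ) : isRecord (shiftBy n η) x ↔ isRecord η (x + n) := by
  have key : ∀ (g : ℤ → ℤ) (z : ℤ), ∑ y ∈ Finset.Icc z x, g (y + n) = ∑ y ∈ Finset.Icc (z + n) (x + n), g y := by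
    intro g z
    refine Finset.sum_bij (fun y _ => y + n) ?_ ?_ ?_ ?_
    · intro a ha; simp only [Finset.mem_Icc] at *; omega
    · intro a _ b _ h; simpa using h
    · intro b hb; exact ⟨b - n, by simp only [Finset.mem_Icc] at *; omega, by ring⟩
    · intro a _; rfl
  unfold isRecord shiftBy
  constructor
  · intro h z hz
    have := h (z - n) (by omega)
    rw [key (fun y => valZ (η y)), key (fun y => 1 - valZ (η y))] at this
    simpa using this
  · intro h z hz
    have := h (z + n) (by omega)
    rw [key (fun y => valZ (η y)), key (fun y => 1 - valZ (η y))]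
    simpa using this

lemma good_shift (n : ℤ) (η : Cfg) (h : Good η) : Good (shiftBy n η) := by
  intro x
  obtain ⟨⟨y, h1, h2⟩, ⟨z, h3, h4⟩⟩ := h (x + n)
  refine ⟨⟨y - n, by omega, ?_⟩, ⟨z - n, by omega, ?_⟩⟩
  · rw [isRecord_shift]; simpa using h2
  · rw [isRecord_shift]; simpa using h4

lemma bbsT_shift (n : ℤ) (η : Cfg) : bbsT (shiftBy n η) = shiftBy n (bbsT η) := by
  funext x
  by_cases h : isRecord η (x + n)
  · have h2 := (isRecord_shift n η x).2 h
    simp [bbsT, shiftBy, h]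
    intro h3; exact absurd h2 h3
  · have h2 := mt (isRecord_shift n η x).1 h
    simp only [bbsT, shiftBy, h, if_false]
    exact if_neg h2

lemma bbsT_iter_shift (n : ℤ) (t : ℕ) (η : Cfg) : bbsT^[t] (shiftBy n η) = shiftBy n (bbsT^[t] η) := by
  induction t with
  | zero => rfl
  | succ t ih => rw [Function.iterate_succ_apply', Function.iterate_succ_apply', ih, bbsT_shift]

lemma rules_unique (η : Cfg) (hg : Good η) (l l2 : ℤ → ℕ) (w w2 : ℤ → ℕ → Bool)
    (r : Rules η l w) (r2 : Rules η l2 w2) (h1 : ∀ x, l x = 0 ↔ isRecord η x)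
    (h2 : ∀ x, l2 x = 0 ↔ isRecord η x) (x : ℤ) : l x = l2 x ∧ ∀ i, 1 ≤ i → w x i = w2 x i := by
  have step : ∀ x, (∀ i, 1 ≤ i → w (x - 1) i = w2 (x - 1) i) →
      l x = l2 x ∧ ∀ i, 1 ≤ i → w x i = w2 x i := by
    intro x ih
    by_cases hr : isRecord η x
    · have a1 := (h1 x).2 hr
      have a2 := (h2 x).2 hr
      exact ⟨by omega, fun i _ => by rw [r.rec_post x a1, r2.rec_post x a2]⟩
    · have a1 : 1 ≤ l x := Nat.one_le_iff_ne_zero.2 (mt (h1 x).1 hr)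
      have a2 : 1 ≤ l2 x := Nat.one_le_iff_ne_zero.2 (mt (h2 x).1 hr)
      have e : l x = l2 x := by
        rcases lt_trichotomy (l x) (l2 x) with h | h | h
        · have := r2.pre_lt x (l x) a1 h
          rw [← ih _ a1, r.pre_self x a1] at this
          cases hh : η x <;> simp [hh] at this
        · exact h
        · have := r.pre_lt x (l2 x) a2 h
          rw [ih _ a2, r2.pre_self x a2] at this
          cases hh : η x <;> simp [hh] at this
      refine ⟨e, fun i hi => ?_⟩
      by_cases hil : i = l x
      · rw [r.post_le x a1 i (by omega), r2.post_le x a2 i (by omega)]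
      · rw [r.post_ne x i hi hil, r2.post_ne x i hi (by omega), ih i hi]
  have key : ∀ x, ∀ i, 1 ≤ i → w x i = w2 x i := by
    intro x
    refine good_induct η hg (fun x => ∀ i, 1 ≤ i → w x i = w2 x i) ?_ (fun x ih => (step x ih).2) x
    intro x hx i _
    rw [r.rec_post x ((h1 x).2 hx), r2.rec_post x ((h2 x).2 hx)]
  exact step x (key (x - 1))

lemma cov (n : ℤ) (η : Cfg) (hg : Good η) (x : ℤ) : lab (shiftBy n η) x = lab η (x + n) ∧
    ∀ i, 1 ≤ i → W (shiftBy n η) x i = W η (x + n) i := by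
  have r := rules η hg
  have hg' := good_shift n η hg
  refine rules_unique (shiftBy n η) hg' (lab (shiftBy n η)) (fun x => lab η (x + n))
    (W (shiftBy n η)) (fun x i => W η (x + n) i) (rules _ hg') ?_ (lab_zero_iff _ hg') ?_ x
  · have e : ∀ x : ℤ, x - 1 + n = x + n - 1 := fun x => by ring
    refine ⟨fun x => r.rec_eta (x + n), ?_, fun x => r.rec_post (x + n), ?_,
      fun x => r.post_le (x + n), ?_⟩
    · intro x hx i; simp only [e]; exact r.rec_pre (x + n) hx i
    · intro x hx; simp only [e]; exact r.pre_self (x + n) hx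
    · intro x i h1 h2; simp only [e]; exact r.post_ne (x + n) i h1 h2
  · intro x
    rw [isRecord_shift, lab_zero_iff η hg]

/-! ### Signed partial sums -/

noncomputable def sgs (f : ℤ → ℝ) (n : ℤ) : ℝ := ∑ x ∈ Finset.Ioc 0 n, f x - ∑ x ∈ Finset.Ioc n 0, f x

lemma sgs_zero (f : ℤ → ℝ) : sgs f 0 = 0 := by simp [sgs]

lemma sgs_step (f : ℤ → ℝ) (n : ℤ) : sgs f n = sgs f (n - 1) + f n := by
  unfold sgs
  rcases le_or_gt n 0 with h | h
  · have e1 : Finset.Ioc 0 n = ∅ := Finset.Ioc_eq_empty (by omega)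
    have e2 : Finset.Ioc 0 (n - 1) = ∅ := Finset.Ioc_eq_empty (by omega)
    have e3 : Finset.Ioc (n - 1) 0 = insert n (Finset.Ioc n 0) := by
      ext y; simp only [Finset.mem_Ioc, Finset.mem_insert]; omega
    rw [e1, e2, e3, Finset.sum_insert (by simp)]
    ring
  · have e1 : Finset.Ioc n 0 = ∅ := Finset.Ioc_eq_empty (by omega)
    have e2 : Finset.Ioc (n - 1) 0 = ∅ := Finset.Ioc_eq_empty (by omega)
    have e3 : Finset.Ioc 0 n = insert n (Finset.Ioc 0 (n - 1)) := by
      ext y; simp only [Finset.mem_Ioc, Finset.mem_insert]; omega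
    rw [e1, e2, e3, Finset.sum_insert (by simp)]
    ring

lemma int_ext_of_step (g h : ℤ → ℝ) (h0 : g 0 = h 0) (hs : ∀ n, g n - g (n - 1) = h n - h (n - 1)) (n : ℤ) :
    g n = h n := by
  induction n using Int.induction_on with
  | zero => exact h0
  | succ i ih => have := hs (i + 1); rw [add_sub_cancel_right] at this; linarith
  | pred i ih => have := hs (-i); linarith

lemma sgs_sub (f : ℤ → ℝ) (a b : ℤ) (hab : a ≤ b) : sgs f b - sgs f a = ∑ x ∈ Finset.Ioc a b, f x := by
  induction b, hab using Int.leInduction with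
  | base => simp
  | succ b hb ih =>
    have e3 : Finset.Ioc a (b + 1) = insert (b + 1) (Finset.Ioc a b) := by
      ext y; simp only [Finset.mem_Ioc, Finset.mem_insert]; omega
    rw [e3, Finset.sum_insert (by simp), ← ih, sgs_step f (b + 1), add_sub_cancel_right]
    ring

lemma sgs_shift (f : ℤ → ℝ) (n m : ℤ) : sgs f (n + m) = sgs f n + sgs (fun x => f (x + n)) m := by
  refine int_ext_of_step (fun m => sgs f (n + m)) (fun m => sgs f n + sgs (fun x => f (x + n)) m) ?_ ?_ m
  · simp [sgs_zero]
  · intro m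
    have h1 := sgs_step f (n + m)
    have h2 := sgs_step (fun x => f (x + n)) m
    have : n + (m - 1) = n + m - 1 := by ring
    simp only [this]
    rw [h1, h2, add_comm m n]; ring

lemma sgs_bound (f : ℤ → ℝ) (C : ℝ) (hf : ∀ x, |f x| ≤ C) (n : ℤ) : |sgs f n| ≤ C * |(n : ℝ)| := by
  have key : ∀ a b : ℤ, a ≤ b → |sgs f b - sgs f a| ≤ C * (b - a) := by
    intro a b hab
    rw [sgs_sub f a b hab]
    refine (Finset.abs_sum_le_sum_abs _ _).trans ((Finset.sum_le_sum (fun i _ => hf i)).trans ?_)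
    rw [Finset.sum_const, Int.card_Ioc, nsmul_eq_mul]
    have : (((b - a).toNat : ℕ) : ℝ) = (b : ℝ) - a := by
      have h : (((b - a).toNat : ℕ) : ℤ) = b - a := by omega
      exact_mod_cast h
    rw [this]; linarith
  rcases le_total 0 n with h | h
  · have := key 0 n h
    rw [sgs_zero] at this
    have h' : (0 : ℝ) ≤ n := by exact_mod_cast h
    rw [abs_of_nonneg h']
    simpa using this
  · have := key n 0 h
    rw [sgs_zero] at this
    have h' : (n : ℝ) ≤ 0 := by exact_mod_cast h
    rw [abs_of_nonpos h']
    simpa using this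

lemma sgs_neg (f : ℤ → ℝ) (n : ℤ) : sgs (fun x => - f x) n = - sgs f n := by
  unfold sgs; simp only [Finset.sum_neg_distrib]; ring

/-! ### Conservation laws -/

open Classical in
noncomputable def fK (k : ℕ) (η : Cfg) (x : ℤ) : ℝ := if lab η x = 0 ∨ k < lab η x then 1 else 0

noncomputable def hK (k : ℕ) (η : Cfg) (x : ℤ) : ℝ :=
  k - ∑ j ∈ Finset.Icc 1 k, (valR (W η x j) + valR (W (bbsT η) x j))

noncomputable def upI (j : ℕ) (η : Cfg) (x : ℤ) : ℝ := if lab η x = j ∧ η x = true then 1 else 0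
noncomputable def dnI (j : ℕ) (η : Cfg) (x : ℤ) : ℝ := if lab η x = j ∧ η x = false then 1 else 0

noncomputable def fB (m : ℕ) (η : Cfg) (x : ℤ) : ℝ := upI m η x - upI (m + 1) η x

noncomputable def hB (m : ℕ) (η : Cfg) (x : ℤ) : ℝ := valR (W η x m) - valR (W η x (m + 1))

lemma W_diff (η : Cfg) (hg : Good η) (j : ℕ) (hj : 1 ≤ j) (x : ℤ) :
    valR (W η x j) - valR (W η (x - 1) j) = upI j η x - dnI j η x := by
  have r := rules η hg
  by_cases h : lab η x = j
  · have h1 := r.post_le x (by omega) j (by omega)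
    have h2 := r.pre_self x (by omega)
    rw [h] at h2
    rw [h1, h2]
    cases hh : η x <;> simp [upI, dnI, h, hh, valR]
  · rw [r.post_ne x j hj (fun e => h e.symm)]
    simp [upI, dnI, h]

lemma up_next (η : Cfg) (hg : Good η) (hg' : Good (bbsT η)) (j : ℕ) (hj : 1 ≤ j) (x : ℤ) :
    upI j (bbsT η) x = dnI j η x := by
  unfold upI dnI
  simp only [(pair η hg hg').iff j hj x]

lemma consB (η : Cfg) (hg : Good η) (hg' : Good (bbsT η)) (m : ℕ) (hm : 1 ≤ m) (x : ℤ) :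
    fB m (bbsT η) x - fB m η x = hB m η (x - 1) - hB m η x := by
  unfold fB hB
  rw [up_next η hg hg' m hm, up_next η hg hg' (m + 1) (by omega)]
  have h1 := W_diff η hg m hm x
  have h2 := W_diff η hg (m + 1) (by omega) x
  linarith

lemma fK_eq (η : Cfg) (k : ℕ) (x : ℤ) :
    fK k η x = 1 - ∑ j ∈ Finset.Icc 1 k, (upI j η x + dnI j η x) := by
  have : ∀ j, upI j η x + dnI j η x = if lab η x = j then (1 : ℝ) else 0 := by
    intro j
    unfold upI dnI
    cases η x <;> by_cases h : lab η x = j <;> simp [h]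
  simp only [this, Finset.sum_ite_eq, Finset.mem_Icc, fK]
  by_cases h : lab η x = 0 ∨ k < lab η x
  · rw [if_pos h, if_neg (by omega)]; ring
  · rw [if_neg h, if_pos (by omega)]; ring

lemma consK (η : Cfg) (hg : Good η) (hg' : Good (bbsT η)) (k : ℕ) (x : ℤ) :
    fK k (bbsT η) x - fK k η x = hK k η (x - 1) - hK k η x := by
  rw [fK_eq, fK_eq]
  unfold hK
  have : ∑ j ∈ Finset.Icc 1 k, (upI j η x + dnI j η x) - ∑ j ∈ Finset.Icc 1 k, (upI j (bbsT η) x + dnI j (bbsT η) x)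
      = ∑ j ∈ Finset.Icc 1 k, (valR (W η x j) + valR (W (bbsT η) x j)) -
       ∑ j ∈ Finset.Icc 1 k, (valR (W η (x - 1) j) + valR (W (bbsT η) (x - 1) j)) := by
    rw [← Finset.sum_sub_distrib, ← Finset.sum_sub_distrib]
    refine Finset.sum_congr rfl fun j hj => ?_
    have hj1 := (Finset.mem_Icc.1 hj).1
    have h1 := W_diff η hg j hj1 x
    have h2 := W_diff (bbsT η) hg' j hj1 x
    have h3 := up_next η hg hg' j hj1 x
    linarith
  linarith

/-- along a soliton: `K` -/
lemma keyK (η : Cfg) (hg : Good η) (hg' : Good (bbsT η)) (k : ℕ) (hk : 1 ≤ k) (γ : Finset ℤ) (u d : ℤ)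
    (hs : SolE η k γ u d) : hK k η d = 0 ∧ (∀ z ∈ γ, sgs (fK k η) z = sgs (fK k η) (max u d)) := by
  have P := pair η hg hg'
  obtain ⟨lu, ld, eu, ed, hne, hmu, hmd, hspan, -⟩ := hs.facts
  obtain ⟨ld', ed'⟩ := (P.iff k hk d).2 ⟨ld, ed⟩
  constructor
  · have : ∀ j ∈ Finset.Icc 1 k, valR (W η d j) + valR (W (bbsT η) d j) = 1 := by
      intro j hj
      have hj := Finset.mem_Icc.1 hj
      rw [P.r.post_le d (by omega) j (by omega), P.r'.post_le d (by omega) j (by omega), ed, ed']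
      simp [valR]
    unfold hK
    rw [Finset.sum_congr rfl this]
    simp
  · intro z hz
    obtain ⟨h1, h2⟩ := hspan z hz
    have := sgs_sub (fK k η) z (max u d) h1
    rw [Finset.sum_eq_zero] at this
    · linarith
    · intro y hy
      have hy := Finset.mem_Ioc.1 hy
      have := h2 y (by omega) (by omega)
      unfold fK
      rw [if_neg (by omega)]

lemma keyK' (η : Cfg) (hg : Good η) (hg' : Good (bbsT η)) (k : ℕ) (hk : 1 ≤ k) (γ : Finset ℤ) (u d : ℤ)
    (hs : SolE η k γ u d) : sgs (fK k η) d - sgs (fK k η) u = hK k η d := by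
  obtain ⟨h1, h2⟩ := keyK η hg hg' k hk γ u d hs
  obtain ⟨lu, ld, eu, ed, hne, hmu, hmd, -⟩ := hs.facts
  rw [h1, h2 u hmu, h2 d hmd]; ring

lemma keyB (η : Cfg) (hg : Good η) (k : ℕ) (hk : 1 ≤ k) (γ : Finset ℤ) (u d : ℤ)
    (hs : SolE η k γ u d) : sgs (fB k η) d - sgs (fB k η) u = hB k η d := by
  have r := rules η hg
  obtain ⟨lu, ld, eu, ed, hne, hmu, hmd, hspan, -⟩ := hs.facts
  obtain ⟨bt, b1, b2⟩ := hs.between r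
  have wd : W η d k = false := by rw [r.post_le d (by omega) k (by omega), ed]
  have hz : ∀ z, min u d < z → z < max u d → fB k η z = 0 := by
    intro z z1 z2
    have := bt z z1 z2
    unfold fB upI
    rw [if_neg (by omega), if_neg (by omega)]; ring
  rcases lt_or_gt_of_ne hne with h | h
  · rw [sgs_sub _ _ _ h.le, Finset.sum_eq_zero]
    · simp [hB, wd, b1 h d h.le le_rfl]
    · intro z hzz
      have hzz := Finset.mem_Ioc.1 hzz
      rcases eq_or_ne z d with rfl | h'
      · unfold fB upI
        simp [ed]
      · exact hz z (by omega) (by omega)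
  · have := sgs_sub (fB k η) _ _ h.le
    rw [Finset.sum_eq_single u] at this
    · have e : fB k η u = 1 := by
        unfold fB upI; simp [eu, lu]
      rw [e] at this
      simp only [hB, wd, b2 h d le_rfl h.le, valR]
      simp; linarith
    · intro z hzz hne
      have hzz := Finset.mem_Ioc.1 hzz
      exact hz z (by omega) (by omega)
    · intro hc; exact absurd (Finset.mem_Ioc.2 ⟨h, le_rfl⟩) hc

end Part7

section Part8

/-! ### Maximal ergodic lemma (Garsia) -/

section garsia
variable {α : Type*} [MeasurableSpace α]

def gM (S : α → α) (g : α → ℝ) : ℕ → α → ℝ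
  | 0, _ => 0
  | n + 1, x => max 0 (g x + gM S g n (S x))

lemma gM_nonneg (S : α → α) (g : α → ℝ) (n : ℕ) (x : α) : 0 ≤ gM S g n x := by
  cases n <;> simp [gM]

lemma gM_mono (S : α → α) (g : α → ℝ) (n : ℕ) : ∀ x, gM S g n x ≤ gM S g (n + 1) x := by
  induction n with
  | zero => intro x; exact gM_nonneg S g 1 x
  | succ n ih =>
    intro x
    rw [gM, gM]
    exact max_le_max le_rfl (by linarith [ih (S x)])

lemma gM_le (S : α → α) (g : α → ℝ) (C : ℝ) (hC : ∀ x, |g x| ≤ C) (n : ℕ) : ∀ x, gM S g n x ≤ n * C := by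
  induction n with
  | zero => intro x; simp [gM]
  | succ n ih =>
    intro x
    have h0 : 0 ≤ C := (abs_nonneg _).trans (hC x)
    rw [gM]
    refine max_le (by positivity) ?_
    have := ih (S x)
    have := (abs_le.1 (hC x)).2
    push_cast
    linarith

lemma gM_birkhoff (S : α → α) (g : α → ℝ) (n : ℕ) : ∀ x, birkhoffSum S g n x ≤ gM S g n x := by
  induction n with
  | zero => intro x; simp [gM]
  | succ n ih =>
    intro x
    rw [gM, birkhoffSum_succ']
    exact (by linarith [ih (S x)] : _ ≤ g x + gM S g n (S x)).trans (le_max_right _ _)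

lemma gM_meas (S : α → α) (hS : Measurable S) (g : α → ℝ) (hg : Measurable g) (n : ℕ) :
    Measurable (gM S g n) := by
  induction n with
  | zero => exact measurable_const
  | succ n ih => exact measurable_const.max (hg.add (ih.comp hS))

theorem garsia (μ : Measure α) [IsProbabilityMeasure μ] (S : α → α) (hS : MeasurePreserving S μ μ)
    (g : α → ℝ) (hg : Measurable g) (C : ℝ) (hC : ∀ x, |g x| ≤ C)
    (h : ∀ᵐ x ∂μ, ∃ n, 0 < birkhoffSum S g n x) : 0 ≤ ∫ x, g x ∂μ := by
  have h0 : 0 ≤ C := by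
    obtain ⟨x⟩ : Nonempty α := by
      by_contra hc
      rw [not_nonempty_iff] at hc
      have : μ Set.univ = 0 := by rw [Set.univ_eq_empty_iff.2 hc]; simp
      simp at this
    exact (abs_nonneg _).trans (hC x)
  have hM : ∀ n, Measurable (gM S g n) := gM_meas S hS.measurable g hg
  have hMi : ∀ n, Integrable (gM S g n) μ := by
    intro n
    refine Integrable.of_bound (hM n).aestronglyMeasurable (n * C) (Eventually.of_forall fun x => ?_)
    rw [Real.norm_eq_abs, abs_of_nonneg (gM_nonneg S g n x)]
    exact gM_le S g C hC n x
  have hgi : Integrable g μ := Integrable.of_bound hg.aestronglyMeasurable C (Eventually.of_forall hC)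
  let E : ℕ → Set α := fun n => {x | gM S g (n + 1) x ≤ 0}
  have hE : ∀ n, MeasurableSet (E n) := fun n => measurableSet_le (hM _) measurable_const
  have key : ∀ n, 0 ≤ ∫ x, g x ∂μ + C * μ.real (E n) := by
    intro n
    have pt : ∀ x, gM S g (n + 1) x ≤ g x + (E n).indicator (fun _ => C) x + gM S g n (S x) := by
      intro x
      by_cases hx : x ∈ E n
      · rw [Set.indicator_of_mem hx]
        have h1 : gM S g (n + 1) x ≤ 0 := hx
        have h2 := (abs_le.1 (hC x)).1
        have h3 := gM_nonneg S g n (S x)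
        linarith
      · rw [Set.indicator_of_notMem hx]
        have h1 : 0 < gM S g (n + 1) x := not_le.1 hx
        rw [gM] at h1 ⊢
        rcases lt_max_iff.1 h1 with h2 | h2
        · exact absurd h2 (lt_irrefl _)
        · rw [max_eq_right h2.le]; linarith
    have hind : Integrable ((E n).indicator (fun _ => C)) μ := (integrable_const C).indicator (hE n)
    have hcomp : Integrable (fun x => gM S g n (S x)) μ := hS.integrable_comp_of_integrable (hMi n)
    have i1 := integral_mono (hMi (n + 1)) ((hgi.add hind).add hcomp) pt
    have i2 : ∫ x, (g x + (E n).indicator (fun _ => C) x + gM S g n (S x)) ∂μ =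
        ∫ x, g x ∂μ + C * μ.real (E n) + ∫ x, gM S g n x ∂μ := by
      rw [integral_add (f := fun x => g x + (E n).indicator (fun _ => C) x) (hgi.add hind) hcomp,
        integral_add hgi hind, integral_indicator_const _ (hE n)]
      have : ∫ x, gM S g n (S x) ∂μ = ∫ x, gM S g n x ∂μ := by
        rw [← integral_map (f := gM S g n) hS.measurable.aemeasurable (hM n).aestronglyMeasurable, hS.map_eq]
      rw [this, smul_eq_mul, mul_comm]
    have i3 := integral_mono (hMi n) (hMi (n + 1)) (gM_mono S g n)
    have i4 : ∫ x, gM S g (n + 1) x ∂μ ≤ ∫ x, (g x + (E n).indicator (fun _ => C) x + gM S g n (S x)) ∂μ := i1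
    linarith
  have hanti : Antitone E := by
    refine antitone_nat_of_succ_le fun n x hx => ?_
    exact (gM_mono S g (n + 1) x).trans hx
  have hnull : μ (⋂ n, E n) = 0 := by
    refine measure_mono_null ?_ (ae_iff.1 h)
    intro x hx
    simp only [Set.mem_ofPred_eq, not_exists, not_lt]
    intro n
    rw [Set.mem_iInter] at hx
    have : gM S g (n + 1) x ≤ 0 := hx n
    exact (gM_birkhoff S g n x).trans ((gM_mono S g n x).trans this)
  have hlim : Tendsto (fun n => μ.real (E n)) atTop (nhds 0) := by
    have := tendsto_measure_iInter_atTop (μ := μ) (fun n => (hE n).nullMeasurableSet) hanti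
      ⟨0, measure_ne_top _ _⟩
    rw [hnull] at this
    have := (ENNReal.tendsto_toReal (by simp)).comp this
    simpa [Measure.real, Function.comp_def] using this
  have : Tendsto (fun n => ∫ x, g x ∂μ + C * μ.real (E n)) atTop (nhds (∫ x, g x ∂μ + C * 0)) :=
    tendsto_const_nhds.add (hlim.const_mul C)
  have := ge_of_tendsto' this key
  linarith

end garsia

end Part8

section Part9

/-! ### Density below one half gives good configurations -/

lemma exists_rec_le (η : Cfg) (w : ℤ) (N : ℤ) (hN : ∀ z ≤ N, xi0 η w < xi0 η z) :
    ∃ y ≤ w, isRecord η y ∧ xi0 η y ≤ xi0 η w := by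
  classical
  have hNw : N < w := by
    by_contra hc
    exact lt_irrefl _ (hN w (by omega))
  obtain ⟨y0, hy0, hmin⟩ := Finset.exists_min_image (Finset.Icc N w) (xi0 η)
    ⟨w, Finset.mem_Icc.2 ⟨hNw.le, le_rfl⟩⟩
  let S := (Finset.Icc N w).filter (fun y => xi0 η y = xi0 η y0)
  have hS : S.Nonempty := ⟨y0, Finset.mem_filter.2 ⟨hy0, rfl⟩⟩
  obtain ⟨h1, h2⟩ := Finset.mem_filter.1 (S.min'_mem hS)
  have h1 := Finset.mem_Icc.1 h1
  have h3 := hmin w (Finset.mem_Icc.2 ⟨hNw.le, le_rfl⟩)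
  refine ⟨S.min' hS, h1.2, ?_, by rw [h2]; exact h3⟩
  rw [isRecord_iff]
  intro z hz
  rcases le_or_gt z N with hzN | hzN
  · have := hN z hzN
    rw [h2]; omega
  · have hzm : z ∈ Finset.Icc N w := Finset.mem_Icc.2 ⟨hzN.le, by omega⟩
    have h4 := hmin z hzm
    rw [h2]
    refine lt_of_le_of_ne h4 fun he => ?_
    have := S.min'_le z (Finset.mem_filter.2 ⟨hzm, he.symm⟩)
    omega

lemma good_of (η : Cfg) (hm : ∀ K : ℤ, ∃ N : ℤ, ∀ z ≤ N, K < xi0 η z)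
    (hp : ∀ (K : ℤ) (x : ℤ), ∃ w ≥ x, xi0 η w < K) : Good η := by
  intro x
  obtain ⟨N, hN⟩ := hm (xi0 η x)
  obtain ⟨y, hy, hr, -⟩ := exists_rec_le η x N hN
  refine ⟨⟨y, hy, hr⟩, ?_⟩
  -- a lower bound for the walk on the left half line
  obtain ⟨N0, hN0⟩ := hm 0
  have hlow : ∃ m : ℤ, ∀ z ≤ x, m ≤ xi0 η z := by
    by_cases hne : (Finset.Icc N0 x).Nonempty
    · obtain ⟨y0, -, hmin⟩ := Finset.exists_min_image (Finset.Icc N0 x) (xi0 η) hne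
      refine ⟨min 0 (xi0 η y0), fun z hz => ?_⟩
      rcases le_or_gt z N0 with h | h
      · exact (min_le_left _ _).trans (hN0 z h).le
      · exact (min_le_right _ _).trans (hmin z (Finset.mem_Icc.2 ⟨h.le, hz⟩))
    · refine ⟨0, fun z hz => (hN0 z ?_).le⟩
      by_contra hc
      exact hne ⟨z, Finset.mem_Icc.2 ⟨by omega, hz⟩⟩
  obtain ⟨m, hm'⟩ := hlow
  obtain ⟨w, hw, hwm⟩ := hp m x
  obtain ⟨N1, hN1⟩ := hm (xi0 η w)
  obtain ⟨y1, hy1, hr1, hle⟩ := exists_rec_le η w N1 hN1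
  refine ⟨y1, ?_, hr1⟩
  by_contra hc
  have := hm' y1 (by omega)
  omega

lemma valZ_cast (b : Bool) : ((valZ b : ℤ) : ℝ) = valR b := by cases b <;> simp [valZ, valR]

lemma good_of_inXlam (lam : ℝ) (h1 : lam < 1 / 2) (η : Cfg) (h : inXlam lam η) : Good η := by
  obtain ⟨hl, hr⟩ := h
  obtain ⟨a, ha1, ha2⟩ := exists_between h1
  have el : ∀ y : ℕ, ((xi0 η (-(y : ℤ) - 1) : ℤ) : ℝ) =
      (y + 1 : ℝ) - 2 * ∑ x ∈ Finset.Icc (-(y : ℤ)) 0, valR (η x) := by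
    intro y
    unfold xi0
    rw [if_neg (by omega)]
    push_cast
    rw [Finset.sum_sub_distrib, ← Finset.mul_sum]
    simp only [valZ_cast]
    have e : -(y : ℤ) - 1 + 1 = -(y : ℤ) := by ring
    rw [e, Finset.sum_const, Int.card_Icc]
    have : (0 + 1 - -(y : ℤ)).toNat = y + 1 := by omega
    rw [this]; simp
  have er : ∀ y : ℕ, ((xi0 η (y : ℤ) : ℤ) : ℝ) ≤
      2 * (∑ x ∈ Finset.Icc (0 : ℤ) (y : ℤ), valR (η x)) - y := by
    intro y
    unfold xi0
    rw [if_pos (by omega)]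
    push_cast
    rw [Finset.sum_sub_distrib, ← Finset.mul_sum]
    simp only [valZ_cast]
    rw [Finset.sum_const, Int.card_Icc]
    have : ((y : ℤ) + 1 - 1).toNat = y := by omega
    rw [this]
    have : ∑ x ∈ Finset.Icc (1 : ℤ) (y : ℤ), valR (η x) ≤ ∑ x ∈ Finset.Icc (0 : ℤ) (y : ℤ), valR (η x) := by
      refine Finset.sum_le_sum_of_subset_of_nonneg (Finset.Icc_subset_Icc (by omega) le_rfl) ?_
      intro i _ _; cases η i <;> simp [valR]
    simp; linarith
  have tl : ∀ K : ℝ, ∀ᶠ y : ℕ in atTop, K < (y : ℝ) * (1 - 2 * a) := by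
    intro K
    have : Tendsto (fun y : ℕ => (y : ℝ) * (1 - 2 * a)) atTop atTop :=
      tendsto_natCast_atTop_atTop.atTop_mul_const (by linarith)
    exact this.eventually_gt_atTop K
  refine good_of η ?_ ?_
  · intro K
    have ev := ((hl.eventually_lt_const ha1).and (eventually_gt_atTop 0)).and (tl K)
    obtain ⟨N, hN⟩ := eventually_atTop.1 ev
    refine ⟨-(N : ℤ) - 1, fun z hz => ?_⟩
    obtain ⟨⟨b1, b2⟩, b3⟩ := hN (-z - 1).toNat (by omega)
    have hz' : z = -(((-z - 1).toNat : ℕ) : ℤ) - 1 := by omega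
    set y := (-z - 1).toNat
    have b2' : (0 : ℝ) < y := by exact_mod_cast b2
    rw [div_lt_iff₀ b2'] at b1
    have := el y
    rw [hz']
    have : (K : ℝ) < ((xi0 η (-(y : ℤ) - 1) : ℤ) : ℝ) := by rw [this]; nlinarith
    exact_mod_cast this
  · intro K x
    have ev := (((hr.eventually_lt_const ha1).and (eventually_gt_atTop 0)).and (tl (-K))).and
      (eventually_ge_atTop x.toNat)
    obtain ⟨y, ⟨⟨b1, b2⟩, b3⟩, b4⟩ := ev.exists
    have b2' : (0 : ℝ) < y := by exact_mod_cast b2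
    rw [div_lt_iff₀ b2'] at b1
    refine ⟨y, by omega, ?_⟩
    have := er y
    have : ((xi0 η (y : ℤ) : ℤ) : ℝ) < (K : ℝ) := by nlinarith
    exact_mod_cast this

/-! ### Measurability -/

lemma meas_val (x : ℤ) : Measurable (fun η : Cfg => η x) := measurable_pi_apply x

lemma meas_valR (x : ℤ) : Measurable (fun η : Cfg => valR (η x)) :=
  (measurable_of_countable valR).comp (meas_val x)

lemma meas_valZ (x : ℤ) : Measurable (fun η : Cfg => valZ (η x)) :=
  (measurable_of_countable valZ).comp (meas_val x)

lemma meas_rec (x : ℤ) : MeasurableSet {η : Cfg | isRecord η x} := by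
  have : {η : Cfg | isRecord η x} = ⋂ z : ℤ, ⋂ _ : z ≤ x,
      {η | (∑ y ∈ Finset.Icc z x, valZ (η y)) < ∑ y ∈ Finset.Icc z x, (1 - valZ (η y))} := by
    ext η; simp [isRecord]
  rw [this]
  refine MeasurableSet.iInter fun z => MeasurableSet.iInter fun _ => ?_
  refine measurableSet_lt (Finset.measurable_sum _ fun y _ => meas_valZ y)
    (Finset.measurable_sum _ fun y _ => measurable_const.sub (meas_valZ y))

lemma meas_bbsT : Measurable bbsT := by
  refine measurable_pi_lambda _ fun x => ?_
  unfold bbsT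
  exact Measurable.ite (meas_rec x) measurable_const ((measurable_of_countable not).comp (meas_val x))

lemma meas_shiftBy (n : ℤ) : Measurable (shiftBy n) :=
  measurable_pi_lambda _ fun x => meas_val (x + n)

lemma meas_inXlam (lam : ℝ) : MeasurableSet {η : Cfg | inXlam lam η} := by
  unfold inXlam
  refine MeasurableSet.inter ?_ ?_
  · exact measurableSet_tendsto _ fun y =>
      (Finset.measurable_sum _ fun x _ => meas_valR x).div_const _
  · exact measurableSet_tendsto _ fun y =>
      (Finset.measurable_sum _ fun x _ => meas_valR x).div_const _

lemma countable_Stk : Countable Stk := inferInstanceAs (Countable (List (List (ℤ × Bool))))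

lemma meas_stkFrom (y : ℤ) (n : ℕ) : ∀ A : Set Stk, MeasurableSet {η : Cfg | stkFrom η y n ∈ A} := by
  induction n with
  | zero => intro A; exact MeasurableSet.const (([] : Stk) ∈ A)
  | succ n ih =>
    intro A
    have := countable_Stk
    have : {η : Cfg | stkFrom η y (n + 1) ∈ A} = ⋃ s : Stk, ⋃ b : Bool,
        ({η : Cfg | stkFrom η y n ∈ ({s} : Set Stk)} ∩ {η | η (y + n + 1) = b}) ∩
          {_η | stepS s (y + n + 1, b) ∈ A} := by
      ext η
      simp only [stkFrom, Set.mem_iUnion]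
      constructor
      · intro h
        exact ⟨stkFrom η y n, η (y + n + 1), ⟨rfl, rfl⟩, h⟩
      · rintro ⟨s, b, ⟨h1, h2⟩, h3⟩
        have h1 : stkFrom η y n = s := h1
        have h2 : η (y + n + 1) = b := h2
        show stepS (stkFrom η y n) (y + n + 1, η (y + n + 1)) ∈ A
        rw [h1, h2]; exact h3
    rw [this]
    refine MeasurableSet.iUnion fun s => MeasurableSet.iUnion fun b => ?_
    exact ((ih _).inter (measurableSet_eq_fun (meas_val _) measurable_const)).inter
      (MeasurableSet.const _)

lemma meas_stk (x : ℤ) (A : Set Stk) : MeasurableSet {η : Cfg | stk η x ∈ A} := by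
  classical
  have : {η : Cfg | stk η x ∈ A} =
      (⋃ n : ℕ, ({η | isRecord η (x - n)} ∩ (⋂ m : ℕ, ⋂ _ : m < n, {η | isRecord η (x - m)}ᶜ)) ∩
        {η | stkFrom η (x - n) n ∈ A}) ∪
      ((⋂ n : ℕ, {η | isRecord η (x - n)}ᶜ) ∩ {_η | ([] : Stk) ∈ A}) := by
    ext η
    by_cases h : ∃ n : ℕ, isRecord η (x - n)
    · have e : stk η x = stkFrom η (x - Nat.find h) (Nat.find h) := by
        unfold stk; rw [dif_pos h]
      constructor
      · intro hA
        refine Or.inl (Set.mem_iUnion.2 ⟨Nat.find h, ⟨Nat.find_spec h, ?_⟩, ?_⟩)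
        · simp only [Set.mem_iInter]
          intro m hm; exact Nat.find_min h hm
        · show _ ∈ A
          rw [← e]; exact hA
      · rintro (hA | hA)
        · obtain ⟨n, ⟨h1, h2⟩, h3⟩ := Set.mem_iUnion.1 hA
          simp only [Set.mem_iInter] at h2
          have : Nat.find h = n := by
            rw [Nat.find_eq_iff]; exact ⟨h1, fun m hm => h2 m hm⟩
          show stk η x ∈ A
          rw [e, this]; exact h3
        · have := Set.mem_iInter.1 hA.1
          obtain ⟨n, hn⟩ := h
          exact absurd hn (this n)
    · have e : stk η x = [] := by
        unfold stk; rw [dif_neg h]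
      constructor
      · intro hA
        refine Or.inr ⟨?_, ?_⟩
        · refine Set.mem_iInter.2 fun n hn => h ⟨n, hn⟩
        · show ([] : Stk) ∈ A
          rw [← e]; exact hA
      · rintro (hA | hA)
        · obtain ⟨n, ⟨h1, h2⟩, h3⟩ := Set.mem_iUnion.1 hA
          exact absurd ⟨n, h1⟩ h
        · show stk η x ∈ A
          rw [e]; exact hA.2
  rw [this]
  refine MeasurableSet.union (MeasurableSet.iUnion fun n => ?_) ?_
  · exact ((meas_rec _).inter (MeasurableSet.iInter fun m => MeasurableSet.iInter fun _ =>
      (meas_rec _).compl)).inter (meas_stkFrom _ _ A)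
  · exact (MeasurableSet.iInter fun n => (meas_rec _).compl).inter (MeasurableSet.const _)

lemma meas_W (x : ℤ) (j : ℕ) : Measurable (fun η => W η x j) := by
  refine measurable_to_countable' fun b => ?_
  exact meas_stk x {s | Wst s j = b}

lemma meas_lab (x : ℤ) : Measurable (fun η => lab η x) := by
  refine measurable_to_countable' fun j => ?_
  have : (fun η => lab η x) ⁻¹' {j} = ⋃ b : Bool, ({η : Cfg | η x = b} ∩
      {η | stk η (x - 1) ∈ {s | (pushS s (x, b)).1.length = j}}) := by
    ext η; simp [lab]
  rw [this]
  exact MeasurableSet.iUnion fun b => (measurableSet_eq_fun (meas_val _) measurable_const).inter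
    (meas_stk _ _)

lemma meas_valRW (x : ℤ) (j : ℕ) : Measurable (fun η => valR (W η x j)) :=
  (measurable_of_countable valR).comp (meas_W x j)

lemma meas_ind (P : ℕ → Bool → Prop) [∀ a b, Decidable (P a b)] (x : ℤ) :
    Measurable (fun η : Cfg => if P (lab η x) (η x) then (1 : ℝ) else 0) :=
  (measurable_of_countable (fun p : ℕ × Bool => if P p.1 p.2 then (1 : ℝ) else 0)).comp
    ((meas_lab x).prodMk (meas_val x))

lemma meas_upI (j : ℕ) (x : ℤ) : Measurable (fun η => upI j η x) :=
  meas_ind (fun a b => a = j ∧ b = true) x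

lemma meas_dnI (j : ℕ) (x : ℤ) : Measurable (fun η => dnI j η x) :=
  meas_ind (fun a b => a = j ∧ b = false) x

lemma meas_fB (m : ℕ) (x : ℤ) : Measurable (fun η => fB m η x) :=
  (meas_upI m x).sub (meas_upI (m + 1) x)

lemma meas_hB (m : ℕ) (x : ℤ) : Measurable (fun η => hB m η x) :=
  (meas_valRW x m).sub (meas_valRW x (m + 1))

lemma meas_fK (k : ℕ) (x : ℤ) : Measurable (fun η => fK k η x) := by
  simp only [fK_eq]
  exact measurable_const.sub (Finset.measurable_sum _ fun j _ => (meas_upI j x).add (meas_dnI j x))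

lemma meas_hK (k : ℕ) (x : ℤ) : Measurable (fun η => hK k η x) := by
  unfold hK
  exact measurable_const.sub (Finset.measurable_sum _ fun j _ =>
    (meas_valRW x j).add ((meas_valRW x j).comp meas_bbsT))

/-! ### The standing hypotheses -/

structure Hyp (mu : Measure Cfg) : Prop where
  prob : IsProbabilityMeasure mu
  T : MeasurePreserving bbsT mu mu
  erg : Ergodic shiftC mu
  good : ∀ᵐ η ∂mu, ∀ t : ℕ, Good (bbsT^[t] η)
  inx : ∀ᵐ η ∂mu, inX η

lemma shiftBy_one : shiftBy 1 = shiftC := rfl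

lemma shiftBy_add (n m : ℤ) (η : Cfg) : shiftBy n (shiftBy m η) = shiftBy (n + m) η := by
  funext x; simp only [shiftBy]; congr 1; ring

lemma shiftBy_zero (η : Cfg) : shiftBy 0 η = η := by
  funext x; simp [shiftBy]

lemma Hyp.shift {mu : Measure Cfg} (H : Hyp mu) (n : ℤ) : MeasurePreserving (shiftBy n) mu mu := by
  have h1 : MeasurePreserving (shiftBy 1) mu mu := H.erg.toMeasurePreserving
  have hm1 : MeasurePreserving (shiftBy (-1)) mu mu := by
    refine ⟨meas_shiftBy _, ?_⟩
    conv_lhs => rw [← h1.map_eq]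
    rw [Measure.map_map (meas_shiftBy _) (meas_shiftBy _)]
    have : shiftBy (-1) ∘ shiftBy 1 = id := by
      funext η; simp [shiftBy_add, shiftBy_zero]
    rw [this, Measure.map_id]
  induction n using Int.induction_on with
  | zero =>
    have : shiftBy 0 = id := by funext η; exact shiftBy_zero η
    rw [this]; exact MeasurePreserving.id mu
  | succ i ih =>
    have : shiftBy ((i : ℤ) + 1) = shiftBy i ∘ shiftBy 1 := by
      funext η; simp [shiftBy_add]
    rw [this]; exact ih.comp h1
  | pred i ih =>
    have : shiftBy (-(i : ℤ) - 1) = shiftBy (-i) ∘ shiftBy (-1) := by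
      funext η; simp [shiftBy_add]; ring_nf
    rw [this]; exact ih.comp hm1

lemma mkHyp (lam : ℝ) (h0 : 0 < lam) (h1 : lam < 1 / 2)
    (mu : Measure Cfg) [IsProbabilityMeasure mu]
    (hsupp : mu {η : Cfg | inXlam lam η} = 1)
    (hT : mu.map bbsT = mu) (herg : Ergodic shiftC mu) : Hyp mu := by
  have hT' : MeasurePreserving bbsT mu mu := ⟨meas_bbsT, hT⟩
  have hae : ∀ᵐ η ∂mu, inXlam lam η := (prob_compl_eq_zero_iff (meas_inXlam lam)).2 hsupp
  refine ⟨inferInstance, hT', herg, ?_, hae.mono fun η h => ⟨lam, h0, h1, h⟩⟩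
  rw [ae_all_iff]
  intro t
  have := (hT'.iterate t).quasiMeasurePreserving.ae hae
  filter_upwards [this] with η h
  exact good_of_inXlam lam h1 _ h

end Part9

section Part10

/-! ### Height functions attached to conservation laws -/

def Gd (η : Cfg) : Prop := ∀ t : ℕ, Good (bbsT^[t] η)

lemma Gd.good {η : Cfg} (h : Gd η) : Good η := h 0
lemma Gd.iter {η : Cfg} (h : Gd η) (t : ℕ) : Gd (bbsT^[t] η) := by
  intro s; rw [← Function.iterate_add_apply]; exact h _
lemma Gd.next {η : Cfg} (h : Gd η) : Gd (bbsT η) := h.iter 1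
lemma Gd.shift {η : Cfg} (h : Gd η) (n : ℤ) : Gd (shiftBy n η) := by
  intro s; rw [bbsT_iter_shift]; exact good_shift n _ (h s)

structure HF (f h : Cfg → ℤ → ℝ) (C : ℝ) : Prop where
  cons : ∀ η, Gd η → ∀ x, f (bbsT η) x - f η x = h η (x - 1) - h η x
  covf : ∀ η, Gd η → ∀ n x, f (shiftBy n η) x = f η (x + n)
  covh : ∀ η, Gd η → ∀ n x, h (shiftBy n η) x = h η (x + n)
  bf : ∀ η x, |f η x| ≤ C
  bh : ∀ η x, |h η x| ≤ C
  mf : ∀ x, Measurable (fun η => f η x)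
  mh : ∀ x, Measurable (fun η => h η x)

lemma HF.C_nonneg {f h : Cfg → ℤ → ℝ} {C : ℝ} (F : HF f h C) : 0 ≤ C :=
  (abs_nonneg _).trans (F.bf (fun _ => false) 0)

noncomputable def Phi (f h : Cfg → ℤ → ℝ) (t : ℕ) (n : ℤ) (η : Cfg) : ℝ :=
  sgs (f (bbsT^[t] η)) n - ∑ s ∈ Finset.range t, h (bbsT^[s] η) 0

section heights
variable {f h : Cfg → ℤ → ℝ} {C : ℝ}

lemma HF.neg (F : HF f h C) : HF (fun η x => - f η x) (fun η x => - h η x) C where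
  cons η hη x := by have := F.cons η hη x; linarith
  covf η hη n x := by simp [F.covf η hη n x]
  covh η hη n x := by simp [F.covh η hη n x]
  bf η x := by rw [abs_neg]; exact F.bf η x
  bh η x := by rw [abs_neg]; exact F.bh η x
  mf x := (F.mf x).neg
  mh x := (F.mh x).neg

lemma Phi_neg (t : ℕ) (n : ℤ) (η : Cfg) :
    Phi (fun η x => - f η x) (fun η x => - h η x) t n η = - Phi f h t n η := by
  unfold Phi
  rw [sgs_neg, Finset.sum_neg_distrib]; ring

lemma HF.sgs_cons (F : HF f h C) (η : Cfg) (hη : Gd η) (n : ℤ) :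
    sgs (f (bbsT η)) n = sgs (f η) n + h η 0 - h η n := by
  refine int_ext_of_step (fun n => sgs (f (bbsT η)) n) (fun n => sgs (f η) n + h η 0 - h η n) ?_ ?_ n
  · simp [sgs_zero]
  · intro n
    have h1 := sgs_step (f (bbsT η)) n
    have h2 := sgs_step (f η) n
    have h3 := F.cons η hη n
    linarith

lemma HF.phi_succ (F : HF f h C) (η : Cfg) (hη : Gd η) (t : ℕ) (n : ℤ) :
    Phi f h (t + 1) n η = Phi f h t n η - h (bbsT^[t] η) n := by
  unfold Phi
  rw [Function.iterate_succ_apply', F.sgs_cons _ (hη.iter t), Finset.sum_range_succ]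
  ring

lemma HF.phi_add (F : HF f h C) (η : Cfg) (hη : Gd η) (t s : ℕ) (n : ℤ) :
    Phi f h (t + s) n η = Phi f h t n η - ∑ r ∈ Finset.range s, h (bbsT^[r] (bbsT^[t] η)) n := by
  induction s with
  | zero => simp
  | succ s ih =>
    rw [← add_assoc, F.phi_succ η hη, ih, Finset.sum_range_succ, ← Function.iterate_add_apply, add_comm s t]
    ring

lemma HF.cocycle (F : HF f h C) (η : Cfg) (hη : Gd η) (t s : ℕ) (n m : ℤ) :
    Phi f h (t + s) (n + m) η = Phi f h t n η + Phi f h s m (shiftBy n (bbsT^[t] η)) := by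
  have e1 : Phi f h (t + s) (n + m) η = Phi f h (t + s) n η +
      sgs (fun x => f (bbsT^[t + s] η) (x + n)) m := by
    unfold Phi; rw [sgs_shift]; ring
  rw [e1, F.phi_add η hη]
  have e2 : Phi f h s m (shiftBy n (bbsT^[t] η)) = sgs (fun x => f (bbsT^[t + s] η) (x + n)) m -
      ∑ r ∈ Finset.range s, h (bbsT^[r] (bbsT^[t] η)) n := by
    unfold Phi
    have a1 : f (bbsT^[s] (shiftBy n (bbsT^[t] η))) = fun x => f (bbsT^[t + s] η) (x + n) := by
      funext x
      rw [bbsT_iter_shift, F.covf _ ((hη.iter t).iter s), ← Function.iterate_add_apply, add_comm s t]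
    rw [a1]
    congr 1
    refine Finset.sum_congr rfl fun r _ => ?_
    rw [bbsT_iter_shift, F.covh _ ((hη.iter t).iter r), zero_add]
  rw [e2]; ring

lemma HF.phi_bound (F : HF f h C) (t : ℕ) (n : ℤ) (η : Cfg) : |Phi f h t n η| ≤ C * |(n : ℝ)| + C * t := by
  unfold Phi
  refine (abs_sub _ _).trans (add_le_add (sgs_bound _ C (F.bf _) n) ?_)
  refine (Finset.abs_sum_le_sum_abs _ _).trans ((Finset.sum_le_sum (fun i _ => F.bh _ _)).trans ?_)
  simp; linarith

lemma HF.phi_space (F : HF f h C) (t : ℕ) (n m : ℤ) (η : Cfg) :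
    |Phi f h t n η - Phi f h t m η| ≤ C * |(n : ℝ) - m| := by
  have : Phi f h t n η - Phi f h t m η = sgs (fun x => f (bbsT^[t] η) (x + m)) (n - m) := by
    have := sgs_shift (f (bbsT^[t] η)) m (n - m)
    rw [add_sub_cancel] at this
    unfold Phi; rw [this]; ring
  rw [this]
  have := sgs_bound (fun x => f (bbsT^[t] η) (x + m)) C (fun x => F.bf _ _) (n - m)
  push_cast at this
  exact this

lemma HF.phi_time (F : HF f h C) (η : Cfg) (hη : Gd η) (t s : ℕ) (n : ℤ) :
    |Phi f h (t + s) n η - Phi f h t n η| ≤ C * s := by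
  rw [F.phi_add η hη]
  have : ∀ a b : ℝ, a - b - a = - b := fun a b => by ring
  rw [this, abs_neg]
  refine (Finset.abs_sum_le_sum_abs _ _).trans ((Finset.sum_le_sum (fun i _ => F.bh _ _)).trans ?_)
  simp; linarith

lemma HF.phi_shift (F : HF f h C) (η : Cfg) (hη : Gd η) (t : ℕ) (n : ℤ) :
    |Phi f h t n (shiftC η) - Phi f h t n η| ≤ 2 * C := by
  have h1 := F.cocycle η hη 0 t 1 n
  have h2 := F.cocycle η hη t 0 n 1
  rw [zero_add] at h1
  rw [add_zero, add_comm n 1] at h2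
  simp only [Function.iterate_zero, id] at h1
  rw [shiftBy_one] at h1
  have b1 := F.phi_bound 0 1 η
  have b2 := F.phi_bound 0 1 (shiftBy n (bbsT^[t] η))
  simp only [Int.cast_one, abs_one, mul_one, Nat.cast_zero, mul_zero, add_zero] at b1 b2
  rw [abs_le] at *
  constructor <;> linarith

lemma HF.phi_meas (F : HF f h C) (t : ℕ) (n : ℤ) : Measurable (Phi f h t n) := by
  unfold Phi sgs
  refine Measurable.sub (Measurable.sub ?_ ?_) ?_
  · exact Finset.measurable_sum _ fun x _ => (F.mf x).comp (meas_bbsT.iterate t)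
  · exact Finset.measurable_sum _ fun x _ => (F.mf x).comp (meas_bbsT.iterate t)
  · exact Finset.measurable_sum _ fun s _ => (F.mh 0).comp (meas_bbsT.iterate s)

lemma HF.birk (F : HF f h C) (p : ℤ) (q : ℕ) (i : ℕ) : ∀ η, Gd η →
    birkhoffSum (fun η => shiftBy p (bbsT^[q] η)) (Phi f h q p) i η = Phi f h (q * i) (p * i) η := by
  induction i with
  | zero => intro η hη; simp [Phi, sgs_zero]
  | succ i ih =>
    intro η hη
    rw [birkhoffSum_succ', ih _ ((hη.iter q).shift p), ← F.cocycle η hη]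
    congr 1
    · ring
    · push_cast; ring

variable {mu : Measure Cfg}

lemma integral_comp_mp (S : Cfg → Cfg) (hS : MeasurePreserving S mu mu) (g : Cfg → ℝ) (hg : Measurable g) :
    ∫ η, g (S η) ∂mu = ∫ η, g η ∂mu := by
  rw [← integral_map (f := g) hS.measurable.aemeasurable hg.aestronglyMeasurable, hS.map_eq]

lemma HF.int_f (F : HF f h C) (H : Hyp mu) (x : ℤ) : ∫ η, f η x ∂mu = ∫ η, f η 0 ∂mu := by
  rw [← integral_comp_mp _ (H.shift x) _ (F.mf 0)]
  refine integral_congr_ae ?_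
  filter_upwards [H.good] with η hη
  rw [F.covf η hη, zero_add]

lemma integrable_bd [IsProbabilityMeasure mu] (g : Cfg → ℝ) (hg : Measurable g) (C : ℝ) (hC : ∀ η, |g η| ≤ C) :
    Integrable g mu :=
  Integrable.of_bound hg.aestronglyMeasurable C (Eventually.of_forall hC)

lemma HF.int_phi (F : HF f h C) (H : Hyp mu) (p : ℤ) (q : ℕ) :
    ∫ η, Phi f h q p η ∂mu = p * ∫ η, f η 0 ∂mu - q * ∫ η, h η 0 ∂mu := by
  have := H.prob
  have if' : ∀ (t : ℕ) (x : ℤ), Integrable (fun η => f (bbsT^[t] η) x) mu := fun t x =>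
    integrable_bd _ ((F.mf x).comp (meas_bbsT.iterate t)) C (fun η => F.bf _ _)
  have ih' : ∀ (t : ℕ) (x : ℤ), Integrable (fun η => h (bbsT^[t] η) x) mu := fun t x =>
    integrable_bd _ ((F.mh x).comp (meas_bbsT.iterate t)) C (fun η => F.bh _ _)
  have ef : ∀ (t : ℕ) (x : ℤ), ∫ η, f (bbsT^[t] η) x ∂mu = ∫ η, f η 0 ∂mu := fun t x => by
    rw [← F.int_f H x]
    exact integral_comp_mp _ (H.T.iterate t) _ (F.mf x)
  have eh : ∀ (t : ℕ), ∫ η, h (bbsT^[t] η) 0 ∂mu = ∫ η, h η 0 ∂mu := fun t =>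
    integral_comp_mp _ (H.T.iterate t) _ (F.mh 0)
  unfold Phi sgs
  rw [integral_sub, integral_sub, integral_finsetSum _ (fun x _ => if' q x),
    integral_finsetSum _ (fun x _ => if' q x), integral_finsetSum _ (fun s _ => ih' s 0)]
  · simp only [ef, eh, Finset.sum_const, Int.card_Ioc, nsmul_eq_mul, Finset.card_range]
    have : (((p - 0).toNat : ℕ) : ℝ) - (((0 - p).toNat : ℕ) : ℝ) = p := by
      have h : (((p - 0).toNat : ℕ) : ℤ) - (((0 - p).toNat : ℕ) : ℤ) = p := by omega
      exact_mod_cast h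
    rw [← sub_mul, this]
  · exact integrable_finsetSum _ fun x _ => if' q x
  · exact integrable_finsetSum _ fun x _ => if' q x
  · exact (integrable_finsetSum _ fun x _ => if' q x).sub (integrable_finsetSum _ fun x _ => if' q x)
  · exact integrable_finsetSum _ fun s _ => ih' s 0

lemma HF.upper (F : HF f h C) (H : Hyp mu) (p : ℤ) (q : ℕ) (ε : ℝ) (hε : 0 < ε) :
    ∀ᵐ η ∂mu, ∃ c : ℝ, ∀ i : ℕ, Phi f h (q * i) (p * i) η ≤
      i * (p * ∫ η, f η 0 ∂mu - q * ∫ η, h η 0 ∂mu + ε) + c := by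
  have := H.prob
  set D := p * ∫ η, f η 0 ∂mu - q * ∫ η, h η 0 ∂mu with hD
  let B : Set Cfg := {η | ∀ c : ℕ, ∃ i : ℕ, i * (D + ε) + c < Phi f h (q * i) (p * i) η}
  have hB : MeasurableSet B := by
    have : B = ⋂ c : ℕ, ⋃ i : ℕ, {η | i * (D + ε) + c < Phi f h (q * i) (p * i) η} := by
      ext η; simp [B]
    rw [this]
    exact MeasurableSet.iInter fun c => MeasurableSet.iUnion fun i =>
      measurableSet_lt measurable_const (F.phi_meas _ _)
  obtain ⟨N, hN⟩ := exists_nat_ge (2 * C)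
  have hinv : shiftC ⁻¹' B =ᵐ[mu] B := by
    rw [eventuallyEq_set]
    filter_upwards [H.good] with η hη
    constructor
    · intro hb c
      obtain ⟨i, hi⟩ := hb (c + N)
      refine ⟨i, ?_⟩
      have := (abs_le.1 (F.phi_shift η hη (q * i) (p * i))).2
      push_cast at hi; linarith
    · intro hb c
      obtain ⟨i, hi⟩ := hb (c + N)
      refine ⟨i, ?_⟩
      have := (abs_le.1 (F.phi_shift η hη (q * i) (p * i))).1
      push_cast at hi; linarith
  rcases H.erg.quasiErgodic.ae_empty_or_univ₀ hB.nullMeasurableSet hinv with h0 | h0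
  · have : ∀ᵐ η ∂mu, η ∉ B := by
      filter_upwards [eventuallyEq_set.1 h0] with η hη hb
      exact hη.1 hb
    filter_upwards [this] with η hη
    have hη : ¬ ∀ c : ℕ, ∃ i : ℕ, i * (D + ε) + c < Phi f h (q * i) (p * i) η := hη
    push Not at hη
    obtain ⟨c, hc⟩ := hη
    exact ⟨c, hc⟩
  · exfalso
    have hgi : Integrable (Phi f h q p) mu := integrable_bd _ (F.phi_meas q p) _ (F.phi_bound q p)
    have hg := garsia mu (fun η => shiftBy p (bbsT^[q] η)) ((H.shift p).comp (H.T.iterate q))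
      (fun η => Phi f h q p η - (D + ε)) ((F.phi_meas q p).sub_const _)
      ((C * |(p : ℝ)| + C * q) + |D + ε|) (fun η => (abs_sub _ _).trans (by
        have := F.phi_bound q p η; linarith)) ?_
    · rw [integral_sub hgi (integrable_const _), F.int_phi H, ← hD] at hg
      simp at hg
      linarith
    · filter_upwards [eventuallyEq_set.1 h0, H.good] with η hη hgd
      obtain ⟨i, hi⟩ := (hη.2 trivial) 0
      refine ⟨i, ?_⟩
      have e : birkhoffSum (fun η => shiftBy p (bbsT^[q] η)) (fun η => Phi f h q p η - (D + ε)) i η =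
          birkhoffSum (fun η => shiftBy p (bbsT^[q] η)) (Phi f h q p) i η - i * (D + ε) := by
        simp only [birkhoffSum, Finset.sum_sub_distrib, Finset.sum_const, Finset.card_range, nsmul_eq_mul]
      rw [e, F.birk p q i η hgd]
      simp at hi
      linarith

lemma HF.twosided (F : HF f h C) (H : Hyp mu) : ∀ᵐ η ∂mu, ∀ (p : ℤ) (q : ℕ) (ε : ℝ), 0 < ε →
    ∃ c : ℝ, ∀ i : ℕ, |Phi f h (q * i) (p * i) η -
      i * (p * ∫ η, f η 0 ∂mu - q * ∫ η, h η 0 ∂mu)| ≤ i * ε + c := by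
  have h1 : ∀ᵐ η ∂mu, ∀ (p : ℤ) (q : ℕ) (n : ℕ), ∃ c : ℝ, ∀ i : ℕ, Phi f h (q * i) (p * i) η ≤
      i * (p * ∫ η, f η 0 ∂mu - q * ∫ η, h η 0 ∂mu + 1 / ((n : ℝ) + 1)) + c := by
    simp only [ae_all_iff]
    intro p q n
    exact F.upper H p q _ (by positivity)
  have h2 : ∀ᵐ η ∂mu, ∀ (p : ℤ) (q : ℕ) (n : ℕ), ∃ c : ℝ, ∀ i : ℕ, - Phi f h (q * i) (p * i) η ≤
      i * (-(p * ∫ η, f η 0 ∂mu - q * ∫ η, h η 0 ∂mu) + 1 / ((n : ℝ) + 1)) + c := by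
    simp only [ae_all_iff]
    intro p q n
    have := F.neg.upper H p q (1 / ((n : ℝ) + 1)) (by positivity)
    simp only [Phi_neg, integral_neg] at this
    filter_upwards [this] with η ⟨c, hc⟩
    refine ⟨c, fun i => (hc i).trans (le_of_eq ?_)⟩
    ring
  filter_upwards [h1, h2] with η a1 a2 p q ε hε
  obtain ⟨n, hn⟩ := exists_nat_one_div_lt hε
  obtain ⟨c1, hc1⟩ := a1 p q n
  obtain ⟨c2, hc2⟩ := a2 p q n
  refine ⟨|c1| + |c2|, fun i => ?_⟩
  have b1 := hc1 i
  have b2 := hc2 i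
  have b3 : (i : ℝ) * (1 / ((n : ℝ) + 1)) ≤ i * ε := mul_le_mul_of_nonneg_left hn.le (by positivity)
  have := le_abs_self c1
  have := le_abs_self c2
  have := abs_nonneg c1
  have := abs_nonneg c2
  rw [abs_le]
  constructor <;> nlinarith

theorem HF.lln (F : HF f h C) (H : Hyp mu) : ∀ᵐ η ∂mu, ∀ (a : ℝ) (n : ℕ → ℤ),
    Tendsto (fun t => (n t : ℝ) / t) atTop (nhds a) →
    Tendsto (fun t => Phi f h t (n t) η / t) atTop
      (nhds (a * ∫ η, f η 0 ∂mu - ∫ η, h η 0 ∂mu)) := by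
  have := H.prob
  filter_upwards [F.twosided H, H.good] with η hη hgd a n hn
  have hC := F.C_nonneg
  set Ef := ∫ η, f η 0 ∂mu
  set Eh := ∫ η, h η 0 ∂mu
  have bEf : |Ef| ≤ C := by
    have := norm_integral_le_of_norm_le_const (μ := mu) (f := fun η => f η 0) (C := C)
      (Eventually.of_forall fun η => F.bf η 0)
    simpa using this
  have bEh : |Eh| ≤ C := by
    have := norm_integral_le_of_norm_le_const (μ := mu) (f := fun η => h η 0) (C := C)
      (Eventually.of_forall fun η => F.bh η 0)
    simpa using this
  rw [Metric.tendsto_atTop]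
  intro e he
  set ε := e / (2 * (3 * C + 2)) with hεd
  have hε : 0 < ε := by positivity
  obtain ⟨q, hq⟩ := exists_nat_gt (1 / ε)
  have hq0 : (0 : ℝ) < q := lt_trans (by positivity) hq
  have hqn : 0 < q := by exact_mod_cast hq0
  have hq1 : 1 ≤ ε * q := by
    rw [div_lt_iff₀ hε] at hq; linarith
  set p := ⌊a * q⌋ with hp
  have hp1 : |a * q - p| ≤ 1 := by
    rw [abs_le]
    have := Int.floor_le (a * q)
    have := Int.lt_floor_add_one (a * q)
    constructor <;> linarith
  obtain ⟨c, hc⟩ := hη p q ε hε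
  set c2 := C * (|a| * q) + C * q + c + C * (|a| * q) + C * q
  have ev1 : ∀ᶠ t : ℕ in atTop, |(n t : ℝ) / t - a| < ε := by
    have := Metric.tendsto_atTop.1 hn ε hε
    simpa [Real.dist_eq] using eventually_atTop.2 this
  have ev2 : ∀ᶠ t : ℕ in atTop, c2 ≤ ε * t := by
    have : Tendsto (fun t : ℕ => ε * (t : ℝ)) atTop atTop :=
      tendsto_natCast_atTop_atTop.const_mul_atTop hε
    exact this.eventually_ge_atTop c2
  obtain ⟨N, hN⟩ := eventually_atTop.1 ((ev1.and ev2).and (eventually_gt_atTop 0))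
  refine ⟨N, fun t ht => ?_⟩
  obtain ⟨⟨e1, e2⟩, e3⟩ := hN t ht
  have t0 : (0 : ℝ) < t := by exact_mod_cast e3
  have e1' : |(n t : ℝ) - a * t| ≤ ε * t := by
    have : (n t : ℝ) - a * t = ((n t : ℝ) / t - a) * t := by field_simp
    rw [this, abs_mul, abs_of_pos t0]
    exact mul_le_mul_of_nonneg_right e1.le t0.le
  set i := t / q with hi
  obtain ⟨r, hr, hrq⟩ : ∃ r : ℕ, t = q * i + r ∧ r ≤ q :=
    ⟨t % q, (Nat.div_add_mod t q).symm, (Nat.mod_lt _ hqn).le⟩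
  have hr' : (t : ℝ) = q * i + r := by exact_mod_cast hr
  have hrq' : (r : ℝ) ≤ q := by exact_mod_cast hrq
  have r0 : (0 : ℝ) ≤ r := by positivity
  have i0 : (0 : ℝ) ≤ i := by positivity
  have hit : (i : ℝ) ≤ t := by exact_mod_cast Nat.div_le_self t q
  have hiε : (i : ℝ) ≤ ε * t := by
    rw [hr']; nlinarith
  -- position comparison
  have k1 : |a * t - p * i| ≤ |a| * q + i := by
    have : a * t - p * i = a * r + (a * q - p) * i := by rw [hr']; ring
    rw [this]
    refine (abs_add_le _ _).trans (add_le_add ?_ ?_)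
    · rw [abs_mul, abs_of_nonneg r0]
      exact mul_le_mul_of_nonneg_left hrq' (abs_nonneg _)
    · rw [abs_mul, abs_of_nonneg i0]
      nlinarith
  have k2 : |Phi f h t (n t) η - Phi f h t (p * i) η| ≤ C * (ε * t + (|a| * q + i)) := by
    refine (F.phi_space t _ _ η).trans (mul_le_mul_of_nonneg_left ?_ hC)
    push_cast
    have := abs_sub_le (n t : ℝ) (a * t) (p * i)
    linarith
  have k3 : |Phi f h t (p * i) η - Phi f h (q * i) (p * i) η| ≤ C * q := by
    have := F.phi_time η hgd (q * i) r (p * i)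
    rw [← hr] at this
    exact this.trans (mul_le_mul_of_nonneg_left hrq' hC)
  have k4 := hc i
  have k5 : |i * (p * Ef - q * Eh) - t * (a * Ef - Eh)| ≤ C * (|a| * q + i) + C * q := by
    have : i * (p * Ef - q * Eh) - t * (a * Ef - Eh) = (-(a * t - p * i)) * Ef + r * Eh := by
      rw [hr']; ring
    rw [this]
    refine (abs_add_le _ _).trans (add_le_add ?_ ?_)
    · rw [abs_mul, abs_neg, mul_comm]
      exact mul_le_mul bEf k1 (abs_nonneg _) hC
    · rw [abs_mul, abs_of_nonneg r0, mul_comm]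
      exact mul_le_mul bEh hrq' r0 hC
  have total : |Phi f h t (n t) η - t * (a * Ef - Eh)| ≤ (3 * C + 2) * (ε * t) := by
    have a1 := abs_sub_le (Phi f h t (n t) η) (Phi f h t (p * i) η) (t * (a * Ef - Eh))
    have a2 := abs_sub_le (Phi f h t (p * i) η) (Phi f h (q * i) (p * i) η) (t * (a * Ef - Eh))
    have a3 := abs_sub_le (Phi f h (q * i) (p * i) η) (i * (p * Ef - q * Eh)) (t * (a * Ef - Eh))
    have a4 : (i : ℝ) * ε ≤ ε * t := by nlinarith
    have a5 : C * i ≤ C * (ε * t) := mul_le_mul_of_nonneg_left hiε hC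
    simp only [c2] at e2
    nlinarith
  rw [Real.dist_eq]
  have : Phi f h t (n t) η / t - (a * Ef - Eh) = (Phi f h t (n t) η - t * (a * Ef - Eh)) / t := by
    field_simp
  rw [this, abs_div, abs_of_pos t0, div_lt_iff₀ t0]
  refine total.trans_lt ?_
  have : (3 * C + 2) * (ε * t) = e / 2 * t := by
    rw [hεd]; field_simp
  rw [this]
  nlinarith

/-- The level line of a monotone height function has a speed. -/
theorem HF.speed (F : HF f h C) (H : Hyp mu) (hpos : ∀ η x, 0 ≤ f η x) (hE : 0 < ∫ η, f η 0 ∂mu) :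
    ∀ᵐ η ∂mu, ∀ (K : ℝ) (n : ℕ → ℤ), (∀ t, Phi f h t (n t) η = K) →
    Tendsto (fun t => (n t : ℝ) / t) atTop (nhds ((∫ η, h η 0 ∂mu) / ∫ η, f η 0 ∂mu)) := by
  filter_upwards [F.lln H] with η hη K n hn
  set Ef := ∫ η, f η 0 ∂mu
  set Eh := ∫ η, h η 0 ∂mu
  have mono : ∀ t : ℕ, ∀ a b : ℤ, a ≤ b → Phi f h t a η ≤ Phi f h t b η := by
    intro t a b hab
    have := sgs_sub (f (bbsT^[t] η)) a b hab
    have h2 : 0 ≤ ∑ x ∈ Finset.Ioc a b, f (bbsT^[t] η) x := Finset.sum_nonneg fun x _ => hpos _ _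
    unfold Phi; linarith
  have fl : ∀ a : ℝ, Tendsto (fun t : ℕ => (⌊a * t⌋ : ℝ) / t) atTop (nhds a) := by
    intro a
    have hz : Tendsto (fun t : ℕ => 1 / (t : ℝ)) atTop (nhds 0) := tendsto_one_div_atTop_nhds_zero_nat
    refine tendsto_of_tendsto_of_tendsto_of_le_of_le' (g := fun t : ℕ => a - 1 / (t : ℝ))
      (h := fun _ => a) (by simpa using tendsto_const_nhds.sub hz) tendsto_const_nhds ?_ ?_
    · filter_upwards [eventually_gt_atTop 0] with t ht
      have t0 : (0 : ℝ) < t := by exact_mod_cast ht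
      rw [le_div_iff₀ t0, sub_mul, one_div_mul_cancel t0.ne']
      exact (Int.sub_one_lt_floor _).le
    · filter_upwards [eventually_gt_atTop 0] with t ht
      have t0 : (0 : ℝ) < t := by exact_mod_cast ht
      rw [div_le_iff₀ t0]
      exact Int.floor_le _
  have Kt : Tendsto (fun t : ℕ => K / (t : ℝ)) atTop (nhds 0) :=
    tendsto_const_nhds.div_atTop tendsto_natCast_atTop_atTop
  rw [tendsto_order]
  constructor
  · intro a ha
    obtain ⟨b, hab, hb⟩ := exists_between ha
    have l := hη b _ (fl b)
    have : b * Ef - Eh < 0 := by rw [lt_div_iff₀ hE] at hb; linarith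
    have ev := (l.sub Kt).eventually_lt_const (by simpa using this : b * Ef - Eh - 0 < 0)
    have ev2 := (fl b).eventually_const_lt hab
    filter_upwards [ev, ev2, eventually_gt_atTop 0] with t h1 h2 h3
    have t0 : (0 : ℝ) < t := by exact_mod_cast h3
    rw [← sub_div, div_lt_iff₀ t0] at h1
    refine lt_of_lt_of_le h2 (div_le_div_of_nonneg_right ?_ t0.le)
    by_contra hc
    have hc : n t ≤ ⌊b * t⌋ := by
      rw [not_le] at hc; exact_mod_cast hc.le
    have := mono t _ _ hc
    rw [hn t] at this; linarith
  · intro a ha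
    obtain ⟨b, hb, hab⟩ := exists_between ha
    have l := hη b _ (fl b)
    have : 0 < b * Ef - Eh := by rw [div_lt_iff₀ hE] at hb; linarith
    have ev := (l.sub Kt).eventually_const_lt (by simpa using this : 0 < b * Ef - Eh - 0)
    have ev2 := (fl b).eventually_lt_const hab
    filter_upwards [ev, ev2, eventually_gt_atTop 0] with t h1 h2 h3
    have t0 : (0 : ℝ) < t := by exact_mod_cast h3
    rw [← sub_div, lt_div_iff₀ t0] at h1
    refine lt_of_le_of_lt (div_le_div_of_nonneg_right ?_ t0.le) h2
    by_contra hc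
    have hc : ⌊b * t⌋ ≤ n t := by
      rw [not_le] at hc; exact_mod_cast hc.le
    have := mono t _ _ hc
    rw [hn t] at this; linarith

end heights

end Part10

section Part11

/-! ### The two families of height functions -/

lemma upI_cov (j : ℕ) (n : ℤ) (η : Cfg) (hg : Good η) (x : ℤ) : upI j (shiftBy n η) x = upI j η (x + n) := by
  unfold upI
  rw [(cov n η hg x).1]; rfl

lemma dnI_cov (j : ℕ) (n : ℤ) (η : Cfg) (hg : Good η) (x : ℤ) : dnI j (shiftBy n η) x = dnI j η (x + n) := by
  unfold dnI
  rw [(cov n η hg x).1]; rfl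

lemma valR_01 (b : Bool) : 0 ≤ valR b ∧ valR b ≤ 1 := by cases b <;> simp [valR]

lemma upI_01 (j : ℕ) (η : Cfg) (x : ℤ) : 0 ≤ upI j η x ∧ upI j η x ≤ 1 := by
  unfold upI; split_ifs <;> simp

lemma dnI_01 (j : ℕ) (η : Cfg) (x : ℤ) : 0 ≤ dnI j η x ∧ dnI j η x ≤ 1 := by
  unfold dnI; split_ifs <;> simp

lemma fK_01 (j : ℕ) (η : Cfg) (x : ℤ) : 0 ≤ fK j η x ∧ fK j η x ≤ 1 := by
  unfold fK; split_ifs <;> simp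

lemma hK_bound (k : ℕ) (η : Cfg) (x : ℤ) : |hK k η x| ≤ k := by
  unfold hK
  have h1 : 0 ≤ ∑ j ∈ Finset.Icc 1 k, (valR (W η x j) + valR (W (bbsT η) x j)) :=
    Finset.sum_nonneg fun j _ => add_nonneg (valR_01 _).1 (valR_01 _).1
  have h2 : ∑ j ∈ Finset.Icc 1 k, (valR (W η x j) + valR (W (bbsT η) x j)) ≤ ∑ j ∈ Finset.Icc 1 k, (2 : ℝ) :=
    Finset.sum_le_sum fun j _ => by
      have := (valR_01 (W η x j)).2
      have := (valR_01 (W (bbsT η) x j)).2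
      linarith
  simp at h2
  rw [abs_le]; constructor <;> linarith

lemma HF_K (k : ℕ) : HF (fK k) (hK k) (k + 1) where
  cons η hη x := consK η hη.good hη.next.good k x
  covf η hη n x := by
    unfold fK; rw [(cov n η hη.good x).1]
  covh η hη n x := by
    unfold hK
    congr 1
    refine Finset.sum_congr rfl fun j hj => ?_
    have hj := (Finset.mem_Icc.1 hj).1
    rw [(cov n η hη.good x).2 j hj, bbsT_shift, (cov n _ hη.next.good x).2 j hj]
  bf η x := by
    have := fK_01 k η x
    have : (0 : ℝ) ≤ k := by positivity
    rw [abs_le]; constructor <;> linarith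
  bh η x := (hK_bound k η x).trans (by linarith)
  mf x := meas_fK k x
  mh x := meas_hK k x

lemma HF_B (m : ℕ) (hm : 1 ≤ m) : HF (fB m) (hB m) 1 where
  cons η hη x := consB η hη.good hη.next.good m hm x
  covf η hη n x := by
    unfold fB; rw [upI_cov _ _ _ hη.good, upI_cov _ _ _ hη.good]
  covh η hη n x := by
    unfold hB
    rw [(cov n η hη.good x).2 m hm, (cov n η hη.good x).2 (m + 1) (by omega)]
  bf η x := by
    have := upI_01 m η x
    have := upI_01 (m + 1) η x
    unfold fB
    rw [abs_le]; constructor <;> linarith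
  bh η x := by
    have := valR_01 (W η x m)
    have := valR_01 (W η x (m + 1))
    unfold hB
    rw [abs_le]; constructor <;> linarith
  mf x := meas_fB m x
  mh x := meas_hB m x

lemma phi_traj {f h : Cfg → ℤ → ℝ} {C : ℝ} (F : HF f h C) (η : Cfg) (hη : Gd η) (u : ℕ → ℤ)
    (hu : ∀ t, sgs (f (bbsT^[t] η)) (u (t + 1)) - sgs (f (bbsT^[t] η)) (u t) = h (bbsT^[t] η) (u (t + 1))) :
    ∀ t, Phi f h t (u t) η = Phi f h 0 (u 0) η := by
  intro t
  induction t with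
  | zero => rfl
  | succ t ih =>
    rw [F.phi_succ η hη, ← ih]
    have := hu t
    unfold Phi
    linarith

lemma leftmost_mem (γ : Finset ℤ) (hne : γ.Nonempty) : leftmost γ ∈ γ := by
  have : leftmost γ ∈ (γ : Set ℤ) := Int.csInf_mem (by exact_mod_cast hne) γ.bddBelow
  exact_mod_cast this

noncomputable def vel (mu : Measure Cfg) (k : ℕ) : ℝ := (∫ η, hK k η 0 ∂mu) / ∫ η, fK k η 0 ∂mu

theorem speeds (mu : Measure Cfg) (H : Hyp mu) (k : ℕ) (hk : 1 ≤ k) (hE : 0 < ∫ η, fK k η 0 ∂mu) :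
    ∀ᵐ η ∂mu, ∀ γ ∈ Gamma η k,
      Tendsto (fun t : ℕ => (leftmost (solTraj η k γ t) : ℝ) / (t : ℝ)) atTop (nhds (vel mu k)) ∧
      ∃ u : ℕ → ℤ, (∀ t, SolE (bbsT^[t] η) k (solTraj η k γ t) (u t) (u (t + 1))) ∧
        Tendsto (fun t : ℕ => (u t : ℝ) / (t : ℝ)) atTop (nhds (vel mu k)) := by
  filter_upwards [(HF_K k).speed H (fun η x => (fK_01 k η x).1) hE, H.good] with η hs hη γ hγ
  obtain ⟨u, hu⟩ := traj η hη k γ hγ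
  have hη : Gd η := hη
  have key : ∀ t, Phi (fK k) (hK k) t (u t) η = Phi (fK k) (hK k) 0 (u 0) η :=
    phi_traj (HF_K k) η hη u fun t => by
      have := keyK' _ (hη.iter t).good (hη.iter t).next.good k hk _ _ _ (hu t)
      exact this
  refine ⟨hs (Phi (fK k) (hK k) 0 (u 0) η) (fun t => leftmost (solTraj η k γ t)) (fun t => ?_), u, hu, hs _ _ key⟩
  obtain ⟨h1, h2⟩ := keyK _ (hη.iter t).good (hη.iter t).next.good k hk _ _ _ (hu t)
  obtain ⟨lu, ld, eu, ed, hne, hmu, hmd, -⟩ := (hu t).facts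
  rw [← key t]
  unfold Phi
  rw [h2 _ (leftmost_mem _ ⟨_, hmu⟩), h2 _ hmu]

theorem flux (mu : Measure Cfg) (H : Hyp mu) (m : ℕ) (hm : 1 ≤ m) (hE : 0 < ∫ η, fK m η 0 ∂mu)
    (hf : ∃ᶠ η in ae mu, (Gamma η m).Nonempty) :
    ∫ η, hB m η 0 ∂mu = vel mu m * ∫ η, fB m η 0 ∂mu := by
  obtain ⟨η, ⟨γ, hγ⟩, ⟨hs, hl⟩, hη⟩ :=
    (hf.and_eventually (((speeds mu H m hm hE).and ((HF_B m hm).lln H)).and H.good)).exists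
  have hη : Gd η := hη
  obtain ⟨-, u, hu, hlim⟩ := hs γ hγ
  have key : ∀ t, Phi (fB m) (hB m) t (u t) η = Phi (fB m) (hB m) 0 (u 0) η :=
    phi_traj (HF_B m hm) η hη u fun t => keyB _ (hη.iter t).good m hm _ _ _ (hu t)
  have l1 := hl _ _ hlim
  simp only [key] at l1
  have l2 : Tendsto (fun t : ℕ => Phi (fB m) (hB m) 0 (u 0) η / (t : ℝ)) atTop (nhds 0) :=
    tendsto_const_nhds.div_atTop tendsto_natCast_atTop_atTop
  have := tendsto_nhds_unique l1 l2
  linarith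

end Part11

section Part12

noncomputable def pp (mu : Measure Cfg) (j : ℕ) : ℝ := ∫ η, valR (W η 0 j) ∂mu
noncomputable def aa (mu : Measure Cfg) (j : ℕ) : ℝ := ∫ η, upI j η 0 ∂mu
noncomputable def cl (m : ℕ) (η : Cfg) (x : ℤ) : ℝ :=
  if lab η x = m ∧ W η x m = W η x (m + 1) then 1 else 0
noncomputable def cc (mu : Measure Cfg) (m : ℕ) : ℝ := ∫ η, cl m η 0 ∂mu
noncomputable def rr (mu : Measure Cfg) : ℝ := mu.real {η | isRecord η 0}
noncomputable def gg (m : ℕ) (η : Cfg) (x : ℤ) : ℝ :=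
  if W η x m = true ∧ W η x (m + 1) = false then 1 else 0

lemma abs_le_one_of_01 {a : ℝ} (h : 0 ≤ a ∧ a ≤ 1) : |a| ≤ 1 := abs_le.2 ⟨by linarith [h.1], h.2⟩

lemma cl_01 (m : ℕ) (η : Cfg) (x : ℤ) : 0 ≤ cl m η x ∧ cl m η x ≤ 1 := by
  unfold cl; split_ifs <;> norm_num

lemma gg_01 (m : ℕ) (η : Cfg) (x : ℤ) : 0 ≤ gg m η x ∧ gg m η x ≤ 1 := by
  unfold gg; split_ifs <;> norm_num

lemma meas_clset (m : ℕ) (x : ℤ) : MeasurableSet {η : Cfg | lab η x = m ∧ W η x m = W η x (m + 1)} :=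
  (measurableSet_eq_fun (meas_lab x) measurable_const).inter
    (measurableSet_eq_fun (meas_W x m) (meas_W x (m + 1)))

lemma meas_cl (m : ℕ) (x : ℤ) : Measurable (fun η => cl m η x) :=
  Measurable.ite (meas_clset m x) measurable_const measurable_const

lemma meas_gg (m : ℕ) (x : ℤ) : Measurable (fun η => gg m η x) :=
  Measurable.ite ((measurableSet_eq_fun (meas_W x m) measurable_const).inter
    (measurableSet_eq_fun (meas_W x (m + 1)) measurable_const)) measurable_const measurable_const

lemma cl_cov (m : ℕ) (hm : 1 ≤ m) (n : ℤ) (η : Cfg) (hg : Good η) (x : ℤ) :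
    cl m (shiftBy n η) x = cl m η (x + n) := by
  unfold cl
  rw [(cov n η hg x).1, (cov n η hg x).2 m hm, (cov n η hg x).2 (m + 1) (by omega)]

lemma gg_cov (m : ℕ) (hm : 1 ≤ m) (n : ℤ) (η : Cfg) (hg : Good η) (x : ℤ) :
    gg m (shiftBy n η) x = gg m η (x + n) := by
  unfold gg
  rw [(cov n η hg x).2 m hm, (cov n η hg x).2 (m + 1) (by omega)]

variable {mu : Measure Cfg}

lemma stat (H : Hyp mu) (F : Cfg → ℤ → ℝ) (mF : ∀ x, Measurable (fun η => F η x))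
    (hc : ∀ n η, Good η → ∀ x, F (shiftBy n η) x = F η (x + n)) (x : ℤ) :
    ∫ η, F η x ∂mu = ∫ η, F η 0 ∂mu := by
  rw [← integral_comp_mp _ (H.shift x) _ (mF 0)]
  refine integral_congr_ae ?_
  filter_upwards [H.good] with η hη
  have h0 : Good η := hη 0
  rw [hc _ _ h0, zero_add]

lemma gg_step (η : Cfg) (hg : Good η) (m : ℕ) (hm : 1 ≤ m) (x : ℤ) :
    upI m η x - upI (m + 1) η x = cl m η x + (gg m η x - gg m η (x - 1)) := by
  have r := rules η hg
  by_cases h0 : lab η x = 0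
  · have a1 := r.rec_pre x h0
    have a2 := r.rec_post x h0
    have h2 : ¬ (0 = m) := by omega
    simp [upI, cl, gg, h0, a1, a2, h2]
  have h1 : 1 ≤ lab η x := by omega
  by_cases hA : lab η x = m
  · have p := r.pre_self x h1
    have q := r.post_le x h1 m (by omega)
    have s := r.post_ne x (m + 1) (by omega) (by omega)
    rw [hA] at p
    unfold upI cl gg
    rw [p, q, s, hA]
    cases η x <;> cases W η (x - 1) (m + 1) <;> simp
  by_cases hB : lab η x = m + 1
  · have p := r.pre_self x h1
    have q := r.post_le x h1 (m + 1) (by omega)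
    have q2 := r.post_le x h1 m (by omega)
    have s := r.post_ne x m (by omega) (by omega)
    rw [hB] at p
    unfold upI cl gg
    rw [← s, p, q, q2, hB]
    cases η x <;> simp
  · have s := r.post_ne x m (by omega) (by omega)
    have s2 := r.post_ne x (m + 1) (by omega) (by omega)
    unfold upI cl gg
    rw [s, s2]
    simp [hA, hB]

lemma int_upI (H : Hyp mu) (j : ℕ) (x : ℤ) : Integrable (fun η => upI j η x) mu := by
  have := H.prob
  exact integrable_bd _ (meas_upI j x) 1 fun η => abs_le_one_of_01 (upI_01 j η x)

lemma int_dnI (H : Hyp mu) (j : ℕ) (x : ℤ) : Integrable (fun η => dnI j η x) mu := by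
  have := H.prob
  exact integrable_bd _ (meas_dnI j x) 1 fun η => abs_le_one_of_01 (dnI_01 j η x)

lemma int_W (H : Hyp mu) (j : ℕ) (x : ℤ) : Integrable (fun η => valR (W η x j)) mu := by
  have := H.prob
  exact integrable_bd _ (meas_valRW x j) 1 fun η => abs_le_one_of_01 (valR_01 _)

lemma int_gg (H : Hyp mu) (j : ℕ) (x : ℤ) : Integrable (fun η => gg j η x) mu := by
  have := H.prob
  exact integrable_bd _ (meas_gg j x) 1 fun η => abs_le_one_of_01 (gg_01 j η x)

lemma int_cl (H : Hyp mu) (j : ℕ) (x : ℤ) : Integrable (fun η => cl j η x) mu := by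
  have := H.prob
  exact integrable_bd _ (meas_cl j x) 1 fun η => abs_le_one_of_01 (cl_01 j η x)

lemma cc_eq (H : Hyp mu) (m : ℕ) (hm : 1 ≤ m) : cc mu m = aa mu m - aa mu (m + 1) := by
  unfold cc aa
  rw [← integral_sub (int_upI H _ _) (int_upI H _ _)]
  have e : ∫ η, (upI m η 0 - upI (m + 1) η 0) ∂mu =
      ∫ η, (cl m η 0 + (gg m η 0 - gg m η (0 - 1))) ∂mu := by
    refine integral_congr_ae ?_
    filter_upwards [H.good] with η hη
    exact gg_step η (hη 0) m hm 0
  have hi : Integrable (fun η => gg m η 0 - gg m η (0 - 1)) mu := (int_gg H _ _).sub (int_gg H _ _)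
  rw [e, integral_add (int_cl H _ _) hi,
    integral_sub (int_gg H _ _) (int_gg H _ _), stat H (gg m) (meas_gg m) (gg_cov m hm) (0 - 1)]
  ring

lemma dn_eq (H : Hyp mu) (j : ℕ) (hj : 1 ≤ j) : ∫ η, dnI j η 0 ∂mu = aa mu j := by
  unfold aa
  rw [← integral_comp_mp _ H.T _ (meas_upI j 0)]
  refine integral_congr_ae ?_
  filter_upwards [H.good] with η hη
  have hη : Gd η := hη
  exact (up_next η hη.good hη.next.good j hj 0).symm

lemma fK_int (H : Hyp mu) (k : ℕ) : ∫ η, fK k η 0 ∂mu = 1 - 2 * ∑ j ∈ Icc 1 k, aa mu j := by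
  have := H.prob
  simp only [fK_eq]
  have hi : ∀ j ∈ Icc 1 k, Integrable (fun η => upI j η 0 + dnI j η 0) mu :=
    fun j _ => (int_upI H j 0).add (int_dnI H j 0)
  rw [integral_sub (integrable_const _) (integrable_finsetSum _ hi), integral_finsetSum _ hi]
  simp only [integral_const, probReal_univ, smul_eq_mul, mul_one]
  rw [Finset.mul_sum]
  congr 1
  refine Finset.sum_congr rfl fun j hj => ?_
  rw [integral_add (int_upI H j 0) (int_dnI H j 0), dn_eq H j (Finset.mem_Icc.1 hj).1]
  unfold aa; ring

lemma int_W' (H : Hyp mu) (j : ℕ) (x : ℤ) : Integrable (fun η => valR (W (bbsT η) x j)) mu := by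
  have := H.prob
  exact integrable_bd _ ((meas_valRW x j).comp meas_bbsT) 1 fun η => abs_le_one_of_01 (valR_01 _)

lemma hK_int (H : Hyp mu) (k : ℕ) : ∫ η, hK k η 0 ∂mu = k - 2 * ∑ j ∈ Icc 1 k, pp mu j := by
  have := H.prob
  unfold hK
  have hi : ∀ j ∈ Icc 1 k, Integrable (fun η => valR (W η 0 j) + valR (W (bbsT η) 0 j)) mu :=
    fun j _ => (int_W H j 0).add (int_W' H j 0)
  rw [integral_sub (integrable_const _) (integrable_finsetSum _ hi), integral_finsetSum _ hi]
  simp only [integral_const, probReal_univ, smul_eq_mul, one_mul]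
  rw [Finset.mul_sum]
  congr 1
  refine Finset.sum_congr rfl fun j hj => ?_
  rw [integral_add (int_W H j 0) (int_W' H j 0), integral_comp_mp _ H.T _ (meas_valRW 0 j)]
  unfold pp; ring

lemma fB_int (H : Hyp mu) (m : ℕ) : ∫ η, fB m η 0 ∂mu = aa mu m - aa mu (m + 1) := by
  unfold fB aa
  rw [integral_sub (int_upI H _ _) (int_upI H _ _)]

lemma hB_int (H : Hyp mu) (m : ℕ) : ∫ η, hB m η 0 ∂mu = pp mu m - pp mu (m + 1) := by
  unfold hB pp
  rw [integral_sub (int_W H _ _) (int_W H _ _)]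

lemma aa_nonneg (j : ℕ) : 0 ≤ aa mu j := integral_nonneg fun η => (upI_01 j η 0).1
lemma cc_nonneg (j : ℕ) : 0 ≤ cc mu j := integral_nonneg fun η => (cl_01 j η 0).1
lemma rr_nonneg : 0 ≤ rr mu := measureReal_nonneg

lemma rr_le_fK (H : Hyp mu) (k : ℕ) : rr mu ≤ ∫ η, fK k η 0 ∂mu := by
  have := H.prob
  unfold rr
  rw [← integral_indicator_one (meas_rec 0)]
  refine integral_mono_ae ((integrable_const (1 : ℝ)).indicator (meas_rec 0))
    (integrable_bd _ (meas_fK k 0) 1 fun η => abs_le_one_of_01 (fK_01 k η 0)) ?_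
  filter_upwards [H.good] with η hη
  by_cases h : isRecord η 0
  · have : lab η 0 = 0 := (lab_zero_iff η (hη 0) 0).2 h
    simp [Set.indicator, h, fK, this]
  · simp only [Set.indicator, Set.mem_ofPred_eq, h, if_false]; exact (fK_01 k η 0).1

lemma rr_pos (H : Hyp mu) : 0 < rr mu := by
  have := H.prob
  refine lt_of_le_of_ne rr_nonneg fun h => ?_
  have h0 : mu {η | isRecord η 0} = 0 := by
    unfold rr at h
    exact (measureReal_eq_zero_iff).1 h.symm
  have hx : ∀ x : ℤ, ∀ᵐ η ∂mu, ¬ isRecord η x := by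
    intro x
    have := (H.shift x).quasiMeasurePreserving.ae (p := fun η => ¬ isRecord η 0) (by
      rw [ae_iff]; simpa using h0)
    filter_upwards [this] with η hη
    rwa [isRecord_shift, zero_add] at hη
  obtain ⟨η, h1, h2⟩ := ((ae_all_iff.2 hx).and H.good).exists
  obtain ⟨y, -, hy⟩ := (h2 0 0).1
  exact h1 y hy

lemma fK_pos (H : Hyp mu) (k : ℕ) : 0 < ∫ η, fK k η 0 ∂mu := (rr_pos H).trans_le (rr_le_fK H k)

/-- dominated convergence for functions eventually constant -/
lemma dct (H : Hyp mu) (F : ℕ → Cfg → ℝ) (f : Cfg → ℝ) (mF : ∀ n, Measurable (F n))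
    (hb : ∀ n η, |F n η| ≤ 1) (hl : ∀ᵐ η ∂mu, ∃ N, ∀ n ≥ N, F n η = f η) :
    Tendsto (fun n => ∫ η, F n η ∂mu) atTop (nhds (∫ η, f η ∂mu)) := by
  have := H.prob
  refine tendsto_integral_of_dominated_convergence (fun _ => 1) (fun n => (mF n).aestronglyMeasurable)
    (integrable_const _) (fun n => Eventually.of_forall (hb n)) ?_
  filter_upwards [hl] with η ⟨N, hN⟩
  exact tendsto_const_nhds.congr' (eventually_atTop.2 ⟨N, fun n hn => (hN n hn).symm⟩)

lemma fK_lim (H : Hyp mu) : Tendsto (fun k => ∫ η, fK k η 0 ∂mu) atTop (nhds (rr mu)) := by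
  have := H.prob
  unfold rr
  rw [← integral_indicator_one (meas_rec 0)]
  refine dct H (fun k η => fK k η 0) _ (fun k => meas_fK k 0) (fun k η => abs_le_one_of_01 (fK_01 k η 0)) ?_
  filter_upwards [H.good] with η hη
  refine ⟨lab η 0, fun n hn => ?_⟩
  have e := lab_zero_iff η (hη 0) 0
  by_cases h : isRecord η 0
  · have : lab η 0 = 0 := e.2 h
    simp [Set.indicator, h, fK, this]
  · have : lab η 0 ≠ 0 := mt e.1 h
    simp only [Set.indicator, Set.mem_ofPred_eq, h, if_false, fK]
    rw [if_neg (by omega)]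

lemma Wst_large (s : Stk) : ∃ N, ∀ n ≥ N, Wst s n = false := by
  induction s with
  | nil => exact ⟨0, fun n _ => rfl⟩
  | cons r s ih =>
    obtain ⟨N, hN⟩ := ih
    refine ⟨N + r.length + 1, fun n hn => ?_⟩
    have : ¬ (n ≤ r.length) := by omega
    simp [Wst, this, hN n (by omega)]

lemma pp_lim (H : Hyp mu) : Tendsto (pp mu) atTop (nhds 0) := by
  have := dct H (fun k η => valR (W η 0 k)) (fun _ => 0) (fun k => meas_valRW 0 k)
    (fun k η => abs_le_one_of_01 (valR_01 _)) ?_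
  · simp only [integral_zero] at this; exact this
  refine Eventually.of_forall fun η => ?_
  obtain ⟨N, hN⟩ := Wst_large (stk η 0)
  exact ⟨N, fun n hn => by simp [W, hN n hn, valR]⟩

/-- combinatorial core when there are no `m`-solitons -/
lemma no_close (η : Cfg) (hg : Good η) (hg' : Good (bbsT η)) (m : ℕ) (hm : 1 ≤ m)
    (hn : ∀ x, ¬ (lab η x = m ∧ W η x m = W η x (m + 1))) (x : ℤ) :
    (W η x m = false ∧ W η x (m + 1) = true) ↔
    (W (bbsT η) x m = true ∧ W (bbsT η) x (m + 1) = false) := by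
  have P := pair η hg hg'
  constructor
  · rintro ⟨h1, h2⟩
    have a := P.dual x (m + 1) (by omega) h2 m hm (by omega)
    have b := P.dual x (m + 1) (by omega) h2 (m + 1) (by omega) le_rfl
    rw [a, b, h1, h2]; simp
  · refine good_induct (bbsT η) hg' (fun x => (W (bbsT η) x m = true ∧ W (bbsT η) x (m + 1) = false) →
      (W η x m = false ∧ W η x (m + 1) = true)) ?_ ?_ x
    · rintro x hx ⟨h1, -⟩
      rw [P.r'.rec_post x ((lab_zero_iff _ hg' x).2 hx)] at h1
      simp at h1
    · rintro x ih ⟨h1, h2⟩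
      have n0 : lab (bbsT η) x ≠ 0 := by
        intro h0; rw [P.r'.rec_post x h0] at h1; simp at h1
      by_cases c1 : lab (bbsT η) x = m
      · have e := P.r'.post_le x (by omega) m (by omega)
        rw [h1] at e
        obtain ⟨f1, f2⟩ := (P.iff m hm x).1 ⟨c1, e.symm⟩
        have g1 := P.r.post_le x (by omega) m (by omega)
        rw [f2] at g1
        refine ⟨g1, ?_⟩
        by_contra h
        exact hn x ⟨f1, by rw [g1]; simpa using (Bool.eq_false_of_not_eq_true h).symm⟩
      by_cases c2 : lab (bbsT η) x = m + 1
      · have e1 := P.r'.post_le x (by omega) m (by omega)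
        have e2 := P.r'.post_le x (by omega) (m + 1) (by omega)
        rw [h1] at e1; rw [h2, ← e1] at e2; simp at e2
      rw [P.r'.post_ne x m hm (by omega)] at h1
      rw [P.r'.post_ne x (m + 1) (by omega) (by omega)] at h2
      obtain ⟨i1, i2⟩ := ih ⟨h1, h2⟩
      have d0 : lab η x ≠ 0 := by
        intro h0; rw [P.r.rec_pre x h0] at i2; simp at i2
      by_cases d1 : lab η x = m
      · exfalso
        have e := P.r.pre_self x (by omega)
        rw [d1, i1] at e
        have e3 : η x = true := by simpa using e.symm
        refine hn x ⟨d1, ?_⟩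
        rw [P.r.post_le x (by omega) m (by omega), P.r.post_ne x (m + 1) (by omega) (by omega), i2, e3]
      by_cases d2 : lab η x = m + 1
      · exfalso
        have e := P.r.pre_self x (by omega)
        rw [d2, i2] at e
        exact c2 ((P.iff (m + 1) (by omega) x).2 ⟨d2, by simpa using e.symm⟩).1
      rw [P.r.post_ne x m hm (by omega), P.r.post_ne x (m + 1) (by omega) (by omega)]
      exact ⟨i1, i2⟩

lemma cl_ae_zero (H : Hyp mu) (m : ℕ) (hm : 1 ≤ m) (h : cc mu m = 0) :
    ∀ᵐ η ∂mu, ∀ x, ¬ (lab η x = m ∧ W η x m = W η x (m + 1)) := by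
  rw [ae_all_iff]
  intro x
  have h1 : ∫ η, cl m η x ∂mu = 0 := by
    rw [stat H (cl m) (meas_cl m) (cl_cov m hm) x]; exact h
  rw [integral_eq_zero_iff_of_nonneg (fun η => (cl_01 m η x).1) (int_cl H m x)] at h1
  filter_upwards [h1] with η hη hc
  simp [cl, hc] at hη

lemma flux' (H : Hyp mu) (m : ℕ) (hm : 1 ≤ m) : pp mu m - pp mu (m + 1) = cc mu m * vel mu m := by
  rcases (cc_nonneg (mu := mu) m).eq_or_lt with h | h
  · rw [← h, zero_mul, ← hB_int H]
    have e1 : ∫ η, hB m η 0 ∂mu = ∫ η, (gg m η 0 - gg m (bbsT η) 0) ∂mu := by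
      refine integral_congr_ae ?_
      filter_upwards [cl_ae_zero H m hm h.symm, H.good] with η hc hη
      have hη : Gd η := hη
      have := no_close η hη.good hη.next.good m hm hc 0
      unfold hB gg
      rw [← if_congr this rfl rfl]
      cases W η 0 m <;> cases W η 0 (m + 1) <;> simp [valR]
    have := H.prob
    have hi : Integrable (fun η => gg m (bbsT η) 0) mu := integrable_bd _ ((meas_gg m 0).comp meas_bbsT) 1
      fun η => abs_le_one_of_01 (gg_01 m _ 0)
    rw [e1, integral_sub (int_gg H m 0) hi, integral_comp_mp _ H.T _ (meas_gg m 0), sub_self]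
  · have := flux mu H m hm (fK_pos H m) ?_
    · rw [hB_int H, fB_int H, ← cc_eq H m hm] at this
      rw [this]; ring
    · intro hcon
      refine h.ne' ?_
      unfold cc
      rw [integral_eq_zero_iff_of_nonneg (fun η => (cl_01 m η 0).1) (int_cl H m 0)]
      filter_upwards [hcon, H.good] with η h1 hη
      by_contra h2
      have h3 : lab η 0 = m ∧ W η 0 m = W η 0 (m + 1) := by
        by_contra h3; simp [cl, h3] at h2
      obtain ⟨γ, hγ, -⟩ := close_sol η (hη 0) 0 m hm h3.1 h3.2
      exact h1 ⟨γ, hγ⟩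

end Part12

section Part13

variable {mu : Measure Cfg}

lemma vel_eq (H : Hyp mu) (k : ℕ) :
    vel mu k * (1 - 2 * ∑ j ∈ Icc 1 k, aa mu j) = k - 2 * ∑ j ∈ Icc 1 k, pp mu j := by
  unfold vel
  rw [← fK_int H, ← hK_int H]
  exact div_mul_cancel₀ _ (fK_pos H k).ne'

lemma vel_bound (H : Hyp mu) (k : ℕ) : |vel mu k| ≤ k / rr mu := by
  have := H.prob
  have h1 : |∫ η, hK k η 0 ∂mu| ≤ k := by
    have := norm_integral_le_of_norm_le_const (μ := mu) (f := fun η => hK k η 0) (C := k)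
      (Eventually.of_forall fun η => hK_bound k η 0)
    simpa using this
  unfold vel
  rw [abs_div, abs_of_pos (fK_pos H k)]
  exact div_le_div₀ (Nat.cast_nonneg k) h1 (rr_pos H) (rr_le_fK H k)

lemma aa_lim (H : Hyp mu) : Tendsto (aa mu) atTop (nhds 0) := by
  rw [← tendsto_add_atTop_iff_nat 1]
  have h1 := fK_lim H
  have h2 := (tendsto_add_atTop_iff_nat 1).2 h1
  have h3 := (h1.sub h2).div_const 2
  simp only [sub_self, zero_div] at h3
  refine h3.congr fun n => ?_
  rw [fK_int H, fK_int H, Finset.sum_Icc_succ_top (by omega)]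
  ring

lemma aa_sum_lim (H : Hyp mu) : Tendsto (fun n => 2 * ∑ j ∈ Icc 1 n, aa mu j) atTop (nhds (1 - rr mu)) := by
  have := (fK_lim H).const_sub 1
  refine this.congr fun n => ?_
  rw [fK_int H]; ring

lemma aa_sum_le (H : Hyp mu) (n : ℕ) : 2 * ∑ j ∈ Icc 1 n, aa mu j ≤ 1 - rr mu := by
  have := rr_le_fK H n
  rw [fK_int H] at this
  linarith

/-- Abel summation -/
lemma abel (a : ℕ → ℝ) (n : ℕ) :
    ∑ m ∈ Icc 1 n, (m : ℝ) * (a m - a (m + 1)) = ∑ j ∈ Icc 1 n, a j - n * a (n + 1) := by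
  induction n with
  | zero => simp
  | succ n ih =>
    rw [Finset.sum_Icc_succ_top (by omega), Finset.sum_Icc_succ_top (by omega), ih]
    push_cast; ring

lemma tele (a : ℕ → ℝ) (k n : ℕ) (h : k ≤ n) :
    ∑ m ∈ Ioc k n, (a m - a (m + 1)) = a (k + 1) - a (n + 1) := by
  induction n, h using Nat.le_induction with
  | base => simp
  | succ n hn ih =>
    rw [Finset.sum_Ioc_succ_top hn, ih]; ring

lemma mcc_partial (H : Hyp mu) (n : ℕ) : ∑ m ∈ range (n + 1), 2 * (m : ℝ) * cc mu m =
    2 * ∑ j ∈ Icc 1 n, aa mu j - 2 * (n * aa mu (n + 1)) := by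
  have : ∑ m ∈ range (n + 1), 2 * (m : ℝ) * cc mu m =
      2 * ∑ m ∈ Icc 1 n, (m : ℝ) * (aa mu m - aa mu (m + 1)) := by
    induction n with
    | zero => simp
    | succ n ih =>
      rw [Finset.sum_range_succ, ih, Finset.sum_Icc_succ_top (by omega), cc_eq H (n + 1) (by omega)]
      ring
  rw [this, abel]; ring

lemma mcc_summable (H : Hyp mu) : Summable (fun m : ℕ => 2 * (m : ℝ) * cc mu m) := by
  refine summable_of_sum_range_le (c := 1 - rr mu) (fun m => by have := cc_nonneg (mu := mu) m; positivity) ?_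
  intro n
  refine (Finset.sum_le_sum_of_subset_of_nonneg (Finset.range_mono (Nat.le_succ n)) (fun m _ _ => by
    have := cc_nonneg (mu := mu) m; positivity)).trans ?_
  rw [mcc_partial H]
  have := aa_sum_le H n
  have := aa_nonneg (mu := mu) (n + 1)
  have : 0 ≤ 2 * ((n : ℝ) * aa mu (n + 1)) := by positivity
  linarith

lemma hasSum_tail (f : ℕ → ℝ) (a : ℕ → ℝ) (h : Summable f) (ha : Tendsto a atTop (nhds 0))
    (k : ℕ) (hf : ∀ m, k < m → f m = a m - a (m + 1)) :
    HasSum (fun m => if k < m then f m else 0) (a (k + 1)) := by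
  have hs : Summable (fun m => if k < m then f m else 0) := by
    have := h.indicator {m | k < m}
    refine this.congr fun m => ?_
    simp [Set.indicator]
  have h1 := hs.hasSum.tendsto_sum_nat
  have h2 : Tendsto (fun n => ∑ i ∈ range n, (if k < i then f i else 0)) atTop (nhds (a (k + 1))) := by
    have h3 := (ha).const_sub (a (k + 1))
    rw [sub_zero] at h3
    refine h3.congr' (eventually_atTop.2 ⟨k + 1, fun n hn => ?_⟩)
    obtain ⟨n, rfl⟩ : ∃ n', n = n' + 1 := ⟨n - 1, by omega⟩
    show _ = ∑ i ∈ range (n + 1), (if k < i then f i else 0)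
    rw [← tele a k n (by omega), ← Finset.sum_filter]
    have : (range (n + 1)).filter (fun i => k < i) = Ioc k n := by
      ext i; simp; omega
    rw [this]
    exact Finset.sum_congr rfl fun m hm => (hf m (Finset.mem_Ioc.1 hm).1).symm
  rw [← tendsto_nhds_unique h1 h2]
  exact hs.hasSum

lemma cc_summable (H : Hyp mu) : Summable (cc mu) := by
  rw [← summable_nat_add_iff 1]
  refine Summable.of_nonneg_of_le (fun m => cc_nonneg _) (fun m => ?_) ((summable_nat_add_iff 1).2 (mcc_summable H))
  have := cc_nonneg (mu := mu) (m + 1)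
  push_cast
  nlinarith [mul_nonneg (Nat.cast_nonneg (α := ℝ) m) this]

lemma cc_tail (H : Hyp mu) (k : ℕ) : HasSum (fun m => if k < m then cc mu m else 0) (aa mu (k + 1)) :=
  hasSum_tail (cc mu) (aa mu) (cc_summable H) (aa_lim H) k fun m hm => cc_eq H m (by omega)

lemma ccv_summable (H : Hyp mu) : Summable (fun m => cc mu m * vel mu m) := by
  have h := (mcc_summable H).mul_right (1 / (2 * rr mu))
  refine Summable.of_norm_bounded h fun m => ?_
  have h1 := cc_nonneg (mu := mu) m
  have h2 := vel_bound H m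
  have h3 := rr_pos H
  rw [Real.norm_eq_abs, abs_mul, abs_of_nonneg h1]
  calc cc mu m * |vel mu m| ≤ cc mu m * (m / rr mu) := by gcongr
    _ = 2 * (m : ℝ) * cc mu m * (1 / (2 * rr mu)) := by field_simp

lemma ccv_tail (H : Hyp mu) (k : ℕ) :
    HasSum (fun m => if k < m then cc mu m * vel mu m else 0) (pp mu (k + 1)) :=
  hasSum_tail _ (pp mu) (ccv_summable H) (pp_lim H) k fun m hm => (flux' H m (by omega)).symm

/-- `n * a_{n+1} → 0` -/
lemma naa_lim (H : Hyp mu) : Tendsto (fun n : ℕ => 2 * ((n : ℝ) * aa mu (n + 1))) atTop (nhds 0) := by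
  have hs := mcc_summable H
  have h1 : Tendsto (fun n => (∑' m : ℕ, 2 * (m : ℝ) * cc mu m) - ∑ m ∈ range (n + 1), 2 * (m : ℝ) * cc mu m)
      atTop (nhds 0) := by
    have := ((tendsto_add_atTop_iff_nat 1).2 hs.hasSum.tendsto_sum_nat).const_sub (∑' m : ℕ, 2 * (m : ℝ) * cc mu m)
    simpa using this
  refine squeeze_zero (fun n => by have := aa_nonneg (mu := mu) (n + 1); positivity) (fun n => ?_) h1
  have h2 := (cc_tail H n).mul_left (2 * (n : ℝ))
  have h3 := (hasSum_nat_add_iff' (n + 1)).2 hs.hasSum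
  have h4 := (hasSum_nat_add_iff' (n + 1)).2 h2
  have h5 := hasSum_le (fun m => ?_) h4 h3
  · have : ∑ i ∈ range (n + 1), 2 * (n : ℝ) * (if n < i then cc mu i else 0) = 0 := by
      refine Finset.sum_eq_zero fun i hi => ?_
      rw [if_neg (by have := Finset.mem_range.1 hi; omega), mul_zero]
    rw [this] at h5
    linarith
  · have := cc_nonneg (mu := mu) (m + (n + 1))
    rw [if_pos (by omega)]
    gcongr
    omega

lemma mcc_hasSum (H : Hyp mu) : HasSum (fun m : ℕ => 2 * (m : ℝ) * cc mu m) (1 - rr mu) := by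
  have h1 := (tendsto_add_atTop_iff_nat 1).2 (mcc_summable H).hasSum.tendsto_sum_nat
  have h2 := (aa_sum_lim H).sub (naa_lim H)
  rw [sub_zero] at h2
  simp only [mcc_partial H] at h1
  rw [← tendsto_nhds_unique h1 h2]
  exact (mcc_summable H).hasSum

theorem speed_eq (H : Hyp mu) (rho : ℕ → ℝ) (hr : ∀ m, 1 ≤ m → rho m = cc mu m) (k : ℕ) (hk : 1 ≤ k) :
    vel mu k = (k : ℝ) +
      (∑ m ∈ Finset.Ico 1 k, 2 * (m : ℝ) * rho m * (vel mu k - vel mu m)) -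
      ∑' m : ℕ, if k < m then 2 * (k : ℝ) * rho m * (vel mu m - vel mu k) else 0 := by
  have h1 : HasSum (fun m => if k < m then 2 * (k : ℝ) * rho m * (vel mu m - vel mu k) else 0)
      (2 * k * pp mu (k + 1) - 2 * k * vel mu k * aa mu (k + 1)) := by
    have := ((ccv_tail H k).mul_left (2 * (k : ℝ))).sub ((cc_tail H k).mul_left (2 * (k : ℝ) * vel mu k))
    have e : (fun m => if k < m then 2 * (k : ℝ) * rho m * (vel mu m - vel mu k) else 0) = fun b =>
        (2 * (k : ℝ) * if k < b then cc mu b * vel mu b else 0) -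
          2 * (k : ℝ) * vel mu k * if k < b then cc mu b else 0 := by
      funext m
      split_ifs with h
      · rw [hr m (by omega)]; ring
      · ring
    rw [e]; exact this
  rw [h1.tsum_eq]
  have h2 : ∑ m ∈ Finset.Ico 1 k, 2 * (m : ℝ) * rho m * (vel mu k - vel mu m) =
      2 * vel mu k * ∑ m ∈ Ico 1 k, (m : ℝ) * (aa mu m - aa mu (m + 1)) -
      2 * ∑ m ∈ Ico 1 k, (m : ℝ) * (pp mu m - pp mu (m + 1)) := by
    rw [Finset.mul_sum, Finset.mul_sum, ← Finset.sum_sub_distrib]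
    refine Finset.sum_congr rfl fun m hm => ?_
    have hm1 := (Finset.mem_Ico.1 hm).1
    rw [hr m hm1, flux' H m hm1, ← cc_eq H m hm1]
    ring
  obtain ⟨n, rfl⟩ : ∃ n, k = n + 1 := ⟨k - 1, by omega⟩
  have e : Ico 1 (n + 1) = Icc 1 n := by ext i; simp only [Finset.mem_Ico, Finset.mem_Icc]; omega
  rw [h2, e, abel, abel]
  have h3 := vel_eq H (n + 1)
  have h4 := flux' H (n + 1) hk
  rw [cc_eq H (n + 1) hk] at h4
  rw [Finset.sum_Icc_succ_top (by omega), Finset.sum_Icc_succ_top (by omega)] at h3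
  push_cast at *
  linear_combination h3 - 2 * ((n : ℝ) + 1) * h4

end Part13

section Part14

variable {mu : Measure Cfg}

/-- a `k`-soliton closes at site `n+1`, in the excursion started at `0` -/
def Cl (k : ℕ) (n : ℕ) : Set Cfg :=
  {η | (∀ z : ℤ, 1 ≤ z → z ≤ n + 1 → ¬ isRecord η z) ∧
    (lab η (n + 1) = k ∧ W η (n + 1) k = W η (n + 1) (k + 1))}

lemma meas_Cl (k n : ℕ) : MeasurableSet (Cl k n) := by
  refine MeasurableSet.inter ?_ (meas_clset k (n + 1))
  have : {η : Cfg | ∀ z : ℤ, 1 ≤ z → z ≤ n + 1 → ¬ isRecord η z} =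
      ⋂ z : ℤ, ⋂ _ : 1 ≤ z, ⋂ _ : z ≤ n + 1, {η | isRecord η z}ᶜ := by
    ext η; simp
  change MeasurableSet {η : Cfg | ∀ z : ℤ, 1 ≤ z → z ≤ n + 1 → ¬ isRecord η z}
  rw [this]
  exact MeasurableSet.iInter fun z => MeasurableSet.iInter fun _ => MeasurableSet.iInter fun _ => (meas_rec z).compl

lemma rFirst_spec (η : Cfg) (hg : Good η) : 1 ≤ rFirst η ∧ isRecord η (rFirst η) ∧
    ∀ z, 1 ≤ z → z < rFirst η → ¬ isRecord η z := by
  have hne : {x : ℤ | 1 ≤ x ∧ isRecord η x}.Nonempty := by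
    obtain ⟨y, hy, hr⟩ := (hg 1).2
    exact ⟨y, hy, hr⟩
  have hb : BddBelow {x : ℤ | 1 ≤ x ∧ isRecord η x} := ⟨1, fun x hx => hx.1⟩
  have h1 := Int.csInf_mem hne hb
  refine ⟨h1.1, h1.2, fun z hz hlt hr => ?_⟩
  have : rFirst η ≤ z := csInf_le hb ⟨hz, hr⟩
  omega

/-- the soliton emitted at a site -/
noncomputable def solAt (η : Cfg) (x : ℤ) : Finset ℤ := (((emitAt η x).getD []).map Prod.fst).toFinset

open Classical in
lemma exc_card (η : Cfg) (hg : Good η) (h0 : isRecord η 0) (k : ℕ) (hk : 1 ≤ k) :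
    (∀ n : ℕ, (rFirst η).toNat ≤ n → η ∉ Cl k n) ∧
    excCount η k = ((range (rFirst η).toNat).filter fun n => η ∈ Cl k n).card := by
  obtain ⟨f1, f2, f3⟩ := rFirst_spec η hg
  have hA : ∀ n : ℕ, (rFirst η).toNat ≤ n → η ∉ Cl k n := fun n hn h => h.1 (rFirst η) f1 (by omega) f2
  refine ⟨hA, ?_⟩
  -- emitted solitons
  have em : ∀ x : ℤ, lab η x = k → W η x k = W η x (k + 1) →
      solAt η x ∈ Gamma η k ∧ x ∈ solAt η x ∧ ∀ z ∈ solAt η x, z ≤ x ∧ ∀ y, z ≤ y → y ≤ x → 1 ≤ lab η y := by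
    intro x hx hc
    have := (emitAt_iff η hg x).2 ⟨by omega, by rw [hx]; exact hc⟩
    obtain ⟨s, hs⟩ := Option.isSome_iff_exists.1 this
    obtain ⟨h1, h2, u, d, hm, hS⟩ := emitAt_sol η hg x s hs
    have e : solAt η x = (s.map Prod.fst).toFinset := by simp [solAt, hs]
    rw [← e] at hS
    obtain ⟨-, -, -, -, -, hu, hd, hz, -⟩ := hS.facts
    refine ⟨(gamma_iff η hg k _).2 ⟨x, s, hs, by omega, e⟩, ?_, fun z hzm => ?_⟩
    · have hmx : max u d ∈ solAt η x := by
        rcases max_choice u d with h | h <;> rw [h] <;> assumption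
      rwa [hm] at hmx
    · rw [hm] at hz
      exact ⟨(hz z hzm).1, fun y hy1 hy2 => ((hz z hzm).2 y hy1 hy2).1⟩
  unfold excCount
  have e1 : {γ | γ ∈ Gamma η k ∧ ∀ x ∈ γ, 0 < x ∧ x < rFirst η} =
      (((range (rFirst η).toNat).filter fun n => η ∈ Cl k n).image fun n : ℕ => solAt η ((n : ℤ) + 1) :
        Finset (Finset ℤ)) := by
    ext γ
    simp only [Finset.coe_image, Set.mem_image, Finset.mem_coe, Finset.mem_filter, Finset.mem_range]
    constructor
    · rintro ⟨hγ, hx⟩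
      obtain ⟨x, s, hs, hl, rfl⟩ := (gamma_iff η hg k γ).1 hγ
      obtain ⟨h1, h2, -⟩ := emitAt_sol η hg x s hs
      have hlx : lab η x = k := by omega
      have hc := ((emitAt_iff η hg x).1 (by rw [hs]; rfl)).2
      rw [hlx] at hc
      have e : solAt η x = (s.map Prod.fst).toFinset := by simp [solAt, hs]
      have hxm := (em x hlx hc).2.1
      rw [e] at hxm
      obtain ⟨x0, x1⟩ := hx x hxm
      obtain ⟨n, rfl⟩ : ∃ n : ℕ, x = n + 1 := ⟨(x - 1).toNat, by omega⟩
      exact ⟨n, ⟨by omega, fun z hz1 hz2 => f3 z hz1 (by omega), hlx, hc⟩, e⟩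
    · rintro ⟨n, ⟨hn, hno, hl, hc⟩, rfl⟩
      obtain ⟨g1, g2, g3⟩ := em _ hl hc
      refine ⟨g1, fun z hz => ?_⟩
      obtain ⟨z1, z2⟩ := g3 z hz
      have hlt : (n : ℤ) + 1 < rFirst η := by
        by_contra hcon
        exact hno _ f1 (by omega) f2
      refine ⟨?_, by omega⟩
      by_contra hcon
      have := z2 0 (by omega) (by omega)
      have := (lab_zero_iff η hg 0).2 h0
      omega
  rw [e1, Set.ncard_coe_finset, Finset.card_image_of_injOn]
  intro n hn n' hn' he
  simp only [Finset.coe_filter, Finset.mem_range] at hn hn'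
  have a := em _ hn.2.2.1 hn.2.2.2
  have b := em _ hn'.2.2.1 hn'.2.2.2
  have he : solAt η ((n : ℤ) + 1) = solAt η ((n' : ℤ) + 1) := he
  have c1 := (b.2.2 _ (by rw [← he]; exact a.2.1)).1
  have c2 := (a.2.2 _ (by rw [he]; exact b.2.1)).1
  omega

lemma exc_tsum (η : Cfg) (hg : Good η) (h0 : isRecord η 0) (k : ℕ) (hk : 1 ≤ k) :
    (excCount η k : ENNReal) = ∑' n : ℕ, (Cl k n).indicator 1 η := by
  classical
  obtain ⟨h1, h2⟩ := exc_card η hg h0 k hk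
  rw [h2, tsum_eq_sum (s := range (rFirst η).toNat)]
  · rw [Finset.card_filter]
    push_cast
    refine Finset.sum_congr rfl fun n _ => ?_
    simp [Set.indicator]
  · intro n hn
    have := h1 n (by simpa using hn)
    simp [Set.indicator, this]

lemma palm_sum (H : Hyp mu) (k : ℕ) (hk : 1 ≤ k) :
    ∑' n : ℕ, mu (Cl k n ∩ {η | isRecord η 0}) =
      mu {η | lab η 0 = k ∧ W η 0 k = W η 0 (k + 1)} := by
  set B : ℕ → Set Cfg := fun n => shiftBy (-((n : ℤ) + 1)) ⁻¹' (Cl k n ∩ {η | isRecord η 0}) with hB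
  have hms : ∀ n, MeasurableSet (Cl k n ∩ {η | isRecord η 0}) := fun n => (meas_Cl k n).inter (meas_rec 0)
  have e1 : ∀ n, mu (Cl k n ∩ {η | isRecord η 0}) = mu (B n) := fun n =>
    ((H.shift (-((n : ℤ) + 1))).measure_preimage (hms n).nullMeasurableSet).symm
  simp only [e1]
  have hmB : ∀ n, MeasurableSet (B n) := fun n => meas_shiftBy _ (hms n)
  have hd : ∀ n n' : ℕ, n < n' → Disjoint (B n) (B n') := by
    intro n n' hlt
    rw [Set.disjoint_left]
    rintro η ⟨-, h1⟩ ⟨h2, -⟩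
    have h1 : isRecord (shiftBy (-((n : ℤ) + 1)) η) 0 := h1
    rw [isRecord_shift] at h1
    refine h2.1 ((n' : ℤ) - n) (by omega) (by omega) ?_
    rw [isRecord_shift]
    convert h1 using 1
    ring
  rw [← measure_iUnion _ hmB]
  · refine measure_congr ?_
    rw [Filter.eventuallyEq_set]
    filter_upwards [H.good] with η hη
    have hg : Good η := hη 0
    have hc : ∀ n : ℕ, lab (shiftBy (-((n : ℤ) + 1)) η) (n + 1) = lab η 0 ∧
        ∀ i, 1 ≤ i → W (shiftBy (-((n : ℤ) + 1)) η) (n + 1) i = W η 0 i := by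
      intro n
      have := cov (-((n : ℤ) + 1)) η hg (n + 1)
      rw [show (n : ℤ) + 1 + -((n : ℤ) + 1) = 0 by ring] at this
      exact ⟨this.1, fun i hi => this.2 i hi⟩
    rw [Set.mem_iUnion]
    constructor
    · rintro ⟨n, ⟨-, h1, h2⟩, -⟩
      rw [(hc n).2 k hk, (hc n).2 (k + 1) (by omega)] at h2
      rw [(hc n).1] at h1
      exact ⟨h1, h2⟩
    · rintro ⟨h1, h2⟩
      obtain ⟨y, n, hy, hr, hno⟩ := exists_lastRec η hg 0
      have hn : n ≠ 0 := by
        rintro rfl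
        have : y = 0 := by simpa using hy.symm
        rw [this] at hr
        have := (lab_zero_iff η hg 0).2 hr
        omega
      obtain ⟨n, rfl⟩ : ∃ n', n = n' + 1 := ⟨n - 1, by omega⟩
      have hy' : y = -((n : ℤ) + 1) := by push_cast at hy; omega
      refine ⟨n, ⟨fun z hz1 hz2 => ?_, ?_, ?_⟩, ?_⟩
      · rw [isRecord_shift]
        exact hno _ (by omega) (by push_cast; omega)
      · rw [(hc n).1]; exact h1
      · rw [(hc n).2 k hk, (hc n).2 (k + 1) (by omega)]; exact h2
      · change isRecord _ 0
        rw [isRecord_shift, zero_add, ← hy']; exact hr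
  · intro n n' hne
    rcases lt_or_gt_of_ne hne with h | h
    · exact hd _ _ h
    · exact (hd _ _ h).symm

lemma cc_measure (H : Hyp mu) (k : ℕ) :
    cc mu k = (mu {η | lab η 0 = k ∧ W η 0 k = W η 0 (k + 1)}).toReal := by
  have e : ∀ η, cl k η 0 = ({η | lab η 0 = k ∧ W η 0 k = W η 0 (k + 1)} : Set Cfg).indicator 1 η := by
    intro η; simp [cl, Set.indicator]
  unfold cc
  simp only [e]
  rw [integral_indicator_one (meas_clset k 0)]
  rfl

theorem rhoK_eq (H : Hyp mu) (k : ℕ) (hk : 1 ≤ k) : rhoK mu k = cc mu k / rr mu := by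
  have := H.prob
  have hae : XhatSet =ᵐ[mu] {η | isRecord η 0} := by
    rw [Filter.eventuallyEq_set]
    filter_upwards [H.inx] with η hη
    exact ⟨fun h => h.2, fun h => ⟨hη, h⟩⟩
  unfold rhoK ProbabilityTheory.cond
  rw [integral_smul_measure, measure_congr hae, Measure.restrict_congr_set hae]
  have key : ∫ η in {η | isRecord η 0}, (excCount η k : ℝ) ∂mu = cc mu k := by
    have hfin : ∀ᵐ η ∂(mu.restrict {η | isRecord η 0}),
        (excCount η k : ENNReal) = ∑' n : ℕ, (Cl k n).indicator 1 η := by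
      filter_upwards [ae_restrict_of_ae H.good, ae_restrict_mem (meas_rec 0)] with η hη h0
      exact exc_tsum η (hη 0) h0 k hk
    have e1 : ∫ η in {η | isRecord η 0}, (excCount η k : ℝ) ∂mu =
        ∫ η in {η | isRecord η 0}, (∑' n : ℕ, (Cl k n).indicator (1 : Cfg → ENNReal) η).toReal ∂mu := by
      refine integral_congr_ae ?_
      filter_upwards [hfin] with η hη
      rw [← hη]; simp
    have hm : ∀ n : ℕ, Measurable ((Cl k n).indicator (1 : Cfg → ENNReal)) :=
      fun n => measurable_one.indicator (meas_Cl k n)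
    rw [e1, integral_toReal (Measurable.ennreal_tsum hm).aemeasurable, lintegral_tsum fun n => (hm n).aemeasurable]
    · simp only [lintegral_indicator_one (meas_Cl k _), Measure.restrict_apply (meas_Cl k _)]
      rw [palm_sum H k hk, cc_measure H]
    · filter_upwards [hfin] with η hη
      rw [← hη]; simp
  rw [key, smul_eq_mul, ENNReal.toReal_inv]
  unfold rr Measure.real
  rw [div_eq_inv_mul]

theorem rhoBar_eq (H : Hyp mu) (k : ℕ) (hk : 1 ≤ k) : rhoBar mu k = cc mu k := by
  have hr := rr_pos H
  have h1 : ∀ k : ℕ, 2 * (k : ℝ) * rhoK mu k = 2 * (k : ℝ) * cc mu k / rr mu := by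
    intro k
    rcases Nat.eq_zero_or_pos k with rfl | h
    · simp
    · rw [rhoK_eq H k h]; ring
  have h2 : w0of mu = 1 / rr mu := by
    unfold w0of
    simp only [h1]
    rw [((mcc_hasSum H).div_const (rr mu)).tsum_eq]
    field_simp
    ring
  unfold rhoBar
  rw [h2, rhoK_eq H k hk]
  field_simp

end Part14

open MeasureTheory Filter in
/-- **existence of soliton speeds and speed equations.** Let `μ`
be a `T`-invariant, shift-ergodic probability measure on `𝒳_λ`, `0 < λ < 1/2`.
Then there is a deterministic sequence `(v_k)_{k≥1}` of finite reals such that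
`μ`-a.s. every tagged `k`-soliton `γ ∈ Γ_k η` satisfies
`x(γ^t)/t → v_k`, and the speeds satisfy, for every `k ≥ 1`,
`v_k = k + Σ_{m<k} 2m·ρ̄_m·(v_k − v_m) − Σ_{m>k} 2k·ρ̄_m·(v_m − v_k)`. -/
theorem soliton_speeds (lam : ℝ) (h0 : 0 < lam) (h1 : lam < 1 / 2)
    (mu : Measure Cfg) [IsProbabilityMeasure mu]
    (hsupp : mu {η : Cfg | inXlam lam η} = 1)
    (hT : mu.map bbsT = mu) (herg : Ergodic shiftC mu) :
    ∃ v : ℕ → ℝ,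
      (∀ᵐ η ∂mu, ∀ k : ℕ, 1 ≤ k → ∀ γ ∈ Gamma η k,
        Tendsto (fun t : ℕ => (leftmost (solTraj η k γ t) : ℝ) / (t : ℝ))
          atTop (nhds (v k))) ∧
      ∀ k : ℕ, 1 ≤ k →
        v k = (k : ℝ) +
          (∑ m ∈ Finset.Ico 1 k, 2 * (m : ℝ) * rhoBar mu m * (v k - v m)) -
          ∑' m : ℕ, if k < m then 2 * (k : ℝ) * rhoBar mu m * (v m - v k) else 0 := by
  have H := mkHyp lam h0 h1 mu hsupp hT herg
  refine ⟨vel mu, ?_, fun k hk => speed_eq H (rhoBar mu) (fun m hm => rhoBar_eq H m hm) k hk⟩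
  rw [ae_all_iff]
  intro k
  by_cases hk : 1 ≤ k
  · filter_upwards [speeds mu H k hk (fK_pos H k)] with η h _ γ hγ
    exact (h γ hγ).1
  · exact Eventually.of_forall fun η h => absurd h hk
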